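/- arXiv:1808.02133 — 2 statements merged into one kernel-verified Lean document; each statement's English description precedes it below -/
import Mathlib

section
/- Let 1 < p < ∞ and f ∈ L^p(ℝ^d; ℝ^d), and let u(x,t) = (p_t ∗ f)(x) be its Poisson integral. Then there exist constants c₁, c₂ > 0 depending only on d and p such that for every t > 0: c₁ ‖∂_t u(·,t)‖_{L^p(ℝ^d)} ≤ Σ_{j=1}^d ‖∂_{x_j} u(·,t)‖_{L^p(ℝ^d)} ≤ c₂ ‖∂_t u(·,t)‖_{L^p(ℝ^d)}. -/
open MeasureTheory Filter Set
open scoped ENNReal NNReal Topology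

noncomputable section

abbrev Ed (d : ℕ) : Type := EuclideanSpace ℝ (Fin d)

/-- The surface measure `ω_d` of the unit sphere in `ℝ^{d+1}`. -/
def sphereVol (d : ℕ) : ℝ :=
  ((d : ℝ) + 1) * (volume (Metric.ball (0 : EuclideanSpace ℝ (Fin (d+1))) 1)).toReal

/-- The Poisson kernel `p_t(x)` for the upper half-space `ℝ^d × (0,∞)`. -/
def poissonKernelEd (d : ℕ) (t : ℝ) (x : Ed d) : ℝ :=
  (2 / sphereVol d) * t / (‖x‖ ^ 2 + t ^ 2) ^ (((d : ℝ) + 1) / 2)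

/-- The (componentwise) Poisson integral `u(x,t) = (p_t ∗ f)(x)` of a vector field. -/
def poissonInt (d m : ℕ) (f : Ed d → Ed m) (x : Ed d) (t : ℝ) : Ed m :=
  ∫ y, poissonKernelEd d t y • f (x - y)

theorem jensen_lint {α : Type*} [MeasurableSpace α] (μ : Measure α) (w g : α → ℝ≥0∞)
    (hw : AEMeasurable w μ) (hg : AEMeasurable g μ) {p : ℝ} (hp : 1 < p) :
    (∫⁻ a, w a * g a ∂μ) ^ p ≤ (∫⁻ a, w a ∂μ) ^ (p - 1) * ∫⁻ a, w a * g a ^ p ∂μ := by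
  have hpq := Real.HolderConjugate.conjExponent hp
  set q := p.conjExponent
  have hp0 : 0 < p := by linarith
  have hq0 : 0 < q := hpq.symm.pos
  have h := ENNReal.lintegral_mul_le_Lp_mul_Lq μ hpq.symm (f := fun a => w a ^ (1/q))
    (g := fun a => w a ^ (1/p) * g a) (hw.pow_const _) ((hw.pow_const _).mul hg)
  have e1 : ∀ a, ((fun a => w a ^ (1/q)) * fun a => w a ^ (1/p) * g a) a = w a * g a := by
    intro a
    simp only [Pi.mul_apply]
    rw [← mul_assoc, ← ENNReal.rpow_add_of_nonneg _ _ (by positivity) (by positivity)]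
    have : 1 / q + 1 / p = 1 := by simpa using hpq.symm.inv_add_inv_eq_one
    rw [this, ENNReal.rpow_one]
  have e2 : ∀ a, (w a ^ (1/q)) ^ q = w a := by
    intro a; rw [← ENNReal.rpow_mul]; rw [one_div_mul_cancel hq0.ne', ENNReal.rpow_one]
  have e3 : ∀ a, (w a ^ (1/p) * g a) ^ p = w a * g a ^ p := by
    intro a; rw [ENNReal.mul_rpow_of_nonneg _ _ hp0.le, ← ENNReal.rpow_mul,
      one_div_mul_cancel hp0.ne', ENNReal.rpow_one]
  simp only [e1, e2, e3] at h
  calc (∫⁻ a, w a * g a ∂μ) ^ p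
      ≤ ((∫⁻ a, w a ∂μ) ^ (1/q) * (∫⁻ a, w a * g a ^ p ∂μ) ^ (1/p)) ^ p := by gcongr
    _ = _ := by
      rw [ENNReal.mul_rpow_of_nonneg _ _ hp0.le, ← ENNReal.rpow_mul, ← ENNReal.rpow_mul,
        one_div_mul_cancel hp0.ne', ENNReal.rpow_one]
      congr 2
      have := hpq.sub_one_mul_conj
      field_simp
      linarith

theorem young_lint {G : Type*} [MeasurableSpace G] [AddCommGroup G] [MeasurableAdd₂ G]
    [MeasurableNeg G] (μ : Measure G) [SFinite μ] [μ.IsAddLeftInvariant] (w g : G → ℝ≥0∞)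
    (hw : Measurable w) (hg : Measurable g) {p : ℝ} (hp : 1 < p) :
    ∫⁻ x, (∫⁻ y, w y * g (x - y) ∂μ) ^ p ∂μ ≤ (∫⁻ y, w y ∂μ) ^ p * ∫⁻ x, g x ^ p ∂μ := by
  have hp0 : 0 < p := by linarith
  calc ∫⁻ x, (∫⁻ y, w y * g (x - y) ∂μ) ^ p ∂μ
      ≤ ∫⁻ x, (∫⁻ y, w y ∂μ) ^ (p-1) * ∫⁻ y, w y * g (x - y) ^ p ∂μ ∂μ := by
        apply lintegral_mono
        intro x
        exact jensen_lint μ w (fun y => g (x - y)) hw.aemeasurable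
          (hg.comp (measurable_const.sub measurable_id)).aemeasurable hp
    _ = (∫⁻ y, w y ∂μ) ^ (p-1) * ∫⁻ x, ∫⁻ y, w y * g (x - y) ^ p ∂μ ∂μ := by
        rw [lintegral_const_mul]
        apply Measurable.lintegral_prod_right' (f := fun z : G × G => w z.2 * g (z.1 - z.2) ^ p)
        fun_prop
    _ = (∫⁻ y, w y ∂μ) ^ (p-1) * ∫⁻ y, w y * ∫⁻ x, g x ^ p ∂μ ∂μ := by
        rw [lintegral_lintegral_swap]
        · congr 1
          apply lintegral_congr
          intro y
          rw [lintegral_const_mul _ (by fun_prop)]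
          rw [lintegral_sub_right_eq_self (fun x => g x ^ p) y]
        · apply Measurable.aemeasurable
          fun_prop
    _ = _ := by
        rw [lintegral_mul_const _ hw, ← mul_assoc]
        congr 1
        nth_rw 2 [← ENNReal.rpow_one (∫⁻ y, w y ∂μ)]
        rw [← ENNReal.rpow_add_of_nonneg _ _ (by linarith) (by norm_num)]
        simp

theorem cpow_ineq {p : ℝ} (hp : 1 < p) (hp2 : p ≤ 2) :
    ∃ A B : ℝ, 0 ≤ A ∧ 0 ≤ B ∧ ∀ w : ℂ, 0 < w.re →
      ‖w‖ ^ p ≤ A * w.re ^ p - B * (w ^ (p : ℂ)).re := by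
  have hp0 : 0 < p := by linarith
  have hpi := Real.pi_pos
  obtain ⟨θ, h1, h2⟩ : ∃ θ, Real.pi / (2 * p) < θ ∧ θ < Real.pi / 2 := by
    apply exists_between
    rw [div_lt_div_iff₀ (by positivity) (by positivity)]
    nlinarith
  have h1' : Real.pi / 2 < p * θ := by
    rw [div_lt_iff₀ (by positivity)] at h1
    linarith
  have hθ0 : 0 < θ := lt_trans (by positivity) h1
  have hneg : Real.cos (p * θ) < 0 := by
    apply Real.cos_neg_of_pi_div_two_lt_of_lt h1'
    nlinarith
  have hc : 0 < Real.cos θ := Real.cos_pos_of_mem_Ioo ⟨by linarith, h2⟩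
  set b := -Real.cos (p * θ) with hb
  have hb0 : 0 < b := by linarith
  refine ⟨(1 + 1 / b) / (Real.cos θ) ^ p, 1 / b, by positivity, by positivity, ?_⟩
  intro w hw
  have hw0 : w ≠ 0 := by rintro rfl; simp at hw
  have hn : 0 < ‖w‖ := norm_pos_iff.mpr hw0
  have harg : |w.arg| < Real.pi / 2 := Complex.abs_arg_lt_pi_div_two_iff.mpr (Or.inl hw)
  have hre : w.re = ‖w‖ * Real.cos |w.arg| := by
    rw [Real.cos_abs, Complex.norm_mul_cos_arg]
  have hpow : (w ^ (p : ℂ)).re = ‖w‖ ^ p * Real.cos (p * |w.arg|) := by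
    rw [Complex.cpow_ofReal_re]
    congr 1
    rw [← Real.cos_abs (w.arg * p), abs_mul, abs_of_pos hp0, mul_comm]
  rw [hpow, hre]
  set a := |w.arg|
  have ha0 : 0 ≤ a := abs_nonneg _
  have hca : 0 < Real.cos a := Real.cos_pos_of_mem_Ioo ⟨by linarith, harg⟩
  rw [Real.mul_rpow hn.le hca.le]
  suffices h : 1 ≤ (1 + 1 / b) / (Real.cos θ) ^ p * Real.cos a ^ p - 1 / b * Real.cos (p * a) by
    have := mul_le_mul_of_nonneg_left h (by positivity : 0 ≤ ‖w‖ ^ p)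
    linarith
  rcases le_total θ a with hta | hta
  · have : Real.cos (p * a) ≤ Real.cos (p * θ) := by
      apply Real.cos_le_cos_of_nonneg_of_le_pi (by positivity) (by nlinarith) (by gcongr)
    have h3 : b ≤ - Real.cos (p * a) := by linarith
    have h4 : 1 ≤ 1 / b * (-Real.cos (p * a)) := by
      rw [one_div, ← div_eq_inv_mul, le_div_iff₀ hb0]; linarith
    have h5 : 0 ≤ (1 + 1 / b) / (Real.cos θ) ^ p * Real.cos a ^ p := by positivity
    linarith
  · have h3 : Real.cos θ ≤ Real.cos a :=
      Real.cos_le_cos_of_nonneg_of_le_pi ha0 (by linarith) hta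
    have h4 : Real.cos θ ^ p ≤ Real.cos a ^ p := by gcongr
    have h5 : 1 + 1/b ≤ (1 + 1 / b) / (Real.cos θ) ^ p * Real.cos a ^ p := by
      rw [div_mul_eq_mul_div, le_div_iff₀ (by positivity)]
      gcongr
    have h6 : 1 / b * Real.cos (p * a) ≤ 1 / b * 1 := by
      gcongr; exact Real.cos_le_one _
    linarith

theorem integrable_of_decay {Φ : ℝ → ℂ} (hc : Continuous Φ) {p C R : ℝ} (hp : 1 < p)
    (hb : ∀ s, R ≤ |s| → ‖Φ s‖ ≤ C / |s| ^ p) : Integrable Φ := by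
  have h1 : IntegrableAtFilter Φ (cocompact ℝ) volume := by
    have hO : Φ =O[cocompact ℝ] (fun s : ℝ => ‖s‖ ^ (-p)) := by
      apply Asymptotics.IsBigO.of_bound C
      have : ∀ᶠ s : ℝ in cocompact ℝ, max R 1 ≤ ‖s‖ :=
        (tendsto_norm_cocompact_atTop (E := ℝ)).eventually (eventually_ge_atTop _)
      filter_upwards [this] with s hs
      have := hb s (le_trans (le_max_left _ _) hs)
      rw [Real.norm_of_nonneg (by positivity), Real.rpow_neg (norm_nonneg _)]
      simpa [div_eq_mul_inv] using this
    have hs : IntegrableAtFilter (fun s : ℝ => (1+‖s‖) ^ (-p)) (cocompact ℝ) volume :=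
      (integrable_one_add_norm (by simpa using hp)).integrableAtFilter _
    have hO2 : (fun s : ℝ => ‖s‖ ^ (-p)) =O[cocompact ℝ] (fun s : ℝ => (1+‖s‖) ^ (-p)) := by
      apply Asymptotics.IsBigO.of_bound (2 ^ p)
      have : ∀ᶠ s : ℝ in cocompact ℝ, 1 ≤ ‖s‖ :=
        (tendsto_norm_cocompact_atTop (E := ℝ)).eventually (eventually_ge_atTop _)
      filter_upwards [this] with s hs
      have h0 : 0 < ‖s‖ := by linarith
      have hA : ‖‖s‖ ^ (-p)‖ = ‖s‖ ^ (-p) := Real.norm_of_nonneg (by positivity)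
      have hB : ‖(1 + ‖s‖) ^ (-p)‖ = (1 + ‖s‖) ^ (-p) := Real.norm_of_nonneg (by positivity)
      rw [hA, hB, Real.rpow_neg h0.le, Real.rpow_neg (by positivity), ← div_eq_mul_inv,
        inv_eq_one_div, div_le_div_iff₀ (by positivity) (by positivity), one_mul,
        ← Real.mul_rpow (by norm_num) h0.le]
      apply Real.rpow_le_rpow (by positivity) (by linarith) (by linarith)
    exact (hO.trans hO2).integrableAtFilter
      ⟨univ, univ_mem, hc.aestronglyMeasurable⟩ hs
  exact (hc.locallyIntegrable).integrable_of_isBigO_cocompact (Asymptotics.isBigO_refl _ _) h1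

theorem contour_zero {Φ : ℂ → ℂ} {p C R₀ η : ℝ} (hη : 0 < η) (hp : 1 < p)
    (hd : ∀ z : ℂ, 0 < z.im → DifferentiableAt ℂ Φ z)
    (hb : ∀ z : ℂ, η ≤ z.im → R₀ ≤ ‖z‖ → ‖Φ z‖ ≤ C / ‖z‖ ^ p) :
    Integrable (fun s : ℝ => Φ (s + η * Complex.I)) ∧
      ∫ s : ℝ, Φ (s + η * Complex.I) = 0 := by
  have hC : 0 ≤ C := by
    have := hb (⟨0, max η (max R₀ 1)⟩) (by simp) (by
      rw [show (⟨0, max η (max R₀ 1)⟩ : ℂ) = ((max η (max R₀ 1) : ℝ) : ℂ) * Complex.I by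
        apply Complex.ext <;> simp]
      simp only [norm_mul, Complex.norm_I, Complex.norm_real, mul_one]
      exact le_trans (by simp) (le_abs_self _))
    have h2 := (norm_nonneg _).trans this
    by_contra hneg
    push Not at hneg
    have h3 : (0:ℝ) < ‖(⟨0, max η (max R₀ 1)⟩ : ℂ)‖ ^ p := by
      apply Real.rpow_pos_of_pos
      rw [norm_pos_iff]
      intro h
      have := congrArg Complex.im h
      simp at this
      linarith [le_max_left η (max R₀ 1)]
    have := div_neg_of_neg_of_pos hneg h3
    linarith
  have hcont : Continuous (fun s : ℝ => Φ (s + η * Complex.I)) := by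
    rw [continuous_iff_continuousAt]
    intro s
    have h1 : ContinuousAt Φ (s + η * Complex.I) := (hd _ (by simpa using hη)).continuousAt
    exact ContinuousAt.comp (f := fun s : ℝ => (s + η * Complex.I : ℂ)) h1
      (by fun_prop)
  have hre : ∀ s v : ℝ, |s| ≤ ‖(s + v * Complex.I : ℂ)‖ := fun s v => by
    simpa using Complex.abs_re_le_norm (s + v * Complex.I)
  have him : ∀ s v : ℝ, |v| ≤ ‖(s + v * Complex.I : ℂ)‖ := fun s v => by
    simpa using Complex.abs_im_le_norm (s + v * Complex.I)
  have key : ∀ (s v R : ℝ), 0 < R → R₀ ≤ R → η ≤ v → R ≤ ‖(s + v * Complex.I : ℂ)‖ →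
      ‖Φ (s + v * Complex.I)‖ ≤ C / R ^ p := by
    intro s v R hR hR0 hv hn
    refine (hb _ (by simpa using hv) (hR0.trans hn)).trans ?_
    gcongr
  have hIntg : Integrable (fun s : ℝ => Φ (s + η * Complex.I)) := by
    apply integrable_of_decay hcont hp (C := C) (R := max R₀ 1)
    intro s hs
    exact key s η |s| (by linarith [le_max_right R₀ 1]) ((le_max_left _ _).trans hs) le_rfl (hre _ _)
  refine ⟨hIntg, ?_⟩
  have hlim := intervalIntegral_tendsto_integral hIntg tendsto_neg_atTop_atBot tendsto_id
  have hzero : Tendsto (fun R : ℝ => ∫ s in (-R)..(id R), Φ (s + η * Complex.I)) atTop (𝓝 0) := by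
    apply squeeze_zero_norm' (a := fun R : ℝ => 4 * C * R ^ (-(p-1)))
    · filter_upwards [eventually_ge_atTop (max R₀ 1)] with R hR
      have hR0 : R₀ ≤ R := (le_max_left _ _).trans hR
      have hR1 : 1 ≤ R := (le_max_right _ _).trans hR
      have hRp : 0 < R := by linarith
      have hrect := Complex.integral_boundary_rect_eq_zero_of_differentiableOn Φ
        (-R + η * Complex.I) (R + (η + R : ℝ) * Complex.I) (by
          intro z hz
          apply DifferentiableAt.differentiableWithinAt
          apply hd
          have := hz.2
          simp only [mem_preimage] at this
          rw [uIcc_of_le (by simp; linarith)] at this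
          have h3 := this.1
          simp at h3
          linarith)
      simp only [Complex.add_re, Complex.neg_re, Complex.ofReal_re, Complex.mul_re, Complex.I_re,
        mul_zero, Complex.ofReal_im, Complex.I_im, mul_one, sub_self, add_zero, Complex.add_im,
        Complex.neg_im, neg_zero, Complex.mul_im, zero_add] at hrect
      have b1 : ‖∫ s in (-R)..R, Φ (s + (η + R : ℝ) * Complex.I)‖ ≤ C / R ^ p * |R - (-R)| := by
        apply intervalIntegral.norm_integral_le_of_norm_le_const
        intro s _
        apply key s _ R hRp hR0 (by linarith)
        refine le_trans ?_ (him _ _)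
        rw [abs_of_pos (by linarith)]; linarith
      have b2 : ‖∫ v in η..(η+R), Φ ((R:ℝ) + v * Complex.I)‖ ≤ C / R ^ p * |η + R - η| := by
        apply intervalIntegral.norm_integral_le_of_norm_le_const
        intro v hv
        rw [uIoc_of_le (by linarith)] at hv
        apply key R _ R hRp hR0 hv.1.le
        refine le_trans ?_ (hre _ _)
        exact le_abs_self _
      have b3 : ‖∫ v in η..(η+R), Φ (((-R:ℝ):ℂ) + v * Complex.I)‖ ≤ C / R ^ p * |η + R - η| := by
        apply intervalIntegral.norm_integral_le_of_norm_le_const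
        intro v hv
        rw [uIoc_of_le (by linarith)] at hv
        apply key (-R) _ R hRp hR0 hv.1.le
        refine le_trans ?_ (hre _ _)
        exact neg_le_abs _|>.trans' (by simp)
      have e : (∫ s in (-R)..R, Φ (s + η * Complex.I)) =
          (∫ s in (-R)..R, Φ (s + (η + R : ℝ) * Complex.I)) -
          Complex.I • (∫ v in η..(η+R), Φ ((R:ℝ) + v * Complex.I)) +
          Complex.I • (∫ v in η..(η+R), Φ (((-R:ℝ):ℂ) + v * Complex.I)) := by
        linear_combination hrect
      simp only [id]
      rw [e]
      refine (norm_add_le _ _).trans ?_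
      refine (add_le_add_left (norm_sub_le _ _) _).trans ?_
      rw [norm_smul, norm_smul, Complex.norm_I, one_mul, one_mul]
      have e2 : R ^ (-(p-1)) = R / R ^ p := by
        rw [neg_sub, Real.rpow_sub hRp, Real.rpow_one]
      rw [e2]
      rw [abs_of_pos (by linarith)] at b1 b2 b3
      have : 4 * C * (R / R^p) = C / R ^ p * (R - -R) + C / R ^ p * (η + R - η) +
        C / R ^ p * (η + R - η) := by ring
      linarith
    · have := (tendsto_rpow_neg_atTop (y := p - 1) (by linarith)).const_mul (4 * C)
      simpa using this
  exact tendsto_nhds_unique hlim hzero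

theorem poisson1_lint {η : ℝ} (hη : 0 < η) :
    ∫⁻ r : ℝ, ENNReal.ofReal (η / (r ^ 2 + η ^ 2)) = ENNReal.ofReal Real.pi := by
  have e : (fun r : ℝ => η / (r ^ 2 + η ^ 2)) = fun r => η⁻¹ * (fun x : ℝ => (1 + x ^ 2)⁻¹) (r / η) := by
    funext r
    have : r ^ 2 + η ^ 2 ≠ 0 := by positivity
    have : 1 + (r/η) ^ 2 ≠ 0 := by positivity
    simp only
    field_simp
    ring
  rw [← ofReal_integral_eq_lintegral_ofReal]
  · rw [e, integral_const_mul, Measure.integral_comp_div (fun x : ℝ => (1 + x ^ 2)⁻¹) η,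
      integral_univ_inv_one_add_sq, abs_of_pos hη, smul_eq_mul]
    congr 1
    field_simp
  · rw [e]
    exact (integrable_inv_one_add_sq.comp_div hη.ne').const_mul _
  · exact Eventually.of_forall fun r => by positivity

/-- The Cauchy integral. -/
noncomputable def cauchyF (g : ℝ → ℝ) (z : ℂ) : ℂ := ∫ y : ℝ, (g y : ℂ) * (Complex.I / (z - y))

theorem im_le_norm_sub (z : ℂ) (y : ℝ) : z.im ≤ ‖z - y‖ := by
  have := Complex.abs_im_le_norm (z - y)
  simp at this
  exact (le_abs_self _).trans this

theorem cauchy_int {g : ℝ → ℝ} (hg : Integrable g) {z : ℂ} (hz : 0 < z.im) :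
    Integrable (fun y : ℝ => (g y : ℂ) * (Complex.I / (z - y))) := by
  refine hg.ofReal.mul_bdd (c := 1 / z.im)
    (Measurable.aestronglyMeasurable (by fun_prop)) (Eventually.of_forall fun y => ?_)
  rw [norm_div, Complex.norm_I]
  gcongr
  exact im_le_norm_sub z y

theorem cauchy_re {g : ℝ → ℝ} (hg : Integrable g) {z : ℂ} (hz : 0 < z.im) :
    (cauchyF g z).re = ∫ y : ℝ, g y * (z.im / ((z.re - y) ^ 2 + z.im ^ 2)) := by
  have := Complex.reCLM.integral_comp_comm (cauchy_int hg hz)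
  simp only [Complex.reCLM_apply] at this
  rw [cauchyF, ← this]
  congr 1
  funext y
  rw [Complex.re_ofReal_mul, Complex.div_re]
  simp [Complex.normSq_apply]
  left; ring

theorem cauchy_im {g : ℝ → ℝ} (hg : Integrable g) {z : ℂ} (hz : 0 < z.im) :
    (cauchyF g z).im = ∫ y : ℝ, g y * ((z.re - y) / ((z.re - y) ^ 2 + z.im ^ 2)) := by
  have := Complex.imCLM.integral_comp_comm (cauchy_int hg hz)
  simp only [Complex.imCLM_apply] at this
  rw [cauchyF, ← this]
  congr 1
  funext y
  rw [Complex.im_ofReal_mul, Complex.div_im]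
  simp [Complex.normSq_apply]
  left; ring

theorem cauchy_diff {g : ℝ → ℝ} (hg : Integrable g) {z : ℂ} (hz : 0 < z.im) :
    DifferentiableAt ℂ (cauchyF g) z := by
  have h := hasDerivAt_integral_of_dominated_loc_of_deriv_le (μ := (volume : Measure ℝ))
    (F := fun (z : ℂ) (y : ℝ) => (g y : ℂ) * (Complex.I / (z - y))) (x₀ := z)
    (s := Metric.ball z (z.im / 2)) (bound := fun y => ‖g y‖ * (1 / (z.im / 2) ^ 2))
    (F' := fun (z : ℂ) (y : ℝ) => (g y : ℂ) * (-Complex.I / (z - y) ^ 2))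
    (Metric.ball_mem_nhds _ (by positivity))
    (by
      filter_upwards [(isOpen_lt continuous_const Complex.continuous_im).mem_nhds hz] with w hw
      exact (cauchy_int hg hw).aestronglyMeasurable)
    (cauchy_int hg hz)
    (hg.ofReal.aestronglyMeasurable.mul (Measurable.aestronglyMeasurable (by fun_prop)))
    (by
      refine Eventually.of_forall fun y w hw => ?_
      have hw' : z.im / 2 ≤ w.im := by
        have h1 := Complex.abs_im_le_norm (w - z)
        rw [Metric.mem_ball, dist_eq_norm] at hw
        simp only [Complex.sub_im] at h1
        have := neg_abs_le (w.im - z.im)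
        linarith
      rw [norm_mul, norm_div, norm_neg, Complex.norm_I, norm_pow, Complex.norm_real]
      gcongr
      exact hw'.trans (im_le_norm_sub w y))
    (hg.norm.mul_const _)
    (by
      refine Eventually.of_forall fun y w hw => ?_
      have hw' : z.im / 2 ≤ w.im := by
        have h1 := Complex.abs_im_le_norm (w - z)
        rw [Metric.mem_ball, dist_eq_norm] at hw
        simp only [Complex.sub_im] at h1
        have := neg_abs_le (w.im - z.im)
        linarith
      have hne : w - y ≠ 0 := by
        rw [← norm_pos_iff]
        have := im_le_norm_sub w y
        linarith
      have := ((hasDerivAt_const w Complex.I).div ((hasDerivAt_id w).sub_const (y : ℂ)) hne).const_mul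
        (g y : ℂ)
      refine HasDerivAt.congr_deriv this ?_
      simp)
  exact h.2.differentiableAt

theorem hilbert_nonneg {p : ℝ} (hp : 1 < p) (hp2 : p ≤ 2) : ∃ C : ℝ≥0∞, C ≠ ∞ ∧
    ∀ η : ℝ, 0 < η → ∀ g : ℝ → ℝ, Measurable g → (∀ y, 0 ≤ g y) →
      (∃ M, ∀ y, M < |y| → g y = 0) → Integrable g →
      ∫⁻ s : ℝ, ‖∫ r : ℝ, r / (r ^ 2 + η ^ 2) * g (s - r)‖ₑ ^ p ≤ C * ∫⁻ s, ‖g s‖ₑ ^ p := by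
  obtain ⟨A, B, hA, hB, hAB⟩ := cpow_ineq hp hp2
  have hp0 : 0 < p := by linarith
  refine ⟨ENNReal.ofReal A * ENNReal.ofReal Real.pi ^ p,
    ENNReal.mul_ne_top ENNReal.ofReal_ne_top (ENNReal.rpow_ne_top_of_nonneg hp0.le
      ENNReal.ofReal_ne_top), ?_⟩
  rintro η hη g hgm hg0 ⟨M, hM⟩ hgi
  by_cases hz : g =ᵐ[volume] 0
  · have : ∀ s, ∫ r : ℝ, r / (r ^ 2 + η ^ 2) * g (s - r) = 0 := by
      intro s
      apply integral_eq_zero_of_ae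
      have : ∀ᵐ r : ℝ, g (s - r) = 0 :=
        (quasiMeasurePreserving_sub_left volume s).ae hz
      filter_upwards [this] with r hr
      simp [hr]
    simp [this, hp0]
  have hpos : ∀ z : ℂ, 0 < z.im → 0 < (cauchyF g z).re := by
    intro z hz'
    rw [cauchy_re hgi hz', integral_pos_iff_support_of_nonneg]
    · rw [pos_iff_ne_zero]
      intro h
      apply hz
      rw [Filter.EventuallyEq, ae_iff]
      refine measure_mono_null ?_ h
      intro y hy
      simp only [mem_ofPred_eq, Pi.zero_apply] at hy
      simp only [Function.mem_support]
      positivity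
    · intro y
      have := hg0 y
      simp only [Pi.zero_apply]
      positivity
    · refine hgi.mul_bdd (c := z.im / z.im ^ 2)
        (Measurable.aestronglyMeasurable (by fun_prop)) (Eventually.of_forall fun y => ?_)
      rw [Real.norm_of_nonneg (by positivity)]
      gcongr
      nlinarith [sq_nonneg (z.re - y)]
  have hFd : ∀ z : ℂ, 0 < z.im → DifferentiableAt ℂ (fun z => (cauchyF g z) ^ (p : ℂ)) z := by
    intro z hz'
    exact (cauchy_diff hgi hz').cpow (differentiableAt_const _) (Or.inl (hpos z hz'))
  have hnorm : ∀ z : ℂ, ‖(cauchyF g z) ^ (p : ℂ)‖ = ‖cauchyF g z‖ ^ p := fun z =>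
    Complex.norm_cpow_real _ _
  have hdecay : ∀ z : ℂ, η ≤ z.im → max (2 * M) 0 ≤ ‖z‖ →
      ‖(cauchyF g z) ^ (p : ℂ)‖ ≤ (2 * ∫ y, g y) ^ p / ‖z‖ ^ p := by
    intro z hzη hzM
    have hzn : 0 < ‖z‖ := by
      have := Complex.abs_im_le_norm z
      have := le_abs_self z.im
      linarith
    rw [hnorm, ← Real.div_rpow (by have := integral_nonneg (μ := volume) (f := g) hg0; positivity) hzn.le]
    gcongr
    rw [cauchyF, mul_div_right_comm, mul_comm, ← integral_mul_const]
    apply norm_integral_le_of_norm_le (hgi.mul_const _)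
    refine Eventually.of_forall fun y => ?_
    by_cases hy : M < |y|
    · simp [hM y hy]
    · push Not at hy
      rw [norm_mul, Complex.norm_real, Real.norm_of_nonneg (hg0 y)]
      gcongr
      · exact hg0 y
      rw [norm_div, Complex.norm_I]
      have h1 : ‖z‖ / 2 ≤ ‖z - y‖ := by
        have := norm_sub_norm_le z y
        rw [Complex.norm_real, Real.norm_eq_abs] at this
        have := le_max_left (2 * M) 0
        linarith
      calc 1 / ‖z - y‖ ≤ 1 / (‖z‖ / 2) := by gcongr
        _ = 2 / ‖z‖ := by field_simp
  obtain ⟨hΦi, hΦ0⟩ := contour_zero (Φ := fun z => (cauchyF g z) ^ (p : ℂ)) hη hp hFd hdecay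
  set F : ℝ → ℂ := fun s => cauchyF g (s + η * Complex.I) with hF
  have him : ∀ s : ℝ, ((s + η * Complex.I : ℂ)).im = η := by intro s; simp
  have hre : ∀ s : ℝ, ((s + η * Complex.I : ℂ)).re = s := by intro s; simp
  have him' : ∀ s : ℝ, 0 < ((s + η * Complex.I : ℂ)).im := by intro s; simpa using hη
  have hFc : Continuous F := by
    rw [continuous_iff_continuousAt]
    intro s
    exact ContinuousAt.comp (f := fun s : ℝ => (s + η * Complex.I : ℂ))
      (cauchy_diff hgi (him' s)).continuousAt (by fun_prop)
  have hni : Integrable (fun s => ‖F s‖ ^ p) := by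
    have := hΦi.norm
    simpa only [hnorm] using this
  have hU0 : ∀ s, 0 < (F s).re := fun s => hpos _ (him' s)
  have hUi : Integrable (fun s => (F s).re ^ p) := by
    refine hni.mono' ?_ (Eventually.of_forall fun s => ?_)
    · have : Continuous fun s => (F s).re := Complex.continuous_re.comp hFc
      exact (this.rpow_const (fun _ => Or.inr hp0.le)).aestronglyMeasurable
    · rw [Real.norm_of_nonneg (Real.rpow_nonneg (hU0 s).le _)]
      exact Real.rpow_le_rpow (hU0 s).le (Complex.re_le_norm _) hp0.le
  have hΦre : ∫ s, ((F s) ^ (p : ℂ)).re = 0 := by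
    have := Complex.reCLM.integral_comp_comm hΦi
    simp only [Complex.reCLM_apply] at this
    rw [this, hΦ0]; simp
  have hΦrei : Integrable (fun s => ((F s) ^ (p : ℂ)).re) := Complex.reCLM.integrable_comp hΦi
  have hmain : ∫ s, ‖F s‖ ^ p ≤ A * ∫ s, (F s).re ^ p := by
    calc ∫ s, ‖F s‖ ^ p ≤ ∫ s, (A * (F s).re ^ p - B * ((F s) ^ (p : ℂ)).re) :=
          integral_mono hni ((hUi.const_mul A).sub (hΦrei.const_mul B)) (fun s => hAB _ (hU0 s))
      _ = A * ∫ s, (F s).re ^ p := by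
        rw [integral_sub (hUi.const_mul A) (hΦrei.const_mul B), integral_const_mul,
          integral_const_mul, hΦre]
        simp
  have hV : ∀ s, ‖∫ r : ℝ, r / (r ^ 2 + η ^ 2) * g (s - r)‖ₑ ^ p ≤ ENNReal.ofReal (‖F s‖ ^ p) := by
    intro s
    have e : ∫ r : ℝ, r / (r ^ 2 + η ^ 2) * g (s - r) = (F s).im := by
      rw [hF]
      simp only
      rw [cauchy_im hgi (him' s), him, hre, ← integral_sub_left_eq_self _ _ s]
      congr 1
      funext y
      rw [sub_sub_cancel, mul_comm]
    rw [e, ← ENNReal.ofReal_rpow_of_nonneg (norm_nonneg _) hp0.le]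
    gcongr
    rw [← ofReal_norm]
    gcongr
    exact Complex.abs_im_le_norm _
  have hU : ∀ s, ENNReal.ofReal ((F s).re ^ p) ≤
      (∫⁻ r, ENNReal.ofReal (η / (r ^ 2 + η ^ 2)) * ‖g (s - r)‖ₑ) ^ p := by
    intro s
    have e : (F s).re = ∫ r : ℝ, (η / (r ^ 2 + η ^ 2)) * g (s - r) := by
      rw [hF]
      simp only
      rw [cauchy_re hgi (him' s), him, hre, ← integral_sub_left_eq_self _ _ s]
      congr 1
      funext y
      rw [sub_sub_cancel, mul_comm]
    rw [← ENNReal.ofReal_rpow_of_nonneg (hU0 s).le hp0.le]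
    gcongr
    rw [e]
    refine (Real.ofReal_le_enorm _).trans ((enorm_integral_le_lintegral_enorm _).trans ?_)
    apply lintegral_mono
    intro r
    simp only
    rw [enorm_mul, Real.enorm_of_nonneg (by positivity : 0 ≤ η / (r ^ 2 + η ^ 2))]
  calc ∫⁻ s : ℝ, ‖∫ r : ℝ, r / (r ^ 2 + η ^ 2) * g (s - r)‖ₑ ^ p
      ≤ ∫⁻ s, ENNReal.ofReal (‖F s‖ ^ p) := lintegral_mono hV
    _ = ENNReal.ofReal (∫ s, ‖F s‖ ^ p) := by
        rw [ofReal_integral_eq_lintegral_ofReal hni (Eventually.of_forall fun s => by positivity)]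
    _ ≤ ENNReal.ofReal (A * ∫ s, (F s).re ^ p) := ENNReal.ofReal_le_ofReal hmain
    _ = ENNReal.ofReal A * ∫⁻ s, ENNReal.ofReal ((F s).re ^ p) := by
        rw [ENNReal.ofReal_mul hA, ofReal_integral_eq_lintegral_ofReal hUi
          (Eventually.of_forall fun s => Real.rpow_nonneg (hU0 s).le _)]
    _ ≤ ENNReal.ofReal A * ∫⁻ s, (∫⁻ r, ENNReal.ofReal (η / (r ^ 2 + η ^ 2)) * ‖g (s - r)‖ₑ) ^ p := by
        gcongr with s
        exact hU s
    _ ≤ ENNReal.ofReal A * ((∫⁻ r, ENNReal.ofReal (η / (r ^ 2 + η ^ 2))) ^ p * ∫⁻ s, ‖g s‖ₑ ^ p) := by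
        gcongr
        exact young_lint volume _ (fun y => ‖g y‖ₑ) (by fun_prop) (by fun_prop) hp
    _ = _ := by rw [poisson1_lint hη, mul_assoc]

theorem memLp_of_decay {E F : Type*} [NormedAddCommGroup E] [NormedSpace ℝ E] [FiniteDimensional ℝ E]
    [MeasurableSpace E] [BorelSpace E] (μ : Measure E) [μ.IsAddHaarMeasure] [NormedAddCommGroup F]
    {φ : E → F} (hm : AEStronglyMeasurable φ μ) {C a q : ℝ} (hq : 0 < q)
    (h : ∀ y, ‖φ y‖ ≤ C * (1 + ‖y‖) ^ (-a)) (ha : (Module.finrank ℝ E : ℝ) < a * q) :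
    MemLp φ (ENNReal.ofReal q) μ := by
  have h1 : MemLp (fun y : E => (1 + ‖y‖) ^ (-a)) (ENNReal.ofReal q) μ := by
    rw [← integrable_norm_rpow_iff (Measurable.aestronglyMeasurable (by fun_prop))
      (by simpa using hq) (by simp)]
    rw [ENNReal.toReal_ofReal hq.le]
    convert integrable_one_add_norm (μ := μ) ha using 2 with y
    rw [Real.norm_of_nonneg (by positivity), ← Real.rpow_mul (by positivity)]
    ring_nf
  refine MemLp.of_le_mul h1 hm (c := C) (Eventually.of_forall fun y => ?_)
  rw [Real.norm_of_nonneg (by positivity : 0 ≤ (1 + ‖y‖) ^ (-a))]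
  exact h y

theorem integrable_mul_of_memLp {α : Type*} [MeasurableSpace α] {μ : Measure α} {f : α → ℝ}
    {F : Type*} [NormedAddCommGroup F] [NormedSpace ℝ F] {g : α → F}
    {p q : ℝ} (hpq : p.HolderConjugate q) (hf : MemLp f (ENNReal.ofReal q) μ)
    (hg : MemLp g (ENNReal.ofReal p) μ) : Integrable (fun x => f x • g x) μ := by
  have := hpq.symm.ennrealOfReal
  rw [← memLp_one_iff_integrable]
  exact MemLp.smul (r := 1) hg hf

theorem memLp_lint {α F : Type*} [MeasurableSpace α] {μ : Measure α} [NormedAddCommGroup F]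
    {p : ℝ} (hp : 0 < p) {f : α → F} (hf : AEStronglyMeasurable f μ) :
    MemLp f (ENNReal.ofReal p) μ ↔ ∫⁻ x, ‖f x‖ₑ ^ p ∂μ ≠ ∞ := by
  have h0 : ENNReal.ofReal p ≠ 0 := by simpa using hp
  rw [← lt_top_iff_ne_top]
  have := eLpNorm_lt_top_iff_lintegral_rpow_enorm_lt_top (f := f) (μ := μ) h0 (by simp)
  rw [ENNReal.toReal_ofReal hp.le] at this
  rw [← this]
  exact ⟨fun h => h.2, fun h => ⟨hf, h⟩⟩

def kH (η r : ℝ) : ℝ := r / (r ^ 2 + η ^ 2)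

theorem kH_meas (η : ℝ) : Measurable (kH η) := by unfold kH; fun_prop

theorem kH_bound {η : ℝ} (hη : 0 < η) (r : ℝ) : ‖kH η r‖ ≤ (1 / (2 * η) + 1) * (1 + ‖r‖) ^ (-1 : ℝ) := by
  unfold kH
  rw [Real.rpow_neg_one, norm_div, Real.norm_of_nonneg (by positivity : 0 ≤ r ^ 2 + η ^ 2), Real.norm_eq_abs]
  rw [← div_eq_mul_inv, div_le_div_iff₀ (by positivity) (by positivity)]
  have : r ^ 2 = |r| ^ 2 := (sq_abs r).symm
  rw [this]
  generalize hx : |r| = x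
  have hx0 : 0 ≤ x := hx ▸ abs_nonneg r
  have e : (1 / (2 * η) + 1) * (x ^ 2 + η ^ 2) - x * (1 + x) = (1 / (2 * η)) * (x - η) ^ 2 + η ^ 2 := by
    field_simp; ring
  have : 0 ≤ (1 / (2 * η)) * (x - η) ^ 2 + η ^ 2 := by positivity
  linarith

theorem kH_memLp {η : ℝ} (hη : 0 < η) {q : ℝ} (hq : 1 < q) : MemLp (kH η) (ENNReal.ofReal q) volume :=
  memLp_of_decay volume (kH_meas η).aestronglyMeasurable (by linarith) (kH_bound hη) (by simpa using hq)

theorem kH_int {η : ℝ} (hη : 0 < η) {p : ℝ} (hp : 1 < p) {g : ℝ → ℝ} (hg : MemLp g (ENNReal.ofReal p) volume)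
    (s : ℝ) : Integrable (fun r => kH η r * g (s - r)) := by
  have hpq := Real.HolderConjugate.conjExponent hp
  have h2 : MemLp (fun r => g (s - r)) (ENNReal.ofReal p) volume :=
    hg.comp_measurePreserving (Measure.measurePreserving_sub_left volume s)
  exact integrable_mul_of_memLp hpq (kH_memLp hη hpq.symm.lt) h2

def Nice (g : ℝ → ℝ) : Prop := Measurable g ∧ (∃ M : ℝ, ∀ y, M < |y| → g y = 0) ∧ (∃ B : ℝ, ∀ y, |g y| ≤ B)

theorem Nice.memLp {g : ℝ → ℝ} (h : Nice g) {p : ℝ≥0∞} : MemLp g p volume := by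
  obtain ⟨hm, ⟨M, hM⟩, ⟨B, hB⟩⟩ := h
  have : g = indicator (Icc (-M) M) g := by
    ext y
    by_cases hy : y ∈ Icc (-M) M
    · rw [indicator_of_mem hy]
    · rw [indicator_of_notMem hy]
      apply hM
      by_contra hc
      exact hy (abs_le.1 (not_lt.1 hc))
  rw [this, memLp_indicator_iff_restrict measurableSet_Icc]
  have : IsFiniteMeasure (volume.restrict (Icc (-M) M)) := ⟨by simp⟩
  exact MemLp.of_bound hm.aestronglyMeasurable B (Eventually.of_forall hB)

theorem hilbert_nice2 {p : ℝ} (hp : 1 < p) (hp2 : p ≤ 2) : ∃ C : ℝ≥0∞, C ≠ ∞ ∧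
    ∀ η > 0, ∀ g : ℝ → ℝ, Nice g →
      ∫⁻ s, ‖∫ r, kH η r * g (s - r)‖ₑ ^ p ≤ C * ∫⁻ s, ‖g s‖ₑ ^ p := by
  obtain ⟨C, hC, h⟩ := hilbert_nonneg hp hp2
  refine ⟨2 ^ (p - 1) * (C + C), by simp [ENNReal.mul_eq_top, hC], fun η hη g hg => ?_⟩
  have h1 : Nice (fun y => max (g y) 0) := by
    obtain ⟨hm, ⟨M, hM⟩, ⟨B, hB⟩⟩ := hg
    refine ⟨by fun_prop, ⟨M, fun y hy => by simp [hM y hy]⟩, ⟨B, fun y => ?_⟩⟩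
    rw [abs_of_nonneg (by positivity)]
    exact max_le ((le_abs_self _).trans (hB y)) ((abs_nonneg _).trans (hB y))
  have h2 : Nice (fun y => max (-g y) 0) := by
    obtain ⟨hm, ⟨M, hM⟩, ⟨B, hB⟩⟩ := hg
    refine ⟨by fun_prop, ⟨M, fun y hy => by simp [hM y hy]⟩, ⟨B, fun y => ?_⟩⟩
    rw [abs_of_nonneg (by positivity)]
    exact max_le ((neg_le_abs _).trans (hB y)) ((abs_nonneg _).trans (hB y))
  have b1 := h η hη _ h1.1 (fun y => by positivity) h1.2.1 (memLp_one_iff_integrable.1 h1.memLp)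
  have b2 := h η hη _ h2.1 (fun y => by positivity) h2.2.1 (memLp_one_iff_integrable.1 h2.memLp)
  have hle1 : ∀ y, ‖max (g y) 0‖ₑ ≤ ‖g y‖ₑ := fun y => by
    rw [enorm_le_iff_norm_le, Real.norm_of_nonneg (by positivity)]
    exact max_le (le_abs_self _) (abs_nonneg _)
  have hle2 : ∀ y, ‖max (-g y) 0‖ₑ ≤ ‖g y‖ₑ := fun y => by
    rw [enorm_le_iff_norm_le, Real.norm_of_nonneg (by positivity)]
    exact max_le (neg_le_abs _) (abs_nonneg _)
  have hpt : ∀ s, ‖∫ r, kH η r * g (s - r)‖ₑ ^ p ≤ 2 ^ (p - 1) *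
      (‖∫ r, kH η r * max (g (s - r)) 0‖ₑ ^ p + ‖∫ r, kH η r * max (-g (s - r)) 0‖ₑ ^ p) := by
    intro s
    have : ∫ r, kH η r * g (s - r) = (∫ r, kH η r * max (g (s - r)) 0) - ∫ r, kH η r * max (-g (s - r)) 0 := by
      rw [← integral_sub (kH_int hη hp h1.memLp s) (kH_int hη hp h2.memLp s)]
      congr 1; ext r
      rw [← mul_sub]; congr 1
      rcases le_total 0 (g (s - r)) with h | h <;> simp [h]
    rw [this]
    refine le_trans ?_ (ENNReal.rpow_add_le_mul_rpow_add_rpow _ _ hp.le)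
    gcongr
    exact enorm_sub_le
  have hm1 : Measurable fun s => ‖∫ r, kH η r * max (g (s - r)) 0‖ₑ ^ p := by
    refine Measurable.pow_const (Measurable.enorm (StronglyMeasurable.measurable ?_)) _
    apply StronglyMeasurable.integral_prod_right (f := fun s r => kH η r * max (g (s - r)) 0)
    have := hg.1; have := kH_meas η
    apply Measurable.stronglyMeasurable
    unfold Function.uncurry
    fun_prop
  calc _ ≤ ∫⁻ s, 2 ^ (p - 1) *
      (‖∫ r, kH η r * max (g (s - r)) 0‖ₑ ^ p + ‖∫ r, kH η r * max (-g (s - r)) 0‖ₑ ^ p) := lintegral_mono hpt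
    _ = 2 ^ (p - 1) * ((∫⁻ s, ‖∫ r, kH η r * max (g (s - r)) 0‖ₑ ^ p) +
          ∫⁻ s, ‖∫ r, kH η r * max (-g (s - r)) 0‖ₑ ^ p) := by
        rw [lintegral_const_mul' _ _ (by simp), lintegral_add_left hm1]
    _ ≤ 2 ^ (p - 1) * ((C * ∫⁻ s, ‖g s‖ₑ ^ p) + (C * ∫⁻ s, ‖g s‖ₑ ^ p)) := by
        gcongr
        · exact b1.trans (by gcongr; exact hle1 _)
        · exact b2.trans (by gcongr; exact hle2 _)
    _ = _ := by ring

theorem hilbert_ext {p : ℝ} (hp : 1 < p) {C : ℝ≥0∞} {η : ℝ} (hη : 0 < η)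
    (h : ∀ g : ℝ → ℝ, Nice g →
      ∫⁻ s, ‖∫ r, kH η r * g (s - r)‖ₑ ^ p ≤ C * ∫⁻ s, ‖g s‖ₑ ^ p)
    (g : ℝ → ℝ) (hm : Measurable g) (hg : MemLp g (ENNReal.ofReal p) volume) :
    ∫⁻ s, ‖∫ r, kH η r * g (s - r)‖ₑ ^ p ≤ C * ∫⁻ s, ‖g s‖ₑ ^ p := by
  let S : ℕ → Set ℝ := fun n => {y | |y| ≤ n ∧ |g y| ≤ n}
  have hS : ∀ n, MeasurableSet (S n) := fun n =>
    (measurableSet_le (f := fun y : ℝ => |y|) (g := fun _ => (n : ℝ)) (by fun_prop) measurable_const).inter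
      (measurableSet_le (f := fun y : ℝ => |g y|) (g := fun _ => (n : ℝ)) (by fun_prop) measurable_const)
  let G : ℕ → ℝ → ℝ := fun n => (S n).indicator g
  have hGle : ∀ n y, ‖G n y‖ ≤ ‖g y‖ := fun n y => norm_indicator_le_norm_self _ _
  have hGm : ∀ n, Measurable (G n) := fun n => hm.indicator (hS n)
  have hGN : ∀ n, Nice (G n) := by
    intro n
    refine ⟨hGm n, ⟨n, fun y hy => indicator_of_notMem (fun hc => ?_) _⟩, ⟨n, fun y => ?_⟩⟩
    · exact absurd hc.1 (not_le.2 hy)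
    · by_cases hy : y ∈ S n
      · simp only [G]; rw [indicator_of_mem hy]; exact hy.2
      · simp only [G]; rw [indicator_of_notMem hy]; simp
  have hlim : ∀ y, Tendsto (fun n => G n y) atTop (𝓝 (g y)) := by
    intro y
    obtain ⟨N, hN⟩ := exists_nat_ge (max |y| |g y|)
    apply tendsto_const_nhds.congr'
    filter_upwards [eventually_ge_atTop N] with n hn
    have : (N : ℝ) ≤ n := by exact_mod_cast hn
    have hy : y ∈ S n := ⟨(le_max_left _ _).trans (hN.trans this), (le_max_right _ _).trans (hN.trans this)⟩
    simp only [G]; rw [indicator_of_mem hy]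
  have hTlim : ∀ s, Tendsto (fun n => ∫ r, kH η r * G n (s - r)) atTop (𝓝 (∫ r, kH η r * g (s - r))) := by
    intro s
    refine tendsto_integral_of_dominated_convergence (fun r => ‖kH η r * g (s - r)‖) (fun n => ?_)
      (kH_int hη hp hg s).norm (fun n => Eventually.of_forall fun r => ?_) (Eventually.of_forall fun r => ?_)
    · have := hGm n; have := kH_meas η
      exact Measurable.aestronglyMeasurable (by fun_prop)
    · rw [norm_mul, norm_mul]; gcongr; exact hGle _ _
    · exact (hlim _).const_mul _
  have hp0 : 0 < p := by linarith
  have hTm : ∀ n, Measurable fun s => ‖∫ r, kH η r * G n (s - r)‖ₑ ^ p := by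
    intro n
    refine Measurable.pow_const (Measurable.enorm (StronglyMeasurable.measurable ?_)) _
    apply StronglyMeasurable.integral_prod_right (f := fun s r => kH η r * G n (s - r))
    have := hGm n; have := kH_meas η
    apply Measurable.stronglyMeasurable
    unfold Function.uncurry
    fun_prop
  calc ∫⁻ s, ‖∫ r, kH η r * g (s - r)‖ₑ ^ p
      = ∫⁻ s, liminf (fun n => ‖∫ r, kH η r * G n (s - r)‖ₑ ^ p) atTop := by
        congr 1; ext s
        exact (((ENNReal.continuous_rpow_const.tendsto _).comp ((continuous_enorm.tendsto _).comp (hTlim s))).liminf_eq).symm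
    _ ≤ liminf (fun n => ∫⁻ s, ‖∫ r, kH η r * G n (s - r)‖ₑ ^ p) atTop := lintegral_liminf_le hTm
    _ ≤ liminf (fun n : ℕ => C * ∫⁻ s, ‖g s‖ₑ ^ p) atTop := by
        refine liminf_le_liminf (Eventually.of_forall fun n => (h _ (hGN n)).trans ?_)
        gcongr
        exact enorm_le_iff_norm_le.2 (hGle _ _)
    _ = _ := by simp

theorem hilbert_dual {p : ℝ} (hp : 2 < p) : ∃ C : ℝ≥0∞, C ≠ ∞ ∧
    ∀ η > 0, ∀ g : ℝ → ℝ, Nice g →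
      ∫⁻ s, ‖∫ r, kH η r * g (s - r)‖ₑ ^ p ≤ C * ∫⁻ s, ‖g s‖ₑ ^ p := by
  have hp1 : 1 < p := by linarith
  have hp0 : 0 < p := by linarith
  have hpq := Real.HolderConjugate.conjExponent hp1
  set q := p.conjExponent with hq
  have hq1 : 1 < q := hpq.symm.lt
  have hq0 : 0 < q := by linarith
  have hq2 : q ≤ 2 := by
    rw [hq, Real.conjExponent, div_le_iff₀ (by linarith)]; linarith
  obtain ⟨C, hC, h⟩ := hilbert_nice2 hq1 hq2
  refine ⟨C ^ (p / q), by simp [hC, div_nonneg, hp0.le, hq0.le], fun η hη g hg => ?_⟩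
  have hE := fun φ hm hφ => hilbert_ext hq1 hη (h η hη) φ hm hφ
  have hgm := hg.1
  have hkm := kH_meas η
  set G : ℝ → ℝ := fun s => ∫ r, kH η r * g (s - r) with hG
  have hG' : ∀ s, G s = ∫ y, kH η (s - y) * g y := by
    intro s
    rw [← integral_sub_left_eq_self _ _ s]
    simp only [hG, sub_sub_cancel]
  have hGm : Measurable G := by
    refine StronglyMeasurable.measurable ?_
    apply StronglyMeasurable.integral_prod_right (f := fun s r => kH η r * g (s - r))
    apply Measurable.stronglyMeasurable
    unfold Function.uncurry
    fun_prop
  obtain ⟨M, hM⟩ := hg.2.1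
  have hgi : Integrable g := memLp_one_iff_integrable.1 hg.memLp
  set c := (1 / (2 * η) + 1) * (1 + |M|) with hc
  have hc0 : 0 ≤ c := by positivity
  have hdec : ∀ s y, ‖kH η (s - y) * g y‖ ≤ c * (1 + ‖s‖) ^ (-1 : ℝ) * ‖g y‖ := by
    intro s y
    by_cases hy : M < |y|
    · rw [hM y hy]; simp
    rw [norm_mul]
    gcongr
    refine (kH_bound hη _).trans ?_
    rw [hc, mul_assoc]
    gcongr
    rw [Real.rpow_neg_one, Real.rpow_neg_one, ← div_eq_mul_inv, ← one_div, div_le_div_iff₀ (by positivity) (by positivity), one_mul]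
    have h1 : ‖s‖ ≤ ‖s - y‖ + ‖y‖ := by simpa using norm_add_le (s - y) y
    have h2 : ‖y‖ ≤ |M| := (not_lt.1 hy).trans (le_abs_self M)
    nlinarith [norm_nonneg (s - y), abs_nonneg M]
  have hGdec : ∀ s, ‖G s‖ ≤ (c * ∫ y, ‖g y‖) * (1 + ‖s‖) ^ (-1 : ℝ) := by
    intro s
    rw [hG']
    refine (norm_integral_le_of_norm_le (hgi.norm.const_mul _) (Eventually.of_forall (hdec s))).trans ?_
    rw [integral_const_mul]
    apply le_of_eq; ring
  have hGL : MemLp G (ENNReal.ofReal p) volume :=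
    memLp_of_decay volume hGm.aestronglyMeasurable hp0 hGdec (by simpa using hp1)
  have hX := (memLp_lint hp0 hGm.aestronglyMeasurable).1 hGL
  set φ : ℝ → ℝ := fun s => |G s| ^ (p - 2) * G s with hφ
  have hφm : Measurable φ := by fun_prop
  have hp1q : (p - 1) * q = p := by rw [hq, Real.conjExponent]; field_simp [(by linarith : p - 1 ≠ 0)]
  have hφn : ∀ s, ‖φ s‖ₑ ^ q = ‖G s‖ₑ ^ p := by
    intro s
    have : ‖φ s‖ = ‖G s‖ ^ (p - 1) := by
      simp only [hφ, norm_mul, Real.norm_eq_abs]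
      rw [abs_of_nonneg (by positivity : 0 ≤ |G s| ^ (p-2))]
      rcases eq_or_ne (G s) 0 with h0 | h0
      · simp [h0, (by linarith : p - 1 ≠ 0)]
      · rw [← Real.rpow_add_one (by simpa using h0)]; ring_nf
    rw [← ofReal_norm, ← ofReal_norm, this, ENNReal.ofReal_rpow_of_nonneg (by positivity) hq0.le,
      ENNReal.ofReal_rpow_of_nonneg (by positivity) hp0.le, ← Real.rpow_mul (by positivity), hp1q]
  have hφL : MemLp φ (ENNReal.ofReal q) volume := by
    rw [memLp_lint hq0 hφm.aestronglyMeasurable]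
    simpa only [hφn] using hX
  have hB := hE φ hφm hφL
  simp only [hφn] at hB
  have hGφ : ∀ s, φ s * G s = |G s| ^ p := by
    intro s
    simp only [hφ]
    rw [mul_assoc, ← sq, ← sq_abs]
    rcases eq_or_ne (G s) 0 with h0 | h0
    · simp [h0, hp0.ne']
    · rw [← Real.rpow_natCast, ← Real.rpow_add (by simpa using h0)]; norm_num
  -- Fubini
  have hdL : MemLp (fun s : ℝ => c * (1 + ‖s‖) ^ (-1 : ℝ)) (ENNReal.ofReal p) volume := by
    refine memLp_of_decay volume (Measurable.aestronglyMeasurable (by fun_prop)) (C := c) (a := 1) hp0 (fun s => ?_) (by simpa using hp1)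
    rw [Real.norm_of_nonneg (by positivity)]
  have hdi : Integrable (fun s : ℝ => φ s * (c * (1 + ‖s‖) ^ (-1 : ℝ))) volume :=
    integrable_mul_of_memLp hpq hφL hdL
  have hprod : Integrable (fun z : ℝ × ℝ => φ z.1 * (kH η (z.1 - z.2) * g z.2)) (volume.prod volume) := by
    refine (hdi.mul_prod hgi).mono (Measurable.aestronglyMeasurable (by fun_prop)) (Eventually.of_forall fun z => ?_)
    have hd := hdec z.1 z.2
    have e : ‖φ z.1 * (c * (1 + ‖z.1‖) ^ (-1 : ℝ)) * g z.2‖ =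
        ‖φ z.1‖ * (c * (1 + ‖z.1‖) ^ (-1 : ℝ) * ‖g z.2‖) := by
      rw [norm_mul (φ z.1 * _), norm_mul (φ z.1),
        Real.norm_of_nonneg (by positivity : 0 ≤ c * (1 + ‖z.1‖) ^ (-1 : ℝ)), mul_assoc]
    rw [e, norm_mul (φ z.1)]
    gcongr
  have hfub : ∫ s, |G s| ^ p = - ∫ y, g y * ∫ r, kH η r * φ (y - r) := by
    calc ∫ s, |G s| ^ p = ∫ s, ∫ y, φ s * (kH η (s - y) * g y) := by
          congr 1; ext s
          rw [integral_const_mul, ← hG', hGφ]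
      _ = ∫ y, ∫ s, φ s * (kH η (s - y) * g y) := integral_integral_swap hprod
      _ = ∫ y, - (g y * ∫ r, kH η r * φ (y - r)) := by
          congr 1; ext y
          rw [← integral_sub_left_eq_self _ _ y, ← integral_const_mul, ← integral_neg]
          congr 1; ext r
          have : kH η (y - r - y) = - kH η r := by simp [kH, neg_div]
          rw [this]; ring
      _ = _ := integral_neg _
  set X := ∫⁻ s, ‖G s‖ₑ ^ p with hXd
  set Y := ∫⁻ s, ‖g s‖ₑ ^ p with hYd
  have hTm : Measurable fun y => ∫ r, kH η r * φ (y - r) := by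
    refine StronglyMeasurable.measurable ?_
    apply StronglyMeasurable.integral_prod_right (f := fun s r => kH η r * φ (s - r))
    apply Measurable.stronglyMeasurable
    unfold Function.uncurry
    fun_prop
  have hXle : X ≤ Y ^ (1 / p) * (C * X) ^ (1 / q) := by
    calc X = ENNReal.ofReal (∫ s, |G s| ^ p) := by
          rw [ofReal_integral_eq_lintegral_ofReal]
          · apply lintegral_congr
            intro s
            rw [← ofReal_norm, ENNReal.ofReal_rpow_of_nonneg (by positivity) hp0.le]; rfl
          · have := hGL.integrable_norm_rpow (by simpa using hp0) (by simp)
            rwa [ENNReal.toReal_ofReal hp0.le] at this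
          · exact Eventually.of_forall fun s => by positivity
      _ ≤ ‖∫ y, g y * ∫ r, kH η r * φ (y - r)‖ₑ := by
          rw [hfub, ← enorm_neg]
          exact Real.ofReal_le_enorm _
      _ ≤ ∫⁻ y, ‖g y‖ₑ * ‖∫ r, kH η r * φ (y - r)‖ₑ := by
          refine (enorm_integral_le_lintegral_enorm _).trans (le_of_eq ?_)
          simp only [enorm_mul]
      _ ≤ Y ^ (1 / p) * (∫⁻ y, ‖∫ r, kH η r * φ (y - r)‖ₑ ^ q) ^ (1 / q) :=
          ENNReal.lintegral_mul_le_Lp_mul_Lq volume hpq hgm.enorm.aemeasurable hTm.enorm.aemeasurable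
      _ ≤ _ := by gcongr
  rcases eq_or_ne X 0 with h0 | h0
  · simp [h0]
  rw [ENNReal.mul_rpow_of_nonneg _ _ (by positivity)] at hXle
  have hX1 : X = X ^ (1 / p) * X ^ (1 / q) := by
    rw [← ENNReal.rpow_add _ _ h0 hX]
    have : 1 / p + 1 / q = 1 := by simpa using hpq.inv_add_inv_eq_one
    rw [this, ENNReal.rpow_one]
  have hXq0 : X ^ (1 / q) ≠ 0 := by simp [h0, hX]
  have hXqt : X ^ (1 / q) ≠ ∞ := by simp [h0, hX]
  have h3 : X ^ (1 / p) ≤ Y ^ (1 / p) * C ^ (1 / q) := by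
    rw [← ENNReal.mul_le_mul_iff_left hXq0 hXqt]
    calc _ = X := hX1.symm
      _ ≤ _ := hXle
      _ = _ := by ring
  calc X = (X ^ (1 / p)) ^ p := by rw [← ENNReal.rpow_mul]; simp [hp0.ne']
    _ ≤ (Y ^ (1 / p) * C ^ (1 / q)) ^ p := by gcongr
    _ = C ^ (p / q) * Y := by
      rw [ENNReal.mul_rpow_of_nonneg _ _ hp0.le, ← ENNReal.rpow_mul, ← ENNReal.rpow_mul, mul_comm]
      congr 2
      · ring
      · simp [hp0.ne']

theorem hilbert_full {p : ℝ} (hp : 1 < p) : ∃ C : ℝ≥0∞, C ≠ ∞ ∧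
    ∀ η > 0, ∀ g : ℝ → ℝ, Measurable g → MemLp g (ENNReal.ofReal p) volume →
      ∫⁻ s, ‖∫ r, kH η r * g (s - r)‖ₑ ^ p ≤ C * ∫⁻ s, ‖g s‖ₑ ^ p := by
  rcases le_or_gt p 2 with h2 | h2
  · obtain ⟨C, hC, h⟩ := hilbert_nice2 hp h2
    exact ⟨C, hC, fun η hη g hm hg => hilbert_ext hp hη (h η hη) g hm hg⟩
  · obtain ⟨C, hC, h⟩ := hilbert_dual h2
    exact ⟨C, hC, fun η hη g hm hg => hilbert_ext hp hη (h η hη) g hm hg⟩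

def kD (d : ℕ) (η r : ℝ) : ℝ := r * |r| ^ (d - 1) / (r ^ 2 + η ^ 2) ^ (((d : ℝ) + 1) / 2)

theorem kD_meas (d : ℕ) (η : ℝ) : Measurable (kD d η) := by unfold kD; fun_prop

theorem kD_sub {d : ℕ} (hd : 1 ≤ d) {η : ℝ} (hη : 0 < η) (r : ℝ) :
    |kD d η r - kH η r| ≤ d * (η / (r ^ 2 + η ^ 2)) := by
  obtain ⟨n, rfl⟩ : ∃ n, d = n + 1 := ⟨d - 1, by omega⟩
  set ρ := √(r ^ 2 + η ^ 2) with hρ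
  have hρ0 : 0 < ρ := Real.sqrt_pos.2 (by positivity)
  have hρ2 : r ^ 2 + η ^ 2 = ρ ^ 2 := (Real.sq_sqrt (by positivity)).symm
  have hrρ : |r| ≤ ρ := Real.le_sqrt_of_sq_le (by rw [sq_abs]; nlinarith)
  have hdiff : ρ - |r| ≤ η := by
    rw [sub_le_iff_le_add]
    apply Real.sqrt_le_iff.2
    refine ⟨by positivity, ?_⟩
    nlinarith [sq_abs r, abs_nonneg r, mul_nonneg hη.le (abs_nonneg r)]
  have e : kD (n + 1) η r = r / ρ ^ 2 * (|r| / ρ) ^ n := by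
    unfold kD
    have : (ρ ^ 2) ^ ((((n + 1 : ℕ) : ℝ) + 1) / 2) = ρ ^ 2 * ρ ^ n := by
      rw [← Real.rpow_natCast ρ 2, ← Real.rpow_mul hρ0.le, ← Real.rpow_natCast ρ n, ← Real.rpow_add hρ0]
      congr 1; push_cast; ring
    rw [hρ2, this, div_pow]
    simp only [Nat.add_sub_cancel]
    field_simp
  have e2 : kH η r = r / ρ ^ 2 := by unfold kH; rw [hρ2]
  set σ := |r| / ρ with hσ
  have hσ0 : 0 ≤ σ := by positivity
  have hσ1 : σ ≤ 1 := (div_le_one hρ0).2 hrρ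
  have hB : 1 - σ ^ n ≤ n * (1 - σ) := by
    have := one_add_mul_le_pow (a := σ - 1) (by linarith) n
    simp only [add_sub_cancel] at this
    nlinarith
  have hσn : σ ^ n ≤ 1 := pow_le_one₀ hσ0 hσ1
  rw [e, e2, hρ2, show r / ρ ^ 2 * σ ^ n - r / ρ ^ 2 = -(r / ρ ^ 2 * (1 - σ ^ n)) by ring, abs_neg,
    abs_mul, abs_div, abs_of_nonneg (by positivity : 0 ≤ ρ ^ 2), abs_of_nonneg (by linarith : 0 ≤ 1 - σ ^ n)]
  rw [← mul_div_assoc, div_mul_eq_mul_div]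
  apply div_le_div_of_nonneg_right _ (by positivity)
  have h3 : |r| * (1 - σ) ≤ η := by
    have : |r| * (1 - σ) = σ * (ρ - |r|) := by rw [hσ]; field_simp
    rw [this]; nlinarith
  have h4 : |r| * (1 - σ ^ n) ≤ |r| * (n * (1 - σ)) := by gcongr
  have : (n : ℝ) * (|r| * (1 - σ)) ≤ n * η := by gcongr
  push_cast
  nlinarith

theorem kD_lp {p : ℝ} (hp : 1 < p) {d : ℕ} (hd : 1 ≤ d) : ∃ C : ℝ≥0∞, C ≠ ∞ ∧
    ∀ η > 0, ∀ g : ℝ → ℝ, Measurable g →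
      ∫⁻ s, ‖∫ r, kD d η r * g (s - r)‖ₑ ^ p ≤ C * ∫⁻ s, ‖g s‖ₑ ^ p := by
  obtain ⟨C, hC, h⟩ := hilbert_full hp
  have hp0 : 0 < p := by linarith
  set D : ℝ≥0∞ := (ENNReal.ofReal d * ENNReal.ofReal Real.pi) ^ p with hD
  have hDt : D ≠ ∞ := by
    rw [hD]; exact ENNReal.rpow_ne_top_of_nonneg hp0.le (ENNReal.mul_ne_top (by simp) (by simp))
  refine ⟨2 ^ (p - 1) * (C + D) + 1, by simp [ENNReal.mul_eq_top, hC, hDt], fun η hη g hm => ?_⟩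
  by_cases hg : MemLp g (ENNReal.ofReal p) volume
  swap
  · rw [memLp_lint hp0 hm.aestronglyMeasurable, not_not] at hg
    rw [hg, ENNReal.mul_top (by simp)]
    exact le_top
  have hkm := kH_meas η
  have hkDm := kD_meas d η
  have hpt : ∀ s, ‖∫ r, kD d η r * g (s - r)‖ₑ ^ p ≤ 2 ^ (p - 1) * (‖∫ r, kH η r * g (s - r)‖ₑ ^ p +
      (∫⁻ r, (ENNReal.ofReal d * ENNReal.ofReal (η / (r ^ 2 + η ^ 2))) * ‖g (s - r)‖ₑ) ^ p) := by
    intro s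
    refine le_trans ?_ (ENNReal.rpow_add_le_mul_rpow_add_rpow _ _ hp.le)
    gcongr
    have hle : ∀ r, ‖(kD d η r - kH η r) * g (s - r)‖ₑ ≤
        (ENNReal.ofReal d * ENNReal.ofReal (η / (r ^ 2 + η ^ 2))) * ‖g (s - r)‖ₑ := by
      intro r
      rw [enorm_mul]
      gcongr
      rw [← ofReal_norm, ← ENNReal.ofReal_mul (by positivity)]
      exact ENNReal.ofReal_le_ofReal (kD_sub hd hη r)
    by_cases hi : Integrable (fun r => (kD d η r - kH η r) * g (s - r))
    · have : ∫ r, kD d η r * g (s - r) = (∫ r, kH η r * g (s - r)) + ∫ r, (kD d η r - kH η r) * g (s - r) := by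
        rw [← integral_add (kH_int hη hp hg s) hi]
        congr 1; ext r; ring
      rw [this]
      refine (enorm_add_le _ _).trans ?_
      gcongr
      exact (enorm_integral_le_lintegral_enorm _).trans (lintegral_mono hle)
    · have : ∫⁻ r, (ENNReal.ofReal d * ENNReal.ofReal (η / (r ^ 2 + η ^ 2))) * ‖g (s - r)‖ₑ = ∞ := by
        by_contra hc
        apply hi
        refine ⟨Measurable.aestronglyMeasurable (by fun_prop), ?_⟩
        exact lt_of_le_of_lt (lintegral_mono hle) (lt_top_iff_ne_top.2 hc)
      rw [this]; simp
  have hy := young_lint volume (fun r : ℝ => ENNReal.ofReal d * ENNReal.ofReal (η / (r ^ 2 + η ^ 2)))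
    (fun y => ‖g y‖ₑ) (by fun_prop) (by fun_prop) hp
  rw [lintegral_const_mul _ (by fun_prop), poisson1_lint hη] at hy
  have hm1 : Measurable fun s => ‖∫ r, kH η r * g (s - r)‖ₑ ^ p := by
    refine Measurable.pow_const (Measurable.enorm (StronglyMeasurable.measurable ?_)) _
    apply StronglyMeasurable.integral_prod_right (f := fun s r => kH η r * g (s - r))
    apply Measurable.stronglyMeasurable
    unfold Function.uncurry
    fun_prop
  calc _ ≤ _ := lintegral_mono hpt
    _ = 2 ^ (p - 1) * ((∫⁻ s, ‖∫ r, kH η r * g (s - r)‖ₑ ^ p) +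
          ∫⁻ s, (∫⁻ r, (ENNReal.ofReal d * ENNReal.ofReal (η / (r ^ 2 + η ^ 2))) * ‖g (s - r)‖ₑ) ^ p) := by
        rw [lintegral_const_mul' _ _ (by simp), lintegral_add_left hm1]
    _ ≤ 2 ^ (p - 1) * (C * (∫⁻ s, ‖g s‖ₑ ^ p) + D * ∫⁻ s, ‖g s‖ₑ ^ p) := by
        gcongr
        exact h η hη g hm hg
    _ = (2 ^ (p - 1) * (C + D)) * ∫⁻ s, ‖g s‖ₑ ^ p := by ring
    _ ≤ _ := by gcongr; exact le_self_add

/-- scaled kernel -/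
theorem kD_scale {d : ℕ} {ε a : ℝ} (hε : 0 < ε) (ha : 0 < a) (r : ℝ) :
    r * |r| ^ (d - 1) / (a ^ 2 * r ^ 2 + ε ^ 2) ^ (((d : ℝ) + 1) / 2) =
      (a ^ (d + 1))⁻¹ * kD d (ε / a) r := by
  unfold kD
  have e : a ^ 2 * r ^ 2 + ε ^ 2 = a ^ 2 * (r ^ 2 + (ε / a) ^ 2) := by field_simp
  have : (a ^ 2) ^ (((d : ℝ) + 1) / 2) = a ^ (d + 1) := by
    rw [← Real.rpow_natCast a 2, ← Real.rpow_mul ha.le, ← Real.rpow_natCast a (d + 1)]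
    congr 1; push_cast; ring
  rw [e, Real.mul_rpow (by positivity) (by positivity), this]
  field_simp

theorem lines_lint {E : Type*} [NormedAddCommGroup E] [InnerProductSpace ℝ E] [FiniteDimensional ℝ E]
    [MeasurableSpace E] [BorelSpace E] {v : E} (hv : v ≠ 0) (G : E → ℝ≥0∞) (hG : Measurable G) :
    ∫⁻ x, G x = ∫⁻ x, (indicator {x : E | inner ℝ x v ∈ Ico 0 (‖v‖ ^ 2)} (1 : E → ℝ≥0∞) x) *
      ∫⁻ s : ℝ, G (x + s • v) := by
  set S := {x : E | inner ℝ x v ∈ Ico 0 (‖v‖ ^ 2)} with hS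
  have hSm : MeasurableSet S := by
    have : Measurable fun x : E => inner ℝ x v := by fun_prop
    exact this measurableSet_Ico
  set ψ : E → ℝ≥0∞ := indicator S 1 with hψ
  have hψm : Measurable ψ := measurable_one.indicator hSm
  have hv2 : 0 < ‖v‖ ^ 2 := by positivity
  have h1 : ∀ x : E, ∫⁻ s : ℝ, ψ (x - s • v) = 1 := by
    intro x
    have : (fun s : ℝ => ψ (x - s • v)) = indicator (Ioc (inner ℝ x v / ‖v‖ ^ 2 - 1) (inner ℝ x v / ‖v‖ ^ 2)) 1 := by
      ext s
      simp only [hψ, indicator, hS, Set.mem_ofPred_eq, mem_Ico, mem_Ioc, inner_sub_left, inner_smul_left,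
        real_inner_self_eq_norm_sq, conj_trivial]
      congr 1
      simp only [eq_iff_iff]
      rw [le_div_iff₀ hv2, show inner ℝ x v / ‖v‖ ^ 2 - 1 < s ↔ inner ℝ x v / ‖v‖ ^ 2 < s + 1 from sub_lt_iff_lt_add, div_lt_iff₀ hv2]
      constructor <;> rintro ⟨h1, h2⟩ <;> constructor <;> nlinarith
    rw [this, lintegral_indicator_one measurableSet_Ioc]
    simp
  calc ∫⁻ x, G x = ∫⁻ x, G x * ∫⁻ s : ℝ, ψ (x - s • v) := by simp [h1]
    _ = ∫⁻ x, ∫⁻ s : ℝ, G x * ψ (x - s • v) := by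
        congr 1; ext x; rw [lintegral_const_mul _ (by fun_prop)]
    _ = ∫⁻ s : ℝ, ∫⁻ x, G x * ψ (x - s • v) := lintegral_lintegral_swap (Measurable.aemeasurable (by unfold Function.uncurry; fun_prop))
    _ = ∫⁻ s : ℝ, ∫⁻ x, ψ x * G (x + s • v) := by
        congr 1; ext s
        rw [← lintegral_add_right_eq_self (fun x => G x * ψ (x - s • v)) (s • v)]
        simp [mul_comm]
    _ = ∫⁻ x, ∫⁻ s : ℝ, ψ x * G (x + s • v) := lintegral_lintegral_swap (Measurable.aemeasurable (by unfold Function.uncurry; fun_prop))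
    _ = _ := by
        congr 1; ext x; rw [lintegral_const_mul _ (by fun_prop)]

theorem lines_bound {E : Type*} [NormedAddCommGroup E] [InnerProductSpace ℝ E] [FiniteDimensional ℝ E]
    [MeasurableSpace E] [BorelSpace E] {p : ℝ} {C : ℝ≥0∞} {k : ℝ → ℝ} (hk : Measurable k)
    (H : ∀ g : ℝ → ℝ, Measurable g →
      ∫⁻ s, ‖∫ r, k r * g (s - r)‖ₑ ^ p ≤ C * ∫⁻ s, ‖g s‖ₑ ^ p)
    {v : E} (hv : v ≠ 0) (h : E → ℝ) (hm : Measurable h) :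
    ∫⁻ x, ‖∫ r : ℝ, k r * h (x - r • v)‖ₑ ^ p ≤ C * ∫⁻ x, ‖h x‖ₑ ^ p := by
  have hTm : Measurable fun x => ‖∫ r : ℝ, k r * h (x - r • v)‖ₑ ^ p := by
    refine Measurable.pow_const (Measurable.enorm (StronglyMeasurable.measurable ?_)) _
    apply StronglyMeasurable.integral_prod_right (f := fun x (r : ℝ) => k r * h (x - r • v))
    apply Measurable.stronglyMeasurable
    unfold Function.uncurry
    fun_prop
  have hSm : MeasurableSet {x : E | inner ℝ x v ∈ Ico 0 (‖v‖ ^ 2)} := by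
    have : Measurable fun x : E => inner ℝ x v := by fun_prop
    exact this measurableSet_Ico
  rw [lines_lint hv _ hTm, lines_lint hv (fun x => ‖h x‖ₑ ^ p) (by fun_prop),
    ← lintegral_const_mul _ (by
      refine (measurable_one.indicator hSm).mul ?_
      apply Measurable.lintegral_prod_right
      fun_prop)]
  apply lintegral_mono
  intro x
  simp only
  rw [mul_left_comm]
  gcongr
  refine le_trans (le_of_eq ?_) (H (fun s => h (x + s • v)) (by fun_prop))
  congr 1; ext s
  congr 3; ext r
  rw [sub_smul, add_sub_assoc]

theorem w_low {E : Type*} [NormedAddCommGroup E] {ε b : ℝ} (hε : 0 < ε) (hb : 0 ≤ b) (y : E) :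
    (‖y‖ ^ 2 + ε ^ 2) ^ (-b) ≤ (2 * (1 + 1 / ε ^ 2)) ^ b * (1 + ‖y‖) ^ (-(2 * b)) := by
  have h1 : (1 + ‖y‖) ^ 2 ≤ (2 * (1 + 1 / ε ^ 2)) * (‖y‖ ^ 2 + ε ^ 2) := by
    have : (2 * (1 + 1 / ε ^ 2)) * (‖y‖ ^ 2 + ε ^ 2) = 2 * ‖y‖ ^ 2 + 2 + (2 * ε ^ 2 + 2 * ‖y‖ ^ 2 / ε ^ 2) := by
      field_simp; ring
    rw [this]
    have : 0 ≤ (2 * ε ^ 2 + 2 * ‖y‖ ^ 2 / ε ^ 2) := by positivity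
    nlinarith [sq_nonneg (1 - ‖y‖)]
  have h2 : ((1 + ‖y‖) ^ 2) ^ b ≤ (2 * (1 + 1 / ε ^ 2)) ^ b * (‖y‖ ^ 2 + ε ^ 2) ^ b := by
    rw [← Real.mul_rpow (by positivity) (by positivity)]
    exact Real.rpow_le_rpow (by positivity) h1 hb
  have h3 : (1 + ‖y‖) ^ (2 * b) = ((1 + ‖y‖) ^ 2) ^ b := by
    rw [← Real.rpow_natCast (1 + ‖y‖) 2, ← Real.rpow_mul (by positivity)]; norm_num
  rw [Real.rpow_neg (by positivity), Real.rpow_neg (by positivity), h3, ← div_eq_mul_inv, ← one_div,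
    div_le_div_iff₀ (by positivity) (by positivity), one_mul]
  exact h2

def qK (d : ℕ) (j : Fin d) (ε : ℝ) (y : Ed d) : ℝ := y j / (‖y‖ ^ 2 + ε ^ 2) ^ (((d : ℝ) + 1) / 2)

theorem qK_meas (d : ℕ) (j : Fin d) (ε : ℝ) : Measurable (qK d j ε) := by unfold qK; fun_prop

theorem coord_le {d : ℕ} (y : Ed d) (j : Fin d) : ‖y j‖ ≤ ‖y‖ := PiLp.norm_apply_le y j

theorem qK_bound (d : ℕ) (j : Fin d) {ε : ℝ} (hε : 0 < ε) (y : Ed d) :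
    ‖qK d j ε y‖ ≤ (2 * (1 + 1 / ε ^ 2)) ^ (((d : ℝ) + 1) / 2) * (1 + ‖y‖) ^ (-(d : ℝ)) := by
  unfold qK
  rw [norm_div, Real.norm_of_nonneg (by positivity : 0 ≤ (‖y‖ ^ 2 + ε ^ 2) ^ (((d : ℝ) + 1) / 2)),
    div_eq_mul_inv, ← Real.rpow_neg (by positivity)]
  have h1 := w_low hε (by positivity : 0 ≤ ((d : ℝ) + 1) / 2) y
  have h2 : ‖y j‖ ≤ 1 + ‖y‖ := by linarith [coord_le y j]
  calc ‖y j‖ * (‖y‖ ^ 2 + ε ^ 2) ^ (-(((d : ℝ) + 1) / 2))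
      ≤ (1 + ‖y‖) * ((2 * (1 + 1 / ε ^ 2)) ^ (((d : ℝ) + 1) / 2) * (1 + ‖y‖) ^ (-(2 * (((d : ℝ) + 1) / 2)))) := by
        gcongr
    _ = (2 * (1 + 1 / ε ^ 2)) ^ (((d : ℝ) + 1) / 2) * ((1 + ‖y‖) ^ (1 : ℝ) * (1 + ‖y‖) ^ (-(2 * (((d : ℝ) + 1) / 2)))) := by
        rw [Real.rpow_one]; ring
    _ = _ := by
        rw [← Real.rpow_add (by positivity)]; congr 2; ring

theorem qK_memLp {d : ℕ} (hd : 1 ≤ d) (j : Fin d) {ε : ℝ} (hε : 0 < ε) {q : ℝ} (hq : 1 < q) :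
    MemLp (qK d j ε) (ENNReal.ofReal q) volume := by
  refine memLp_of_decay volume (qK_meas d j ε).aestronglyMeasurable (by linarith) (qK_bound d j hε) ?_
  have : (0 : ℝ) < d := by exact_mod_cast hd
  simp
  nlinarith

theorem conv_int {d : ℕ} {F : Type*} [NormedAddCommGroup F] [NormedSpace ℝ F] {p q : ℝ} (hpq : p.HolderConjugate q)
    {φ : Ed d → ℝ} (hφ : MemLp φ (ENNReal.ofReal q) volume) {h : Ed d → F} (hh : MemLp h (ENNReal.ofReal p) volume)
    (x : Ed d) : Integrable (fun y => φ y • h (x - y)) :=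
  integrable_mul_of_memLp hpq hφ (hh.comp_measurePreserving (Measure.measurePreserving_sub_left volume x))

def shell (d : ℕ) : Set (Ed d) := {v | 1 < ‖v‖ ∧ ‖v‖ < 2}

theorem shell_meas (d : ℕ) : MeasurableSet (shell d) :=
  (measurableSet_lt (f := fun _ : Ed d => (1 : ℝ)) (g := fun v : Ed d => ‖v‖) (by fun_prop) (by fun_prop)).inter
  (measurableSet_lt (g := fun _ : Ed d => (2 : ℝ)) (f := fun v : Ed d => ‖v‖) (by fun_prop) (by fun_prop))

theorem rot_identity {d : ℕ} (hd : 1 ≤ d) (j : Fin d) {ε : ℝ} (hε : 0 < ε) (h : Ed d → ℝ) (hm : Measurable h)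
    (x : Ed d) (hi : Integrable (fun y => qK d j ε y * h (x - y))) :
    ∫ y, qK d j ε y * h (x - y) = ∫ v, (shell d).indicator (fun v => v j / ‖v‖) v *
      ∫ r : ℝ, (r * |r| ^ (d - 1) / (‖v‖ ^ 2 * r ^ 2 + ε ^ 2) ^ (((d : ℝ) + 1) / 2)) * h (x - r • v) := by
  set A : Set (ℝ × Ed d) := {z | 1 < ‖z.1⁻¹ • z.2‖ ∧ ‖z.1⁻¹ • z.2‖ < 2} with hA
  have hAm : MeasurableSet A :=
    (measurableSet_lt (f := fun _ : ℝ × Ed d => (1 : ℝ)) (g := fun z : ℝ × Ed d => ‖z.1⁻¹ • z.2‖) (by fun_prop) (by fun_prop)).inter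
    (measurableSet_lt (g := fun _ : ℝ × Ed d => (2 : ℝ)) (f := fun z : ℝ × Ed d => ‖z.1⁻¹ • z.2‖) (by fun_prop) (by fun_prop))
  let H : ℝ × Ed d → ℝ := A.indicator (fun z => ‖z.2‖⁻¹ * (qK d j ε z.2 * h (x - z.2)))
  have hqm := qK_meas d j ε
  have hHm : Measurable H := Measurable.indicator (by fun_prop) hAm
  have hsec : ∀ y : Ed d, y ≠ 0 → volume {r : ℝ | (r, y) ∈ A} = ENNReal.ofReal ‖y‖ := by
    intro y hy
    have hy0 : 0 < ‖y‖ := norm_pos_iff.2 hy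
    have : {r : ℝ | (r, y) ∈ A} = Ioo (‖y‖ / 2) ‖y‖ ∪ Ioo (-‖y‖) (-(‖y‖ / 2)) := by
      ext r
      simp only [hA, Set.mem_ofPred_eq, norm_smul, norm_inv, Real.norm_eq_abs, mem_union, mem_Ioo]
      rcases lt_trichotomy r 0 with hr | hr | hr
      · rw [abs_of_neg hr, inv_mul_eq_div, one_lt_div (by linarith), div_lt_iff₀ (by linarith)]
        constructor
        · intro h; right; constructor <;> linarith
        · rintro (h | h)
          · exfalso; linarith
          · constructor <;> linarith
      · subst hr
        simp only [abs_zero, inv_zero, zero_mul]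
        constructor
        · intro h; exfalso; linarith [h.1]
        · rintro (h | h) <;> exfalso <;> linarith [h.1, h.2]
      · rw [abs_of_pos hr, inv_mul_eq_div, one_lt_div (by linarith), div_lt_iff₀ (by linarith)]
        constructor
        · intro h; left; constructor <;> linarith
        · rintro (h | h)
          · constructor <;> linarith
          · exfalso; linarith
    rw [this, measure_union ?_ measurableSet_Ioo, Real.volume_Ioo, Real.volume_Ioo, ← ENNReal.ofReal_add (by linarith) (by linarith)]
    · congr 1; ring
    · rw [Set.disjoint_left]
      intro r h1 h2
      linarith [h1.1, h2.2]
  have hsecm : ∀ y, MeasurableSet {r : ℝ | (r, y) ∈ A} := fun y => hAm.preimage (by fun_prop : Measurable fun r : ℝ => (r, y))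
  have hHsec : ∀ y, (fun r => H (r, y)) = indicator {r : ℝ | (r, y) ∈ A} (fun _ => ‖y‖⁻¹ * (qK d j ε y * h (x - y))) := by
    intro y; ext r; rfl
  have hne : ∀ᵐ y : Ed d, y ≠ 0 := by
    have : Nonempty (Fin d) := ⟨j⟩
    simp [ae_iff]
  have hHint : ∀ᵐ y : Ed d, ∫ r, H (r, y) = qK d j ε y * h (x - y) := by
    filter_upwards [hne] with y hy
    rw [hHsec, integral_indicator_const _ (hsecm y), Measure.real, hsec y hy, ENNReal.toReal_ofReal (norm_nonneg _), smul_eq_mul,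
      mul_inv_cancel_left₀ (norm_ne_zero_iff.2 hy)]
  have hHI : Integrable H (volume.prod volume) := by
    rw [integrable_prod_iff' hHm.aestronglyMeasurable]
    constructor
    · filter_upwards [hne] with y hy
      rw [hHsec]
      apply IntegrableOn.integrable_indicator _ (hsecm y)
      apply integrableOn_const
      · rw [hsec y hy]; simp
      · exact enorm_ne_top
    · refine hi.norm.congr ?_
      filter_upwards [hne] with y hy
      have : (fun r => ‖H (r, y)‖) = indicator {r : ℝ | (r, y) ∈ A} (fun _ => ‖‖y‖⁻¹ * (qK d j ε y * h (x - y))‖) := by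
        ext r
        have := congrFun (hHsec y) r
        rw [this, norm_indicator_eq_indicator_norm]
      rw [this, integral_indicator_const _ (hsecm y), Measure.real, hsec y hy, ENNReal.toReal_ofReal (norm_nonneg _), smul_eq_mul,
        norm_mul (‖y‖⁻¹), norm_inv, norm_norm, mul_inv_cancel_left₀ (norm_ne_zero_iff.2 hy)]
  let F : ℝ × Ed d → ℝ := fun z => (shell d).indicator (fun v => v j / ‖v‖) z.2 *
      ((z.1 * |z.1| ^ (d - 1) / (‖z.2‖ ^ 2 * z.1 ^ 2 + ε ^ 2) ^ (((d : ℝ) + 1) / 2)) * h (x - z.1 • z.2))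
  have hsm : Measurable ((shell d).indicator (fun v : Ed d => v j / ‖v‖)) :=
    Measurable.indicator (by fun_prop) (shell_meas d)
  have hFm : Measurable F := by fun_prop
  have hFH : ∀ r : ℝ, r ≠ 0 → ∀ v, F (r, v) = |r| ^ d * H (r, r • v) := by
    intro r hr v
    simp only [F, H]
    have hr0 : 0 < |r| := abs_pos.2 hr
    by_cases hv : v ∈ shell d
    · have hA' : (r, r • v) ∈ A := by
        simp only [hA, Set.mem_ofPred_eq, smul_smul, inv_mul_cancel₀ hr, one_smul]; exact hv
      rw [indicator_of_mem hv, indicator_of_mem hA']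
      have hv0 : ‖v‖ ≠ 0 := by have := hv.1; linarith
      simp only [qK, norm_smul, Real.norm_eq_abs, PiLp.smul_apply, smul_eq_mul]
      rw [mul_pow, sq_abs, mul_comm (r ^ 2)]
      obtain ⟨n, rfl⟩ : ∃ n, d = n + 1 := ⟨d - 1, by omega⟩
      simp only [Nat.add_sub_cancel, mul_inv]
      have : |r| ^ (n + 1) * |r|⁻¹ = |r| ^ n := by rw [pow_succ]; field_simp
      rw [← this]
      ring
    · have hA' : (r, r • v) ∉ A := by
        simp only [hA, Set.mem_ofPred_eq, smul_smul, inv_mul_cancel₀ hr, one_smul]; exact hv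
      rw [indicator_of_notMem hv, indicator_of_notMem hA']; simp
  have hrne : ∀ᵐ r : ℝ, r ≠ 0 := by simp [ae_iff]
  have hfr : Module.finrank ℝ (Ed d) = d := by simp
  have hscale : ∀ (G : Ed d → ℝ) (r : ℝ), r ≠ 0 → ∫ v, |r| ^ d * G (r • v) = ∫ y, G y := by
    intro G r hr
    have hr0 : 0 < |r| := abs_pos.2 hr
    rw [integral_const_mul, Measure.integral_comp_smul, hfr, abs_inv, abs_pow, smul_eq_mul, mul_inv_cancel_left₀ (by positivity)]
  have hFI : Integrable F (volume.prod volume) := by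
    rw [integrable_prod_iff hFm.aestronglyMeasurable]
    have := (integrable_prod_iff hHm.aestronglyMeasurable).1 hHI
    constructor
    · filter_upwards [hrne, this.1] with r hr h1
      simp only [hFH r hr]
      exact ((integrable_comp_smul_iff volume (fun y => H (r, y)) hr).2 h1).const_mul _
    · refine this.2.congr ?_
      filter_upwards [hrne] with r hr
      simp only [hFH r hr, norm_mul, norm_pow, Real.norm_eq_abs, abs_abs]
      rw [hscale (fun y => |H (r, y)|) r hr]
  calc ∫ y, qK d j ε y * h (x - y) = ∫ y, ∫ r, H (r, y) := (integral_congr_ae hHint).symm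
    _ = ∫ r, ∫ y, H (r, y) := (integral_integral_swap (f := fun r y => H (r, y)) hHI).symm
    _ = ∫ r, ∫ v, F (r, v) := by
        apply integral_congr_ae
        filter_upwards [hrne] with r hr
        simp only [hFH r hr]
        rw [hscale (fun y => H (r, y)) r hr]
    _ = ∫ v, ∫ r, F (r, v) := integral_integral_swap (f := fun r y => F (r, y)) hFI
    _ = _ := by
        congr 1; ext v
        simp only [F]
        rw [integral_const_mul]

theorem qK_lp {p : ℝ} (hp : 1 < p) {d : ℕ} (hd : 1 ≤ d) : ∃ C : ℝ≥0∞, C ≠ ∞ ∧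
    ∀ ε > 0, ∀ (j : Fin d) (h : Ed d → ℝ), Measurable h → MemLp h (ENNReal.ofReal p) volume →
      ∫⁻ x, ‖∫ y, qK d j ε y * h (x - y)‖ₑ ^ p ≤ C * ∫⁻ x, ‖h x‖ₑ ^ p := by
  obtain ⟨C, hC, hT⟩ := kD_lp hp hd
  have hp0 : 0 < p := by linarith
  have hV : volume (shell d) ≠ ∞ := by
    refine ne_top_of_le_ne_top (b := volume (Metric.ball (0 : Ed d) 2)) measure_ball_lt_top.ne (measure_mono ?_)
    intro v hv; simpa using hv.2
  set V := volume (shell d)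
  refine ⟨V ^ (p - 1) * (C * V), ?_, fun ε hε j h hm hL => ?_⟩
  · exact ENNReal.mul_ne_top (ENNReal.rpow_ne_top_of_nonneg (by linarith) hV) (ENNReal.mul_ne_top hC hV)
  have hpq := Real.HolderConjugate.conjExponent hp
  have hi : ∀ x, Integrable (fun y => qK d j ε y * h (x - y)) := fun x => conv_int hpq (qK_memLp hd j hε hpq.symm.lt) hL x
  set T : Ed d → Ed d → ℝ := fun v x =>
    ∫ r : ℝ, (r * |r| ^ (d - 1) / (‖v‖ ^ 2 * r ^ 2 + ε ^ 2) ^ (((d : ℝ) + 1) / 2)) * h (x - r • v) with hTd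
  have hTm : Measurable (Function.uncurry T) := by
    refine StronglyMeasurable.measurable ?_
    apply StronglyMeasurable.integral_prod_right (f := fun (z : Ed d × Ed d) (r : ℝ) =>
      (r * |r| ^ (d - 1) / (‖z.1‖ ^ 2 * r ^ 2 + ε ^ 2) ^ (((d : ℝ) + 1) / 2)) * h (z.2 - r • z.1))
    apply Measurable.stronglyMeasurable
    unfold Function.uncurry
    fun_prop
  have hTv : ∀ v ∈ shell d, ∫⁻ x, ‖T v x‖ₑ ^ p ≤ C * ∫⁻ x, ‖h x‖ₑ ^ p := by
    intro v hv
    have hv1 : 1 < ‖v‖ := hv.1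
    have hv0 : v ≠ 0 := by rintro rfl; simp at hv1; linarith
    have hb := lines_bound (kD_meas d (ε / ‖v‖)) (hT (ε / ‖v‖) (by positivity)) hv0 h hm
    refine le_trans (lintegral_mono fun x => ?_) hb
    simp only [hTd]
    gcongr
    simp only [kD_scale hε (by positivity : 0 < ‖v‖), mul_assoc]
    rw [integral_const_mul, enorm_mul]
    refine mul_le_of_le_one_left (by positivity) ?_
    rw [← ofReal_norm, Real.norm_of_nonneg (by positivity)]
    rw [ENNReal.ofReal_le_one]
    exact inv_le_one_of_one_le₀ (one_le_pow₀ hv1.le)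
  have hrot : ∀ x, ∫ y, qK d j ε y * h (x - y) = ∫ v, (shell d).indicator (fun v => v j / ‖v‖) v * T v x :=
    fun x => rot_identity hd j hε h hm x (hi x)
  clear_value T
  have hpt : ∀ x, ‖∫ y, qK d j ε y * h (x - y)‖ₑ ^ p ≤ V ^ (p - 1) * ∫⁻ v in shell d, ‖T v x‖ₑ ^ p := by
    intro x
    rw [hrot x]
    have hTx : Measurable fun v => T v x := hTm.of_uncurry_right
    have hJ := jensen_lint (volume.restrict (shell d)) (fun _ => 1) (fun v => ‖T v x‖ₑ) aemeasurable_const (hTx.enorm.aemeasurable) hp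
    simp only [one_mul, lintegral_const, Measure.restrict_apply_univ] at hJ
    refine le_trans ?_ hJ
    gcongr
    refine (enorm_integral_le_lintegral_enorm _).trans ?_
    rw [← lintegral_indicator (shell_meas d)]
    apply lintegral_mono
    intro v
    simp only
    by_cases hv : v ∈ shell d
    · rw [indicator_of_mem hv, indicator_of_mem hv, enorm_mul]
      refine mul_le_of_le_one_left zero_le ?_
      rw [← ofReal_norm, ENNReal.ofReal_le_one, norm_div, norm_norm]
      exact div_le_one_of_le₀ (coord_le v j) (norm_nonneg _)
    · rw [indicator_of_notMem hv, indicator_of_notMem hv]; simp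
  have hTpm : Measurable (Function.uncurry fun x v => ‖T v x‖ₑ ^ p) := by
    have : Measurable fun z : Ed d × Ed d => T z.2 z.1 := hTm.comp measurable_swap
    exact this.enorm.pow_const p
  calc _ ≤ ∫⁻ x, V ^ (p - 1) * ∫⁻ v in shell d, ‖T v x‖ₑ ^ p := lintegral_mono hpt
    _ = V ^ (p - 1) * ∫⁻ x, ∫⁻ v in shell d, ‖T v x‖ₑ ^ p := by
        rw [lintegral_const_mul _ hTpm.lintegral_prod_right]
    _ = V ^ (p - 1) * ∫⁻ v in shell d, ∫⁻ x, ‖T v x‖ₑ ^ p := by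
        rw [lintegral_lintegral_swap hTpm.aemeasurable]
    _ ≤ V ^ (p - 1) * ∫⁻ v in shell d, C * ∫⁻ x, ‖h x‖ₑ ^ p := by
        exact mul_le_mul_right (setLIntegral_mono' (shell_meas d) hTv) _
    _ = _ := by
        rw [setLIntegral_const]; ring

def Werf (x : ℝ) : ℝ := ∫ w in (0:ℝ)..x, Real.exp (-1 * w ^ 2)

theorem Werf_deriv (x : ℝ) : HasDerivAt Werf (Real.exp (-1 * x ^ 2)) x := by
  have hc : Continuous fun w : ℝ => Real.exp (-1 * w ^ 2) := by fun_prop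
  exact intervalIntegral.integral_hasDerivAt_right (hc.intervalIntegrable _ _)
    (hc.stronglyMeasurableAtFilter _ _) hc.continuousAt

theorem Werf_top : Tendsto Werf atTop (𝓝 (√Real.pi / 2)) := by
  have h := intervalIntegral_tendsto_integral_Ioi (μ := volume) 0 (integrable_exp_neg_mul_sq one_pos).integrableOn tendsto_id
  rw [integral_gaussian_Ioi, div_one] at h
  exact h

theorem Werf_bot : Tendsto Werf atBot (𝓝 (-(√Real.pi / 2))) := by
  have h : ∀ x, Werf x = - Werf (-x) := by
    intro x
    unfold Werf
    have := intervalIntegral.integral_comp_neg (a := 0) (b := x) (fun w : ℝ => Real.exp (-1 * w ^ 2))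
    simp only [neg_sq, neg_zero] at this
    rw [this, intervalIntegral.integral_symm]
  rw [show Werf = fun x => - Werf (-x) from funext h]
  exact (Werf_top.comp tendsto_neg_atBot_atTop).neg

theorem sub_int {t b : ℝ} (ht : 0 < t) (hb : 0 ≤ b) :
    ∫ l in Ioi (0:ℝ), l ^ (-(1/2) : ℝ) * Real.exp (-(l * t ^ 2 + b ^ 2 / (4 * l))) =
      √Real.pi / t * Real.exp (-(t * b)) := by
  rcases hb.eq_or_lt with rfl | hb
  · have h := Real.integral_rpow_mul_exp_neg_mul_Ioi (a := 1/2) (r := t ^ 2) (by norm_num) (by positivity)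
    rw [Real.Gamma_one_half_eq, ← Real.sqrt_eq_rpow, Real.sqrt_div' _ (by positivity), Real.sqrt_one, Real.sqrt_sq ht.le] at h
    have e : √Real.pi / t * Real.exp (-(t * 0)) = 1 / t * √Real.pi := by simp; ring
    rw [e, ← h]
    congr 1; ext l
    congr 2
    · norm_num
    · ring
  set f : ℝ → ℝ := fun l => Real.exp (-(t * b)) * Werf (t * √l - b / (2 * √l)) +
    Real.exp (t * b) * Werf (t * √l + b / (2 * √l)) with hf
  set f' : ℝ → ℝ := fun l => t * (l ^ (-(1/2) : ℝ) * Real.exp (-(l * t ^ 2 + b ^ 2 / (4 * l)))) with hf'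
  set L := Real.exp (-(t * b)) * (-(√Real.pi / 2)) + Real.exp (t * b) * (√Real.pi / 2) with hL
  have hs0 : Tendsto (fun l : ℝ => √l) (𝓝[>] 0) (𝓝[>] 0) := by
    rw [tendsto_nhdsWithin_iff]
    constructor
    · have := (Real.continuous_sqrt.tendsto 0).mono_left (nhdsWithin_le_nhds (s := Ioi 0))
      simpa using this
    · filter_upwards [self_mem_nhdsWithin] with l hl
      exact Real.sqrt_pos.2 hl
  have hinv : Tendsto (fun v : ℝ => b / (2 * v)) (𝓝[>] 0) atTop := by
    have := tendsto_inv_nhdsGT_zero (𝕜 := ℝ)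
    have h2 := this.const_mul_atTop (by positivity : 0 < b / 2)
    refine h2.congr fun v => ?_
    field_simp
  have htv : Tendsto (fun v : ℝ => t * v) (𝓝[>] 0) (𝓝 0) := by
    have : Tendsto (fun v : ℝ => t * v) (𝓝 0) (𝓝 (t * 0)) := (continuous_const.mul continuous_id).tendsto 0
    rw [mul_zero] at this
    exact this.mono_left nhdsWithin_le_nhds
  have lim0 : Tendsto f (𝓝[>] 0) (𝓝 L) := by
    have a1 : Tendsto (fun v : ℝ => t * v - b / (2 * v)) (𝓝[>] 0) atBot := by
      simp only [sub_eq_add_neg]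
      exact htv.add_atBot (tendsto_neg_atTop_atBot.comp hinv)
    have a2 : Tendsto (fun v : ℝ => t * v + b / (2 * v)) (𝓝[>] 0) atTop := htv.add_atTop hinv
    exact (((Werf_bot.comp a1).comp hs0).const_mul _).add (((Werf_top.comp a2).comp hs0).const_mul _)
  have limtop : Tendsto f atTop (𝓝 (Real.exp (-(t * b)) * (√Real.pi / 2) + Real.exp (t * b) * (√Real.pi / 2))) := by
    have i : Tendsto (fun v : ℝ => b / (2 * v)) atTop (𝓝 0) := by
      apply Tendsto.const_div_atTop
      exact tendsto_id.const_mul_atTop two_pos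
    have j : Tendsto (fun v : ℝ => t * v) atTop atTop := tendsto_id.const_mul_atTop ht
    have a1 : Tendsto (fun v : ℝ => t * v - b / (2 * v)) atTop atTop := by
      simp only [sub_eq_add_neg]
      exact j.atTop_add i.neg
    have a2 : Tendsto (fun v : ℝ => t * v + b / (2 * v)) atTop atTop := j.atTop_add i
    exact (((Werf_top.comp a1).comp Real.tendsto_sqrt_atTop).const_mul _).add (((Werf_top.comp a2).comp Real.tendsto_sqrt_atTop).const_mul _)
  have hder : ∀ l > 0, HasDerivAt f (f' l) l := by
    intro l hl
    have hv : 0 < √l := Real.sqrt_pos.2 hl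
    have hsq := Real.hasDerivAt_sqrt hl.ne'
    have h1 : HasDerivAt (fun l => t * √l) (t * (1 / (2 * √l))) l := hsq.const_mul t
    have h2 : HasDerivAt (fun l => b / (2 * √l)) (-(b * (2 * (1 / (2 * √l)))) / (2 * √l) ^ 2) l := by
      have := (hasDerivAt_const l b).div (hsq.const_mul 2) (by positivity)
      refine this.congr_deriv ?_
      ring
    have h3 := ((Werf_deriv _).comp l (h1.sub h2)).const_mul (Real.exp (-(t * b)))
    have h4 := ((Werf_deriv _).comp l (h1.add h2)).const_mul (Real.exp (t * b))
    refine (h3.add h4).congr_deriv ?_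
    symm
    show t * (l ^ (-(1/2) : ℝ) * Real.exp (-(l * t ^ 2 + b ^ 2 / (4 * l)))) = Real.exp (-(t * b)) * (Real.exp (-1 * (t * √l - b / (2 * √l)) ^ 2) * _) + Real.exp (t * b) * (Real.exp (-1 * (t * √l + b / (2 * √l)) ^ 2) * _)
    have hl2 : l = √l ^ 2 := (Real.sq_sqrt hl.le).symm
    have hp : l ^ (-(1/2) : ℝ) = (√l)⁻¹ := by rw [Real.rpow_neg hl.le, Real.sqrt_eq_rpow]
    rw [hp]
    set v := √l
    have e1 : Real.exp (-(t * b)) * (Real.exp (-1 * (t * v - b / (2 * v)) ^ 2)) = Real.exp (-(l * t ^ 2 + b ^ 2 / (4 * l))) := by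
      rw [← Real.exp_add]; congr 1; rw [hl2]; field_simp; ring
    have e2 : Real.exp (t * b) * (Real.exp (-1 * (t * v + b / (2 * v)) ^ 2)) = Real.exp (-(l * t ^ 2 + b ^ 2 / (4 * l))) := by
      rw [← Real.exp_add]; congr 1; rw [hl2]; field_simp; ring
    rw [← mul_assoc (Real.exp (-(t * b))), ← mul_assoc (Real.exp (t * b)), e1, e2]
    generalize Real.exp (-(l * t ^ 2 + b ^ 2 / (4 * l))) = X
    field_simp
    ring
  have hIntg : IntegrableOn f' (Ioi 0) := by
    have h1 := integrableOn_rpow_mul_exp_neg_mul_rpow (p := 1) (s := -(1/2)) (b := t ^ 2) (by norm_num) one_pos (by positivity)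
    refine (h1.const_mul t).mono' (Measurable.aestronglyMeasurable (by fun_prop)) ?_
    filter_upwards [ae_restrict_mem measurableSet_Ioi] with l hl
    have hl : 0 < l := hl
    rw [Real.norm_of_nonneg (by positivity)]
    simp only [hf', Real.rpow_one]
    gcongr
    have : 0 ≤ b ^ 2 / (4 * l) := by positivity
    nlinarith
  have key := integral_Ioi_of_hasDerivAt_of_tendsto (f := Function.update f 0 L) (f' := f') (a := 0)
    (by rw [continuousWithinAt_update_same]
        refine lim0.mono_left (nhdsWithin_mono _ ?_)
        intro x hx
        exact lt_of_le_of_ne hx.1 (Ne.symm hx.2))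
    (fun x hx => by
      refine (hder x hx).congr_of_eventuallyEq ?_
      filter_upwards [lt_mem_nhds hx] with y hy
      rw [Function.update_of_ne (ne_of_gt hy)])
    hIntg
    (limtop.congr' (by
      filter_upwards [eventually_gt_atTop 0] with y hy
      rw [Function.update_of_ne (ne_of_gt hy)]))
  simp only [hf', Function.update_self, hL] at key
  rw [integral_const_mul] at key
  rw [div_mul_eq_mul_div, eq_div_iff ht.ne', mul_comm, key]
  ring

def Kp (d : ℕ) (t : ℝ) (y : Ed d) : ℝ := t / (‖y‖ ^ 2 + t ^ 2) ^ (((d : ℝ) + 1) / 2)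

theorem Kp_meas (d : ℕ) (t : ℝ) : Measurable (Kp d t) := by unfold Kp; fun_prop

theorem Kp_pos (d : ℕ) {t : ℝ} (ht : 0 < t) (y : Ed d) : 0 < Kp d t y := by unfold Kp; positivity

theorem Kp_bound (d : ℕ) {t : ℝ} (ht : 0 < t) (y : Ed d) :
    ‖Kp d t y‖ ≤ t * (2 * (1 + 1 / t ^ 2)) ^ (((d : ℝ) + 1) / 2) * (1 + ‖y‖) ^ (-((d : ℝ) + 1)) := by
  rw [Real.norm_of_nonneg (Kp_pos d ht y).le]
  unfold Kp
  rw [div_eq_mul_inv, ← Real.rpow_neg (by positivity), mul_assoc]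
  have h1 := w_low ht (by positivity : 0 ≤ ((d : ℝ) + 1) / 2) y
  rw [show 2 * (((d : ℝ) + 1) / 2) = (d : ℝ) + 1 by ring] at h1
  gcongr

theorem Kp_memLp {d : ℕ} {t : ℝ} (ht : 0 < t) {q : ℝ} (hq : 1 ≤ q) :
    MemLp (Kp d t) (ENNReal.ofReal q) volume := by
  refine memLp_of_decay volume (Kp_meas d t).aestronglyMeasurable (by linarith) (Kp_bound d ht) ?_
  have : (0 : ℝ) ≤ d := by positivity
  simp
  nlinarith

theorem Kp_int {d : ℕ} {t : ℝ} (ht : 0 < t) : Integrable (Kp d t) volume := by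
  have := Kp_memLp (d := d) ht le_rfl
  simpa [memLp_one_iff_integrable] using this

def AK (d : ℕ) : ℝ := Real.pi ^ (((d : ℝ) + 1) / 2) / Real.Gamma (((d : ℝ) + 1) / 2)

theorem AK_pos (d : ℕ) : 0 < AK d := by
  unfold AK
  have := Real.Gamma_pos_of_pos (by positivity : 0 < ((d : ℝ) + 1) / 2)
  positivity

theorem Kp_fourier {d : ℕ} {t : ℝ} (ht : 0 < t) (ξ : Ed d) :
    ∫ y, (Kp d t y : ℂ) * Complex.exp (inner ℝ y ξ * Complex.I) = ((AK d * Real.exp (-(t * ‖ξ‖)) : ℝ) : ℂ) := by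
  set a : ℝ := ((d : ℝ) + 1) / 2 with ha
  have ha0 : 0 < a := by positivity
  have hΓ := Real.Gamma_pos_of_pos ha0
  let Φ : Ed d × ℝ → ℂ := fun z => ((z.2 ^ (a - 1) * Real.exp (-((‖z.1‖ ^ 2 + t ^ 2) * z.2)) : ℝ) : ℂ) *
    Complex.exp (inner ℝ z.1 ξ * Complex.I)
  have hΦm : Measurable Φ := by fun_prop
  have hw : ∀ y : Ed d, 0 < ‖y‖ ^ 2 + t ^ 2 := fun y => by positivity
  have hG : ∀ y : Ed d, ∫ l in Ioi (0:ℝ), l ^ (a - 1) * Real.exp (-((‖y‖ ^ 2 + t ^ 2) * l)) = Real.Gamma a / t * Kp d t y := by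
    intro y
    rw [Real.integral_rpow_mul_exp_neg_mul_Ioi ha0 (hw y)]
    unfold Kp
    rw [← ha, one_div, Real.inv_rpow (hw y).le]
    field_simp
  have hnorm : ∀ y : Ed d, ∀ l ∈ Ioi (0:ℝ), ‖Φ (y, l)‖ = l ^ (a - 1) * Real.exp (-((‖y‖ ^ 2 + t ^ 2) * l)) := by
    intro y l hl
    have hl : 0 < l := hl
    simp only [Φ, norm_mul, Complex.norm_exp_ofReal_mul_I, mul_one]
    rw [Complex.norm_real, Real.norm_of_nonneg (by positivity)]
  have hΦI : Integrable Φ (volume.prod (volume.restrict (Ioi 0))) := by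
    rw [integrable_prod_iff hΦm.aestronglyMeasurable]
    constructor
    · refine Eventually.of_forall fun y => ?_
      have h1 := integrableOn_rpow_mul_exp_neg_mul_rpow (p := 1) (s := a - 1) (b := ‖y‖ ^ 2 + t ^ 2) (by linarith) one_pos (hw y)
      refine h1.mono' (Measurable.aestronglyMeasurable (by fun_prop)) ?_
      filter_upwards [ae_restrict_mem measurableSet_Ioi] with l hl
      rw [hnorm y l hl, Real.rpow_one, neg_mul]
    · have : ∀ y : Ed d, ∫ l in Ioi (0:ℝ), ‖Φ (y, l)‖ = Real.Gamma a / t * Kp d t y := by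
        intro y
        rw [← hG y]
        exact setIntegral_congr_fun measurableSet_Ioi (hnorm y)
      simp only [this]
      exact (Kp_int ht).const_mul _
  have h1 : ∀ y : Ed d, ∫ l in Ioi (0:ℝ), Φ (y, l) = (Real.Gamma a / t : ℝ) * ((Kp d t y : ℂ) * Complex.exp (inner ℝ y ξ * Complex.I)) := by
    intro y
    simp only [Φ]
    rw [integral_mul_const, integral_complex_ofReal, hG y]
    push_cast; ring
  have h2 : ∀ l ∈ Ioi (0:ℝ), ∫ y, Φ (y, l) = ((Real.pi ^ ((d : ℝ) / 2) *
      (l ^ (-(1/2) : ℝ) * Real.exp (-(l * t ^ 2 + ‖ξ‖ ^ 2 / (4 * l)))) : ℝ) : ℂ) := by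
    intro l hl
    have hl : 0 < l := hl
    have hg := GaussianFourier.integral_cexp_neg_mul_sq_norm_add (V := Ed d) (b := l) (by simpa using hl) Complex.I ξ
    have e : ∀ y : Ed d, Φ (y, l) = ((l ^ (a - 1) * Real.exp (-(l * t ^ 2)) : ℝ) : ℂ) *
        Complex.exp (-l * ‖y‖ ^ 2 + Complex.I * inner ℝ ξ y) := by
      intro y
      simp only [Φ]
      rw [show -((‖y‖ ^ 2 + t ^ 2) * l) = -(l * t ^ 2) + (-l * ‖y‖ ^ 2) by ring, Real.exp_add, Complex.exp_add,
        real_inner_comm y ξ]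
      push_cast
      rw [mul_comm Complex.I]
      ring
    simp only [e]
    rw [integral_const_mul, hg]
    have e2 : ((Real.pi : ℂ) / l) ^ ((Module.finrank ℝ (Ed d) : ℂ) / 2) = (((Real.pi / l) ^ ((d : ℝ) / 2) : ℝ) : ℂ) := by
      rw [Complex.ofReal_cpow (by positivity)]
      simp
    have e3 : Complex.exp (Complex.I ^ 2 * (‖ξ‖ : ℂ) ^ 2 / (4 * l)) = ((Real.exp (-(‖ξ‖ ^ 2 / (4 * l))) : ℝ) : ℂ) := by
      push_cast; rw [Complex.I_sq]; congr 1; ring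
    rw [e2, e3, ← Complex.ofReal_mul, ← Complex.ofReal_mul]
    congr 1
    rw [Real.div_rpow (by positivity) hl.le, neg_add, Real.exp_add]
    have : l ^ (a - 1) / l ^ ((d : ℝ) / 2) = l ^ (-(1/2) : ℝ) := by
      rw [← Real.rpow_sub hl]; congr 1; rw [ha]; ring
    rw [← this]
    ring
  have key : (Real.Gamma a / t : ℝ) * ∫ y, ((Kp d t y : ℂ) * Complex.exp (inner ℝ y ξ * Complex.I)) =
      ((Real.pi ^ ((d : ℝ) / 2) * (√Real.pi / t * Real.exp (-(t * ‖ξ‖))) : ℝ) : ℂ) := by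
    rw [← integral_const_mul]
    simp only [← h1]
    rw [integral_integral_swap (f := fun y l => Φ (y, l)) hΦI, setIntegral_congr_fun measurableSet_Ioi h2,
      integral_complex_ofReal, integral_const_mul, sub_int ht (norm_nonneg ξ)]
  have hc : ((Real.Gamma a / t : ℝ) : ℂ) ≠ 0 := by
    rw [Complex.ofReal_ne_zero]; positivity
  apply mul_left_cancel₀ hc
  rw [key, ← Complex.ofReal_mul]
  congr 1
  unfold AK
  rw [← ha]
  have : Real.pi ^ a = Real.pi ^ ((d : ℝ) / 2) * √Real.pi := by
    rw [Real.sqrt_eq_rpow, ← Real.rpow_add Real.pi_pos]; congr 1; rw [ha]; ring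
  rw [this]
  field_simp

theorem Kp_cont (d : ℕ) {t : ℝ} (ht : 0 < t) : Continuous (Kp d t) := by
  unfold Kp
  refine continuous_const.div ?_ (fun y => by positivity)
  exact (by fun_prop : Continuous fun y : Ed d => ‖y‖ ^ 2 + t ^ 2).rpow_const (fun y => Or.inl (by positivity))

theorem Kp_le (d : ℕ) {t : ℝ} (ht : 0 < t) (y : Ed d) : Kp d t y ≤ t / (t ^ 2) ^ (((d : ℝ) + 1) / 2) := by
  unfold Kp
  have : (t ^ 2) ^ (((d : ℝ) + 1) / 2) ≤ (‖y‖ ^ 2 + t ^ 2) ^ (((d : ℝ) + 1) / 2) := by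
    apply Real.rpow_le_rpow (by positivity) _ (by positivity)
    nlinarith [sq_nonneg ‖y‖]
  gcongr

def muK (d : ℕ) (t : ℝ) : Measure (Ed d) := volume.withDensity (fun y => ENNReal.ofReal (Kp d t y))

theorem muK_fin (d : ℕ) {t : ℝ} (ht : 0 < t) : IsFiniteMeasure (muK d t) :=
  isFiniteMeasure_withDensity_ofReal (Kp_int ht).2

theorem muK_charFun {d : ℕ} {t : ℝ} (ht : 0 < t) (ξ : Ed d) :
    charFun (muK d t) ξ = ((AK d * Real.exp (-(t * ‖ξ‖)) : ℝ) : ℂ) := by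
  rw [charFun_apply, muK, integral_withDensity_eq_integral_toReal_smul (Kp_meas d t).ennreal_ofReal
    (Eventually.of_forall fun _ => ENNReal.ofReal_lt_top), ← Kp_fourier ht ξ]
  refine integral_congr_ae (Eventually.of_forall fun y => ?_)
  simp only
  rw [ENNReal.toReal_ofReal (Kp_pos d ht y).le, Complex.real_smul]

theorem muK_conv {d : ℕ} {s t : ℝ} (hs : 0 < s) (ht : 0 < t) :
    muK d s ∗ muK d t = ENNReal.ofReal (AK d) • muK d (s + t) := by
  have := muK_fin d hs
  have := muK_fin d ht
  have := muK_fin d (add_pos hs ht)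
  have : IsFiniteMeasure (ENNReal.ofReal (AK d) • muK d (s + t)) := Measure.smul_finite _ ENNReal.ofReal_ne_top
  apply Measure.ext_of_charFun
  ext ξ
  rw [charFun_conv, muK_charFun hs, muK_charFun ht, charFun_apply, integral_smul_measure, ← charFun_apply,
    muK_charFun (add_pos hs ht), ENNReal.toReal_ofReal (AK_pos d).le, Complex.real_smul,
    ← Complex.ofReal_mul, ← Complex.ofReal_mul, add_mul, neg_add, Real.exp_add]
  congr 1
  ring

theorem Kp_mul_int {d : ℕ} {s t : ℝ} (hs : 0 < s) (ht : 0 < t) (x : Ed d) :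
    Integrable (fun y => Kp d s y * Kp d t (x - y)) volume := by
  refine ((Kp_int hs).mul_const (t / (t ^ 2) ^ (((d : ℝ) + 1) / 2))).mono'
    (((Kp_meas d s).mul ((Kp_meas d t).comp (by fun_prop))).aestronglyMeasurable) (Eventually.of_forall fun y => ?_)
  have h1 := Kp_pos d hs y
  have h2 := Kp_pos d ht (x - y)
  rw [Real.norm_of_nonneg (by positivity)]
  have := Kp_le d ht (x - y)
  gcongr

theorem Kp_semigroup {d : ℕ} {s t : ℝ} (hs : 0 < s) (ht : 0 < t) (x : Ed d) :
    ∫ y, Kp d s y * Kp d t (x - y) = AK d * Kp d (s + t) x := by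
  have h := muK_conv (d := d) hs ht
  unfold muK at h
  rw [conv_withDensity_eq_lconvolution (Kp_meas d s).ennreal_ofReal (Kp_meas d t).ennreal_ofReal,
    ← withDensity_smul _ (Kp_meas d _).ennreal_ofReal,
    withDensity_eq_iff_of_sigmaFinite (by
      exact (measurable_lconvolution _ (Kp_meas d s).ennreal_ofReal (Kp_meas d t).ennreal_ofReal).aemeasurable)
      ((Kp_meas d _).ennreal_ofReal.const_smul _).aemeasurable] at h
  have hc : Continuous (fun x => ∫ y, Kp d s y * Kp d t (x - y)) := by
    refine continuous_of_dominated (bound := fun y => Kp d s y * (t / (t ^ 2) ^ (((d : ℝ) + 1) / 2)))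
      (fun x => (Kp_mul_int hs ht x).1) (fun x => Eventually.of_forall fun y => ?_) ((Kp_int hs).mul_const _)
      (Eventually.of_forall fun y => ?_)
    · have h1 := Kp_pos d hs y
      have h2 := Kp_pos d ht (x - y)
      rw [Real.norm_of_nonneg (by positivity)]
      have := Kp_le d ht (x - y)
      gcongr
    · exact continuous_const.mul ((Kp_cont d ht).comp (by fun_prop))
  have key : (fun x => ∫ y, Kp d s y * Kp d t (x - y)) = fun x => AK d * Kp d (s + t) x := by
    apply Measure.eq_of_ae_eq (μ := volume) _ hc (continuous_const.mul (Kp_cont d (add_pos hs ht)))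
    filter_upwards [h] with x hx
    rw [lconvolution_def] at hx
    have e : ∫⁻ y, ENNReal.ofReal (Kp d s y) * ENNReal.ofReal (Kp d t (-y + x)) =
        ENNReal.ofReal (∫ y, Kp d s y * Kp d t (x - y)) := by
      rw [ofReal_integral_eq_lintegral_ofReal (Kp_mul_int hs ht x)
        (Eventually.of_forall fun y => (mul_pos (Kp_pos d hs y) (Kp_pos d ht _)).le)]
      refine lintegral_congr fun y => ?_
      rw [ENNReal.ofReal_mul (Kp_pos d hs y).le, neg_add_eq_sub]
    rw [e, Pi.smul_apply, smul_eq_mul, ← ENNReal.ofReal_mul (AK_pos d).le] at hx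
    rwa [ENNReal.ofReal_eq_ofReal_iff (integral_nonneg fun y => (mul_pos (Kp_pos d hs y) (Kp_pos d ht _)).le)
      (mul_pos (AK_pos d) (Kp_pos d (add_pos hs ht) x)).le] at hx
  exact congrFun key x

def wa (d : ℕ) (t : ℝ) (y : Ed d) : ℝ := (‖y‖ ^ 2 + t ^ 2) ^ (-(((d : ℝ) + 1) / 2))
def wb (d : ℕ) (t : ℝ) (y : Ed d) : ℝ := (‖y‖ ^ 2 + t ^ 2) ^ (-(((d : ℝ) + 1) / 2) - 1)

theorem wa_meas (d : ℕ) (t : ℝ) : Measurable (wa d t) := by unfold wa; fun_prop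
theorem wb_meas (d : ℕ) (t : ℝ) : Measurable (wb d t) := by unfold wb; fun_prop

theorem wa_pos {d : ℕ} {t : ℝ} (ht : 0 < t) (y : Ed d) : 0 < wa d t y := by unfold wa; positivity
theorem wb_pos {d : ℕ} {t : ℝ} (ht : 0 < t) (y : Ed d) : 0 < wb d t y := by unfold wb; positivity

theorem wb_eq {d : ℕ} {t : ℝ} (ht : 0 < t) (y : Ed d) : (‖y‖ ^ 2 + t ^ 2) * wb d t y = wa d t y := by
  have : 0 < ‖y‖ ^ 2 + t ^ 2 := by positivity
  unfold wa wb
  rw [Real.rpow_sub_one this.ne']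
  field_simp

theorem wa_mono {d : ℕ} {e t : ℝ} (he : 0 < e) (het : e ≤ t) (y : Ed d) : wa d t y ≤ wa d e y := by
  unfold wa
  apply Real.rpow_le_rpow_of_nonpos (by positivity) (by gcongr)
  have : (0:ℝ) ≤ d := by positivity
  linarith

def Cw (d : ℕ) (e : ℝ) : ℝ := (2 * (1 + 1 / e ^ 2)) ^ (((d : ℝ) + 1) / 2)

theorem wa_dec {d : ℕ} {e : ℝ} (he : 0 < e) (y : Ed d) : wa d e y ≤ Cw d e * (1 + ‖y‖) ^ (-((d : ℝ) + 1)) := by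
  have h1 := w_low he (by positivity : 0 ≤ ((d : ℝ) + 1) / 2) y
  rwa [show 2 * (((d : ℝ) + 1) / 2) = (d : ℝ) + 1 by ring] at h1

theorem wa_le {d : ℕ} {e : ℝ} (he : 0 < e) (y : Ed d) : wa d e y ≤ (e ^ 2) ^ (-(((d : ℝ) + 1) / 2)) := by
  unfold wa
  apply Real.rpow_le_rpow_of_nonpos (by positivity) (by nlinarith [sq_nonneg ‖y‖])
  have : (0:ℝ) ≤ d := by positivity
  linarith

theorem Kp_eq {d : ℕ} (t : ℝ) (y : Ed d) : Kp d t y = t * wa d t y := by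
  unfold Kp wa
  rw [Real.rpow_neg (by positivity), div_eq_mul_inv]

theorem qK_eq {d : ℕ} (j : Fin d) (t : ℝ) (y : Ed d) : qK d j t y = y j * wa d t y := by
  unfold qK wa
  rw [Real.rpow_neg (by positivity), div_eq_mul_inv]

def Dk (d : ℕ) (t : ℝ) (y : Ed d) : ℝ := wa d t y - ((d : ℝ) + 1) * t ^ 2 * wb d t y
def Gk (d : ℕ) (t : ℝ) (y : Ed d) : Ed d →L[ℝ] ℝ := (-(((d : ℝ) + 1) * t * wb d t y)) • innerSL ℝ y
def Pk (d : ℕ) (j : Fin d) (t : ℝ) (y : Ed d) : ℝ := -(((d : ℝ) + 1) * t * wb d t y) * y j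
def Rk (d : ℕ) (j : Fin d) (t : ℝ) (y : Ed d) : ℝ := wa d t y - ((d : ℝ) + 1) * (y j) ^ 2 * wb d t y

theorem Dk_meas (d : ℕ) (t : ℝ) : Measurable (Dk d t) := by
  have := wa_meas d t; have := wb_meas d t; unfold Dk; fun_prop
theorem Pk_meas (d : ℕ) (j) (t : ℝ) : Measurable (Pk d j t) := by
  have := wb_meas d t; unfold Pk; fun_prop
theorem Rk_meas (d : ℕ) (j) (t : ℝ) : Measurable (Rk d j t) := by
  have := wa_meas d t; have := wb_meas d t; unfold Rk; fun_prop
theorem wb_cont {d : ℕ} {t : ℝ} (ht : 0 < t) : Continuous (wb d t) :=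
  (by fun_prop : Continuous fun y : Ed d => ‖y‖ ^ 2 + t ^ 2).rpow_const (fun y => Or.inl (by positivity))
theorem Gk_cont {d : ℕ} {t : ℝ} (ht : 0 < t) : Continuous (Gk d t) := by
  have := wb_cont (d := d) ht
  unfold Gk; fun_prop

theorem Gk_apply {d : ℕ} (j : Fin d) (t : ℝ) (y : Ed d) : Gk d t y (EuclideanSpace.single j 1) = Pk d j t y := by
  simp [Gk, Pk, EuclideanSpace.inner_single_right]

theorem wa_hasDerivAt {d : ℕ} {t : ℝ} (ht : 0 < t) (y : Ed d) :
    HasDerivAt (fun τ => wa d τ y) (-(((d : ℝ) + 1) * t * wb d t y)) t := by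
  have h : HasDerivAt (fun τ : ℝ => ‖y‖ ^ 2 + τ ^ 2) (2 * t) t := by
    simpa using (hasDerivAt_pow 2 t).const_add (‖y‖ ^ 2)
  have := h.rpow_const (p := -(((d : ℝ) + 1) / 2)) (Or.inl (by positivity))
  exact this.congr_deriv (by unfold wb; ring)

theorem wa_hasFDerivAt {d : ℕ} {t : ℝ} (ht : 0 < t) (y : Ed d) :
    HasFDerivAt (wa d t) ((-(((d : ℝ) + 1) * wb d t y)) • innerSL ℝ y) y := by
  have h : HasFDerivAt (fun z : Ed d => ‖z‖ ^ 2 + t ^ 2) (2 • innerSL ℝ y) y :=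
    ((hasStrictFDerivAt_norm_sq y).hasFDerivAt).add_const _
  have := h.rpow_const (p := -(((d : ℝ) + 1) / 2)) (Or.inl (by positivity))
  refine this.congr_fderiv ?_
  ext z
  simp [wb]
  ring

theorem Kp_hasDerivAt {d : ℕ} {t : ℝ} (ht : 0 < t) (y : Ed d) : HasDerivAt (fun τ => Kp d τ y) (Dk d t y) t := by
  simp only [Kp_eq]
  have := (hasDerivAt_id t).mul (wa_hasDerivAt ht y)
  exact this.congr_deriv (by simp [Dk]; ring)

theorem Kp_hasFDerivAt {d : ℕ} {t : ℝ} (ht : 0 < t) (y : Ed d) : HasFDerivAt (Kp d t) (Gk d t y) y := by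
  have e : Kp d t = fun z => t * wa d t z := funext fun z => Kp_eq t z
  rw [e]
  have := (wa_hasFDerivAt ht y).const_mul t
  refine this.congr_fderiv ?_
  ext z; simp [Gk]; ring

theorem qK_hasDerivAt {d : ℕ} (j : Fin d) {t : ℝ} (ht : 0 < t) (y : Ed d) :
    HasDerivAt (fun τ => qK d j τ y) (Pk d j t y) t := by
  simp only [qK_eq]
  have := (wa_hasDerivAt ht y).const_mul (y j)
  exact this.congr_deriv (by simp [Pk]; ring)

theorem qK_hasFDerivAt {d : ℕ} (j : Fin d) {t : ℝ} (ht : 0 < t) (y : Ed d) :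
    ∃ L : Ed d →L[ℝ] ℝ, HasFDerivAt (qK d j t) L y ∧ L (EuclideanSpace.single j 1) = Rk d j t y := by
  have e : qK d j t = fun z => z j * wa d t z := funext fun z => qK_eq j t z
  rw [e]
  have h1 : HasFDerivAt (fun z : Ed d => z j) (EuclideanSpace.proj j : Ed d →L[ℝ] ℝ) y :=
    (EuclideanSpace.proj j : Ed d →L[ℝ] ℝ).hasFDerivAt
  refine ⟨_, h1.mul (wa_hasFDerivAt ht y), ?_⟩
  simp [Rk, EuclideanSpace.inner_single_right]
  ring

theorem Rk_sum {d : ℕ} {t : ℝ} (ht : 0 < t) (y : Ed d) : ∑ j, Rk d j t y = - Dk d t y := by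
  unfold Rk Dk
  rw [Finset.sum_sub_distrib, ← Finset.sum_mul, ← Finset.mul_sum]
  have : ∑ j, (y j) ^ 2 = ‖y‖ ^ 2 := by
    rw [EuclideanSpace.norm_sq_eq]; simp
  rw [this]
  have h := wb_eq ht y
  simp
  linear_combination (-((d : ℝ) + 1)) * h

theorem Dk_le {d : ℕ} {t : ℝ} (ht : 0 < t) (y : Ed d) : ‖Dk d t y‖ ≤ ((d : ℝ) + 2) * wa d t y := by
  have h := wb_eq ht y
  have h1 := wb_pos ht y
  have h3 : t ^ 2 * wb d t y ≤ wa d t y := by rw [← h]; nlinarith [sq_nonneg ‖y‖]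
  have h2 := wa_pos ht y
  have hd : (0:ℝ) ≤ d := by positivity
  have h4 : 0 ≤ t ^ 2 * wb d t y := by positivity
  unfold Dk
  rw [Real.norm_eq_abs, abs_le]
  constructor <;> nlinarith

theorem Gk_le {d : ℕ} {t : ℝ} (ht : 0 < t) (y : Ed d) : ‖Gk d t y‖ ≤ ((d : ℝ) + 2) * wa d t y := by
  have h := wb_eq ht y
  have h1 := wb_pos ht y
  unfold Gk
  rw [norm_smul, innerSL_apply_norm, norm_neg, Real.norm_of_nonneg (by positivity), ← h]
  have hd : (0:ℝ) ≤ d := by positivity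
  have : t * ‖y‖ ≤ ‖y‖ ^ 2 + t ^ 2 := by nlinarith [sq_nonneg (‖y‖ - t), sq_nonneg ‖y‖, sq_nonneg t]
  calc _ = ((d : ℝ) + 1) * wb d t y * (t * ‖y‖) := by ring
    _ ≤ ((d : ℝ) + 2) * wb d t y * (‖y‖ ^ 2 + t ^ 2) := by gcongr; linarith
    _ = _ := by ring

theorem Pk_le {d : ℕ} (j) {t : ℝ} (ht : 0 < t) (y : Ed d) : ‖Pk d j t y‖ ≤ ((d : ℝ) + 2) * wa d t y := by
  rw [← Gk_apply]
  refine ((Gk d t y).le_opNorm _).trans ?_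
  simpa using Gk_le ht y

theorem Rk_le {d : ℕ} (j) {t : ℝ} (ht : 0 < t) (y : Ed d) : ‖Rk d j t y‖ ≤ ((d : ℝ) + 2) * wa d t y := by
  have h := wb_eq ht y
  have h1 := wb_pos ht y
  have h0 : (y j) ^ 2 ≤ ‖y‖ ^ 2 := by
    have := coord_le y j
    rw [Real.norm_eq_abs] at this
    rw [← sq_abs]; gcongr
  have h3 : (y j) ^ 2 * wb d t y ≤ wa d t y := by rw [← h]; nlinarith [sq_nonneg t]
  have h2 := wa_pos ht y
  have hd : (0:ℝ) ≤ d := by positivity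
  have h4 : 0 ≤ (y j) ^ 2 * wb d t y := by positivity
  unfold Rk
  rw [Real.norm_eq_abs, abs_le]
  constructor <;> nlinarith

/-- kernels with decay -/
def Dec (d : ℕ) (φ : Ed d → ℝ) : Prop :=
  Measurable φ ∧ ∃ C : ℝ, ∀ y, ‖φ y‖ ≤ C * (1 + ‖y‖) ^ (-((d : ℝ) + 1))

theorem Dec.memLp {d : ℕ} {φ : Ed d → ℝ} (h : Dec d φ) {q : ℝ} (hq : 1 ≤ q) : MemLp φ (ENNReal.ofReal q) volume := by
  obtain ⟨C, hC⟩ := h.2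
  refine memLp_of_decay volume h.1.aestronglyMeasurable (by linarith) hC ?_
  have : (0 : ℝ) ≤ d := by positivity
  simp
  nlinarith

theorem Dec.int {d : ℕ} {φ : Ed d → ℝ} (h : Dec d φ) : Integrable φ volume := by
  have := h.memLp le_rfl
  simpa [memLp_one_iff_integrable] using this

theorem dec_of_wa {d : ℕ} {φ : Ed d → ℝ} (hm : Measurable φ) {t : ℝ} (ht : 0 < t) {C : ℝ} (hC : 0 ≤ C)
    (h : ∀ y, ‖φ y‖ ≤ C * wa d t y) : Dec d φ := by
  refine ⟨hm, C * Cw d t, fun y => (h y).trans ?_⟩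
  rw [mul_assoc]
  have := wa_dec ht y
  gcongr

theorem wa_Dec {d : ℕ} {t : ℝ} (ht : 0 < t) : Dec d (wa d t) :=
  dec_of_wa (wa_meas d t) ht zero_le_one fun y => by rw [one_mul, Real.norm_of_nonneg (wa_pos ht y).le]
theorem Dk_Dec {d : ℕ} {t : ℝ} (ht : 0 < t) : Dec d (Dk d t) :=
  dec_of_wa (Dk_meas d t) ht (by positivity) (Dk_le ht)
theorem Pk_Dec {d : ℕ} (j) {t : ℝ} (ht : 0 < t) : Dec d (Pk d j t) :=
  dec_of_wa (Pk_meas d j t) ht (by positivity) (Pk_le j ht)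
theorem Rk_Dec {d : ℕ} (j) {t : ℝ} (ht : 0 < t) : Dec d (Rk d j t) :=
  dec_of_wa (Rk_meas d j t) ht (by positivity) (Rk_le j ht)
theorem Kp_Dec {d : ℕ} {t : ℝ} (ht : 0 < t) : Dec d (Kp d t) :=
  dec_of_wa (Kp_meas d t) ht ht.le fun y => by
    rw [Kp_eq, Real.norm_of_nonneg (mul_pos ht (wa_pos ht y)).le]

section
variable {d : ℕ} {F : Type*} [NormedAddCommGroup F] [NormedSpace ℝ F]

theorem Dec.conv_int {φ : Ed d → ℝ} (hφ : Dec d φ) {p : ℝ} (hp : 1 < p) {g : Ed d → F}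
    (hg : MemLp g (ENNReal.ofReal p) volume) (x : Ed d) : Integrable (fun y => φ y • g (x - y)) volume :=
  _root_.conv_int (Real.HolderConjugate.conjExponent hp) (hφ.memLp (Real.HolderConjugate.conjExponent hp).symm.lt.le) hg x

theorem ae_shift {g : Ed d → F} {p : ℝ} (hg : MemLp g (ENNReal.ofReal p) volume) (x : Ed d) :
    AEStronglyMeasurable (fun y => g (x - y)) volume :=
  hg.1.comp_measurePreserving (Measure.measurePreserving_sub_left volume x)

theorem conv_hasDerivAt {p : ℝ} (hp : 1 < p) {g : Ed d → F} (hg : MemLp g (ENNReal.ofReal p) volume) (x : Ed d)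
    {t : ℝ} (ht : 0 < t) :
    HasDerivAt (fun τ => ∫ y, Kp d τ y • g (x - y)) (∫ y, Dk d t y • g (x - y)) t := by
  have ht2 : 0 < t / 2 := by positivity
  refine (hasDerivAt_integral_of_dominated_loc_of_deriv_le (s := Ioi (t / 2)) (F := fun τ y => Kp d τ y • g (x - y))
    (F' := fun τ y => Dk d τ y • g (x - y))
    (bound := fun y => ((d : ℝ) + 2) * (wa d (t / 2) y • ‖g (x - y)‖)) (Ioi_mem_nhds (by linarith)) ?_ ?_ ?_ ?_ ?_ ?_).2
  · exact Eventually.of_forall fun τ => (Kp_meas d τ).aestronglyMeasurable.smul (ae_shift hg x)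
  · exact (Kp_Dec ht).conv_int hp hg x
  · exact (Dk_meas d t).aestronglyMeasurable.smul (ae_shift hg x)
  · refine Eventually.of_forall fun y τ hτ => ?_
    have hτ : t / 2 < τ := hτ
    rw [norm_smul, smul_eq_mul, ← mul_assoc]
    gcongr
    refine (Dk_le (ht2.trans hτ) y).trans ?_
    have := wa_mono ht2 hτ.le y
    gcongr
  · exact ((wa_Dec ht2).conv_int hp hg.norm x).const_mul _
  · refine Eventually.of_forall fun y τ hτ => ?_
    exact (Kp_hasDerivAt (ht2.trans hτ) y).smul_const _

theorem conv_contAt {p : ℝ} (hp : 1 < p) {g : Ed d → F} (hg : MemLp g (ENNReal.ofReal p) volume) (x : Ed d)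
    {t : ℝ} (ht : 0 < t) {φ : ℝ → Ed d → ℝ} (hm : ∀ τ, Measurable (φ τ))
    (hb : ∀ τ, 0 < τ → ∀ y, ‖φ τ y‖ ≤ ((d : ℝ) + 2) * wa d τ y) (hc : ∀ y, ContinuousAt (fun τ => φ τ y) t) :
    ContinuousAt (fun τ => ∫ y, φ τ y • g (x - y)) t := by
  have ht2 : 0 < t / 2 := by positivity
  refine continuousAt_of_dominated (bound := fun y => ((d : ℝ) + 2) * (wa d (t / 2) y • ‖g (x - y)‖)) ?_ ?_ ?_ ?_
  · exact Eventually.of_forall fun τ => (hm τ).aestronglyMeasurable.smul (ae_shift hg x)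
  · filter_upwards [Ioi_mem_nhds (show t / 2 < t by linarith)] with τ hτ
    refine Eventually.of_forall fun y => ?_
    have hτ : t / 2 < τ := hτ
    rw [norm_smul, smul_eq_mul, ← mul_assoc]
    gcongr
    refine (hb τ (ht2.trans hτ) y).trans ?_
    have := wa_mono ht2 hτ.le y
    gcongr
  · exact ((wa_Dec ht2).conv_int hp hg.norm x).const_mul _
  · exact Eventually.of_forall fun y => (hc y).smul continuousAt_const

theorem wb_contAt {t : ℝ} (ht : 0 < t) (y : Ed d) : ContinuousAt (fun τ => wb d τ y) t := by
  unfold wb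
  exact ContinuousAt.rpow_const (by fun_prop) (Or.inl (by positivity))

theorem Dk_contAt {t : ℝ} (ht : 0 < t) (y : Ed d) : ContinuousAt (fun τ => Dk d τ y) t := by
  have h1 := wb_contAt ht y
  have h2 := (wa_hasDerivAt ht y).continuousAt
  unfold Dk
  fun_prop

theorem Pk_contAt (j : Fin d) {t : ℝ} (ht : 0 < t) (y : Ed d) : ContinuousAt (fun τ => Pk d j τ y) t := by
  have h1 := wb_contAt ht y
  unfold Pk
  fun_prop

theorem conv_swap (φ : Ed d → ℝ) (g : Ed d → F) (x : Ed d) : ∫ y, φ y • g (x - y) = ∫ y, φ (x - y) • g y := by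
  rw [← integral_sub_left_eq_self (fun y => φ y • g (x - y)) volume x]
  simp

theorem conv_hasFDerivAt [CompleteSpace F] {p : ℝ} (hp : 1 < p) {g : Ed d → F} (hg : MemLp g (ENNReal.ofReal p) volume) (x : Ed d)
    {t : ℝ} (ht : 0 < t) :
    ∃ L : Ed d →L[ℝ] F, HasFDerivAt (fun z => ∫ y, Kp d t y • g (z - y)) L x ∧
      ∀ j, L (EuclideanSpace.single j 1) = ∫ y, Pk d j t y • g (x - y) := by
  set C : ℝ := ((d : ℝ) + 2) * Cw d t * 2 ^ ((d : ℝ) + 1) with hC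
  have hCw : 0 ≤ Cw d t := by unfold Cw; positivity
  have hB : Dec d (fun u => C * (1 + ‖u‖) ^ (-((d : ℝ) + 1))) := by
    refine ⟨by fun_prop, C, fun y => ?_⟩
    rw [Real.norm_of_nonneg (by positivity)]
  have hbi : Integrable (fun y => (C * (1 + ‖x - y‖) ^ (-((d : ℝ) + 1))) * ‖g y‖) volume := by
    have := (hB.conv_int hp hg.norm x).comp_sub_left x
    simpa using this
  have hbd : ∀ z ∈ Metric.ball x 1, ∀ y, ‖(Gk d t (z - y)).smulRight (g y)‖ ≤ (C * (1 + ‖x - y‖) ^ (-((d : ℝ) + 1))) * ‖g y‖ := by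
    intro z hz y
    rw [ContinuousLinearMap.norm_smulRight_apply]
    gcongr
    refine (Gk_le ht _).trans ?_
    rw [hC, mul_assoc, mul_assoc]
    gcongr
    refine (wa_dec ht _).trans ?_
    gcongr
    have h1 : (1 + ‖x - y‖) / 2 ≤ 1 + ‖z - y‖ := by
      have : ‖x - y‖ ≤ ‖x - z‖ + ‖z - y‖ := norm_sub_le_norm_sub_add_norm_sub x z y
      have h2 : ‖x - z‖ < 1 := by rwa [mem_ball_iff_norm'] at hz
      linarith [norm_nonneg (z - y)]
    calc (1 + ‖z - y‖) ^ (-((d : ℝ) + 1)) ≤ ((1 + ‖x - y‖) / 2) ^ (-((d : ℝ) + 1)) := by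
          apply Real.rpow_le_rpow_of_nonpos (by positivity) h1
          have : (0:ℝ) ≤ d := by positivity
          linarith
      _ = _ := by
          rw [Real.div_rpow (by positivity) (by norm_num), Real.rpow_neg (by norm_num : (0:ℝ) ≤ 2)]
          field_simp
  have hm : AEStronglyMeasurable (fun y => (Gk d t (x - y)).smulRight (g y)) volume := by
    have h1 : AEStronglyMeasurable (fun y => Gk d t (x - y)) volume :=
      ((Gk_cont ht).comp (by fun_prop : Continuous fun y => x - y)).aestronglyMeasurable
    exact (ContinuousLinearMap.smulRightL ℝ (Ed d) F).aestronglyMeasurable_comp₂ h1 hg.1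
  have hF'i : Integrable (fun y => (Gk d t (x - y)).smulRight (g y)) volume :=
    hbi.mono' hm (Eventually.of_forall fun y => hbd x (Metric.mem_ball_self one_pos) y)
  refine ⟨∫ y, (Gk d t (x - y)).smulRight (g y), ?_, ?_⟩
  · simp only [conv_swap (Kp d t) g]
    refine hasFDerivAt_integral_of_dominated_of_fderiv_le (s := Metric.ball x 1) (Metric.ball_mem_nhds x one_pos)
      (F := fun z y => Kp d t (z - y) • g y) (F' := fun z y => (Gk d t (z - y)).smulRight (g y)) ?_ ?_ hm
      (Eventually.of_forall fun y z hz => hbd z hz y) hbi (Eventually.of_forall fun y z hz => ?_)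
    · exact Eventually.of_forall fun z => ((Kp_meas d t).comp (by fun_prop)).aestronglyMeasurable.smul hg.1
    · have := ((Kp_Dec ht).conv_int hp hg x).comp_sub_left x
      simpa using this
    · have h := (Kp_hasFDerivAt ht (z - y)).comp z ((hasFDerivAt_id z).sub_const y)
      exact h.smul_const (g y)
  · intro j
    rw [ContinuousLinearMap.integral_apply hF'i, conv_swap (Pk d j t) g]
    simp [Gk_apply]
end

section
variable {d : ℕ}

theorem Kp_two {t : ℝ} (ht : 0 < t) : MemLp (Kp d t) (ENNReal.ofReal 2) volume := (Kp_Dec ht).memLp one_le_two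

theorem Dk_Kp {s t : ℝ} (hs : 0 < s) (ht : 0 < t) (x : Ed d) :
    ∫ y, Dk d s y * Kp d t (x - y) = AK d * Dk d (s + t) x := by
  have h1 := conv_hasDerivAt one_lt_two (Kp_two (d := d) ht) x hs
  have h2 : HasDerivAt (fun τ => AK d * Kp d (τ + t) x) (AK d * Dk d (s + t) x) s :=
    ((Kp_hasDerivAt (add_pos hs ht) x).comp_add_const s t).const_mul _
  refine h1.unique (h2.congr_of_eventuallyEq ?_)
  filter_upwards [Ioi_mem_nhds hs] with τ hτ
  exact Kp_semigroup hτ ht x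

theorem Pk_Kp (j : Fin d) {s t : ℝ} (hs : 0 < s) (ht : 0 < t) (x : Ed d) :
    ∫ y, Pk d j s y * Kp d t (x - y) = AK d * Pk d j (s + t) x := by
  obtain ⟨L, h1, hL⟩ := conv_hasFDerivAt one_lt_two (Kp_two (d := d) ht) x hs
  have h2 : HasFDerivAt (fun z => AK d * Kp d (s + t) z) (AK d • Gk d (s + t) x) x :=
    (Kp_hasFDerivAt (add_pos hs ht) x).const_mul _
  have h3 := h1.unique (h2.congr_of_eventuallyEq (Eventually.of_forall fun z => Kp_semigroup hs ht z))
  have h4 := hL j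
  simp only [smul_eq_mul] at h4
  rw [← h4, h3]
  simp [Gk_apply]

theorem qK_conv_int (hd : 1 ≤ d) (j : Fin d) {s : ℝ} (hs : 0 < s) {φ : Ed d → ℝ} (hφ : Dec d φ) (x : Ed d) :
    Integrable (fun y => qK d j s y * φ (x - y)) volume := by
  have := conv_int (Real.HolderConjugate.two_two) (qK_memLp hd j hs one_lt_two) (hφ.memLp one_le_two) x
  simpa using this

theorem Rk_Kp (hd : 1 ≤ d) (j : Fin d) {s t : ℝ} (hs : 0 < s) (ht : 0 < t) (x : Ed d) :
    ∫ y, Rk d j s y * Kp d t (x - y) = ∫ y, qK d j s y * Pk d j t (x - y) := by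
  have h := integral_bilinear_hasLineDerivAt_right_eq_neg_left_of_integrable (μ := (volume : Measure (Ed d)))
    (f := qK d j s) (f' := Rk d j s) (g := fun y => Kp d t (x - y)) (g' := fun y => - Pk d j t (x - y))
    (v := EuclideanSpace.single j 1) (B := ContinuousLinearMap.mul ℝ ℝ) ?_ ?_ ?_ ?_ ?_
  · simp only [ContinuousLinearMap.mul_apply'] at h
    simp only [mul_neg, integral_neg] at h
    linarith
  · exact (Rk_Dec j hs).conv_int one_lt_two (Kp_two ht) x
  · have := (qK_conv_int hd j hs (Pk_Dec j ht) x).neg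
    refine this.congr (Eventually.of_forall fun y => ?_)
    simp
  · exact qK_conv_int hd j hs (Kp_Dec ht) x
  · intro y _
    obtain ⟨L, h1, h2⟩ := qK_hasFDerivAt j hs y
    have := h1.hasLineDerivAt (EuclideanSpace.single j 1)
    rwa [h2] at this
  · intro y _
    have h := ((Kp_hasFDerivAt ht (x - y)).comp y ((hasFDerivAt_id y).const_sub x)).hasLineDerivAt (EuclideanSpace.single j 1)
    have e : ((Gk d t (x - y)).comp (-(ContinuousLinearMap.id ℝ (Ed d)))) (EuclideanSpace.single j 1) = - Pk d j t (x - y) := by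
      simp [Gk_apply]
    rw [e] at h
    exact h

theorem kernel_D (hd : 1 ≤ d) {s t : ℝ} (hs : 0 < s) (ht : 0 < t) (x : Ed d) :
    AK d * Dk d (s + t) x = - ∑ j, ∫ y, qK d j s y * Pk d j t (x - y) := by
  rw [← Dk_Kp hs ht x]
  simp only [← Rk_Kp hd _ hs ht]
  rw [← integral_finsetSum _ (fun j _ => by exact (Rk_Dec j hs).conv_int one_lt_two (Kp_two ht) x), ← integral_neg]
  refine integral_congr_ae (Eventually.of_forall fun y => ?_)
  simp only
  rw [← Finset.sum_mul, Rk_sum hs y]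
  ring

theorem qK_small (hd : 1 ≤ d) (j : Fin d) {s : ℝ} (hs : 1 ≤ s) (y : Ed d) : ‖qK d j s y‖ ≤ 1 / s := by
  have hs0 : 0 < s := by linarith
  have hw : 1 ≤ ‖y‖ ^ 2 + s ^ 2 := by nlinarith [sq_nonneg ‖y‖]
  have h1 : wa d s y ≤ (‖y‖ ^ 2 + s ^ 2)⁻¹ := by
    unfold wa
    rw [← Real.rpow_neg_one]
    apply Real.rpow_le_rpow_of_exponent_le hw
    have : (1:ℝ) ≤ d := by exact_mod_cast hd
    linarith
  rw [qK_eq, norm_mul, Real.norm_of_nonneg (wa_pos hs0 y).le]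
  calc ‖y j‖ * wa d s y ≤ ‖y‖ * (‖y‖ ^ 2 + s ^ 2)⁻¹ := by
        have := coord_le y j
        have := wa_pos hs0 y
        gcongr
    _ ≤ 1 / s := by
        rw [← div_eq_mul_inv, div_le_div_iff₀ (by positivity) hs0]
        nlinarith [sq_nonneg (‖y‖ - s), sq_nonneg ‖y‖, sq_nonneg s]

theorem qK_Kp (hd : 1 ≤ d) (j : Fin d) {s t : ℝ} (hs : 0 < s) (ht : 0 < t) (x : Ed d) :
    ∫ y, qK d j s y * Kp d t (x - y) = AK d * qK d j (s + t) x := by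
  have hG : ∀ σ, 0 < σ → HasDerivAt (fun σ => ∫ y, qK d j σ y * Kp d t (x - y)) (AK d * Pk d j (σ + t) x) σ := by
    intro σ hσ
    have hσ2 : 0 < σ / 2 := by positivity
    rw [← Pk_Kp j hσ ht x]
    refine (hasDerivAt_integral_of_dominated_loc_of_deriv_le (s := Ioi (σ / 2)) (F := fun τ y => qK d j τ y * Kp d t (x - y))
      (F' := fun τ y => Pk d j τ y * Kp d t (x - y))
      (bound := fun y => ((d : ℝ) + 2) * (wa d (σ / 2) y * Kp d t (x - y))) (Ioi_mem_nhds (by linarith)) ?_ ?_ ?_ ?_ ?_ ?_).2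
    · exact Eventually.of_forall fun τ => ((qK_meas d j τ).mul ((Kp_meas d t).comp (by fun_prop))).aestronglyMeasurable
    · exact qK_conv_int hd j hσ (Kp_Dec ht) x
    · exact ((Pk_meas d j σ).mul ((Kp_meas d t).comp (by fun_prop))).aestronglyMeasurable
    · refine Eventually.of_forall fun y τ hτ => ?_
      have hτ : σ / 2 < τ := hτ
      have hK := Kp_pos d ht (x - y)
      rw [norm_mul, ← mul_assoc, Real.norm_of_nonneg hK.le]
      gcongr
      refine (Pk_le j (hσ2.trans hτ) y).trans ?_
      have := wa_mono hσ2 hτ.le y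
      gcongr
    · exact ((wa_Dec hσ2).conv_int one_lt_two (Kp_two ht) x).const_mul _
    · refine Eventually.of_forall fun y τ hτ => ?_
      exact (qK_hasDerivAt j (hσ2.trans hτ) y).mul_const _
  let Θ : ℝ → ℝ := fun σ => (∫ y, qK d j σ y * Kp d t (x - y)) - AK d * qK d j (σ + t) x
  have hΘ : ∀ σ, 0 < σ → HasDerivAt Θ 0 σ := by
    intro σ hσ
    have h2 : HasDerivAt (fun σ => AK d * qK d j (σ + t) x) (AK d * Pk d j (σ + t) x) σ :=
      ((qK_hasDerivAt j (add_pos hσ ht) x).comp_add_const σ t).const_mul _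
    exact ((hG σ hσ).sub h2).congr_deriv (sub_self _)
  have hconst : ∀ σ, 0 < σ → Θ σ = Θ s := by
    intro σ hσ
    exact isOpen_Ioi.is_const_of_deriv_eq_zero (s := Ioi (0:ℝ)) isPreconnected_Ioi
      (fun σ hσ => (hΘ σ hσ).differentiableAt.differentiableWithinAt) (fun σ hσ => (hΘ σ hσ).deriv) hσ hs
  have hlim : Tendsto Θ atTop (𝓝 0) := by
    have hz : Tendsto (fun σ : ℝ => (1 / σ) * ((∫ y, Kp d t (x - y)) + AK d)) atTop (𝓝 0) := by
      have := (tendsto_inv_atTop_zero (𝕜 := ℝ)).mul_const ((∫ y, Kp d t (x - y)) + AK d)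
      simpa using this
    refine squeeze_zero_norm' ?_ hz
    filter_upwards [eventually_ge_atTop 1] with σ hσ
    have hσ0 : 0 < σ := by linarith
    have h1 : ‖∫ y, qK d j σ y * Kp d t (x - y)‖ ≤ (1 / σ) * ∫ y, Kp d t (x - y) := by
      rw [← integral_const_mul]
      refine norm_integral_le_of_norm_le (((Kp_int ht).comp_sub_left x).const_mul _) (Eventually.of_forall fun y => ?_)
      have hK := Kp_pos d ht (x - y)
      rw [norm_mul, Real.norm_of_nonneg hK.le]
      have := qK_small hd j hσ y
      gcongr
    have h2 : ‖AK d * qK d j (σ + t) x‖ ≤ (1 / σ) * AK d := by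
      have hA := AK_pos d
      rw [norm_mul, Real.norm_of_nonneg hA.le, mul_comm]
      have h3 := qK_small hd j (show 1 ≤ σ + t by linarith) x
      have h4 : 1 / (σ + t) ≤ 1 / σ := one_div_le_one_div_of_le hσ0 (by linarith)
      gcongr
      linarith
    calc ‖Θ σ‖ ≤ _ := norm_sub_le _ _
      _ ≤ _ := by rw [mul_add]; linarith
  have hs0 : Θ s = 0 := by
    refine tendsto_nhds_unique (tendsto_const_nhds.congr' ?_) hlim
    filter_upwards [eventually_gt_atTop 0] with σ hσ
    exact (hconst σ hσ).symm
  exact sub_eq_zero.mp hs0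

theorem kernel_P (hd : 1 ≤ d) (j : Fin d) {s t : ℝ} (hs : 0 < s) (ht : 0 < t) (x : Ed d) :
    AK d * Pk d j (s + t) x = ∫ y, qK d j s y * Dk d t (x - y) := by
  have h1 := conv_hasDerivAt one_lt_two (qK_memLp hd j hs one_lt_two) x ht
  have h2 : HasDerivAt (fun τ => AK d * qK d j (s + τ) x) (AK d * Pk d j (s + t) x) t :=
    ((qK_hasDerivAt j (add_pos hs ht) x).comp_const_add s t).const_mul _
  have h3 := h1.unique (h2.congr_of_eventuallyEq ?_)
  · rw [conv_swap] at h3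
    rw [← h3]
    simp [mul_comm]
  filter_upwards [Ioi_mem_nhds ht] with τ hτ
  rw [conv_swap, ← qK_Kp hd j hs hτ x]
  simp [mul_comm]
end

section
variable {d : ℕ} {F : Type*} [NormedAddCommGroup F] [NormedSpace ℝ F] [MeasurableSpace F] [BorelSpace F]
  [SecondCountableTopology F]

theorem conv_sm {φ : Ed d → ℝ} (hφ : Measurable φ) {g : Ed d → F} (hg : Measurable g) :
    StronglyMeasurable (fun x => ∫ y, φ y • g (x - y)) := by
  refine StronglyMeasurable.integral_prod_right' (f := fun z : Ed d × Ed d => φ z.2 • g (z.1 - z.2)) ?_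
  exact Measurable.stronglyMeasurable (by fun_prop)

theorem Dec.conv_memLp {φ : Ed d → ℝ} (hφ : Dec d φ) {p : ℝ} (hp : 1 < p) {g : Ed d → F} (hgm : Measurable g)
    (hg : MemLp g (ENNReal.ofReal p) volume) : MemLp (fun x => ∫ y, φ y • g (x - y)) (ENNReal.ofReal p) volume := by
  have hp0 : 0 < p := by linarith
  rw [memLp_lint hp0 (conv_sm hφ.1 hgm).aestronglyMeasurable]
  have hg' := (memLp_lint hp0 hg.1).mp hg
  have h := young_lint (volume : Measure (Ed d)) (fun y => ‖φ y‖ₑ) (fun y => ‖g y‖ₑ) hφ.1.enorm hgm.enorm hp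
  refine ne_top_of_le_ne_top (ENNReal.mul_ne_top (ENNReal.rpow_ne_top_of_nonneg hp0.le hφ.int.2.ne) hg') (le_trans ?_ h)
  refine lintegral_mono fun x => ?_
  gcongr
  refine (enorm_integral_le_lintegral_enorm _).trans (le_of_eq ?_)
  simp only [enorm_smul]

theorem conv_assoc (hd : 1 ≤ d) (j : Fin d) {s : ℝ} (hs : 0 < s) {ψ : Ed d → ℝ} (hψ : Dec d ψ) [CompleteSpace F] {p : ℝ} (hp : 1 < p)
    {f : Ed d → F} (hfm : Measurable f) (hf : MemLp f (ENNReal.ofReal p) volume) (x : Ed d) :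
    Integrable (fun y => (∫ z, qK d j s z * ψ (y - z)) • f (x - y)) volume ∧
    ∫ y, (∫ z, qK d j s z * ψ (y - z)) • f (x - y) = ∫ z, qK d j s z • ∫ y, ψ y • f (x - z - y) := by
  have hψn : Dec d (fun y => ‖ψ y‖) := ⟨hψ.1.norm, by simpa using hψ.2⟩
  have hpq := Real.HolderConjugate.conjExponent hp
  have hqm := qK_meas d j s
  have hψm := hψ.1
  let Φ : Ed d × Ed d → F := fun w => (qK d j s w.2 * ψ (w.1 - w.2)) • f (x - w.1)
  have hΦm : Measurable Φ := by fun_prop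
  have e0 : ∀ z, ∀ y, f (x - (y + z)) = f (x - z - y) := fun z y => by congr 1; abel
  have hI : Integrable Φ (volume.prod volume) := by
    rw [integrable_prod_iff' hΦm.aestronglyMeasurable]
    constructor
    · refine Eventually.of_forall fun z => ?_
      have h1 := ((hψ.conv_int hp hf (x - z)).comp_sub_right z).smul (qK d j s z)
      refine h1.congr (Eventually.of_forall fun y => ?_)
      simp only [Φ, Pi.smul_apply, smul_smul]
      congr 2; abel
    · have h2 := (hψn.conv_memLp hp hfm.norm hf.norm)
      have h3 := conv_int hpq (qK_memLp hd j hs hpq.symm.lt).norm h2 x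
      refine h3.congr (Eventually.of_forall fun z => ?_)
      simp only [Φ, norm_smul, smul_eq_mul, norm_mul]
      rw [← integral_const_mul]
      refine Eq.trans ?_ (integral_add_right_eq_self (fun y => ‖qK d j s z‖ * ‖ψ (y - z)‖ * ‖f (x - y)‖) z)
      refine integral_congr_ae (Eventually.of_forall fun y => ?_)
      simp only [add_sub_cancel_right]
      rw [e0 z y, mul_assoc]
  refine ⟨hI.integral_prod_left.congr (Eventually.of_forall fun y => ?_), ?_⟩
  · simp only [Φ]
    rw [integral_smul_const]
  calc ∫ y, (∫ z, qK d j s z * ψ (y - z)) • f (x - y) = ∫ y, ∫ z, Φ (y, z) := by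
        refine integral_congr_ae (Eventually.of_forall fun y => ?_)
        simp only [Φ]
        rw [integral_smul_const]
    _ = ∫ z, ∫ y, Φ (y, z) := integral_integral_swap (f := fun y z => Φ (y, z)) hI
    _ = _ := by
        refine integral_congr_ae (Eventually.of_forall fun z => ?_)
        simp only [Φ]
        rw [← integral_smul]
        refine Eq.trans (integral_add_right_eq_self (fun y => (qK d j s z * ψ (y - z)) • f (x - y)) z).symm ?_
        refine integral_congr_ae (Eventually.of_forall fun y => ?_)
        simp only [add_sub_cancel_right]
        rw [e0 z y, mul_smul]
end

theorem riesz_vec {p : ℝ} (hp : 1 < p) {d : ℕ} (hd : 1 ≤ d) (m : ℕ) : ∃ C : ℝ≥0∞, C ≠ ∞ ∧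
    ∀ s > 0, ∀ (j : Fin d) (h : Ed d → Ed m), Measurable h → MemLp h (ENNReal.ofReal p) volume →
      eLpNorm (fun x => ∫ y, qK d j s y • h (x - y)) (ENNReal.ofReal p) volume ≤ C * eLpNorm h (ENNReal.ofReal p) volume := by
  obtain ⟨C, hC, H⟩ := qK_lp hp hd
  have hp0 : 0 < p := by linarith
  have h0 : ENNReal.ofReal p ≠ 0 := by simpa using hp0
  have h1p : 1 ≤ ENNReal.ofReal p := by simpa using hp.le
  have hpq := Real.HolderConjugate.conjExponent hp
  refine ⟨m * C ^ (1 / p), ENNReal.mul_ne_top (by simp) (ENNReal.rpow_ne_top_of_nonneg (by positivity) hC), ?_⟩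
  intro s hs j h hm hh
  have hcm : ∀ i, Measurable fun x => h x i := fun i => by fun_prop
  have hcl : ∀ i, MemLp (fun x => h x i) (ENNReal.ofReal p) volume := fun i =>
    hh.mono (hcm i).aestronglyMeasurable (Eventually.of_forall fun x => coord_le _ i)
  have hcomp : ∀ i, ∀ x, (∫ y, qK d j s y • h (x - y)) i = ∫ y, qK d j s y * h (x - y) i := by
    intro i x
    have hIntg := conv_int hpq (qK_memLp hd j hs hpq.symm.lt) hh x
    have := (EuclideanSpace.proj i : Ed m →L[ℝ] ℝ).integral_comp_comm hIntg
    simpa using this.symm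
  have hi : ∀ i, eLpNorm (fun x => (∫ y, qK d j s y • h (x - y)) i) (ENNReal.ofReal p) volume ≤
      C ^ (1 / p) * eLpNorm h (ENNReal.ofReal p) volume := by
    intro i
    simp only [hcomp]
    calc _ ≤ C ^ (1 / p) * eLpNorm (fun x => h x i) (ENNReal.ofReal p) volume := by
          rw [eLpNorm_eq_lintegral_rpow_enorm_toReal h0 (by simp), eLpNorm_eq_lintegral_rpow_enorm_toReal h0 (by simp),
            ENNReal.toReal_ofReal hp0.le, ← ENNReal.mul_rpow_of_nonneg _ _ (by positivity)]
          exact ENNReal.rpow_le_rpow (H s hs j _ (hcm i) (hcl i)) (by positivity)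
      _ ≤ _ := by
          gcongr
          exact eLpNorm_mono fun x => coord_le _ i
  have hsm := conv_sm (qK_meas d j s) hm
  calc eLpNorm (fun x => ∫ y, qK d j s y • h (x - y)) (ENNReal.ofReal p) volume
      ≤ eLpNorm (∑ i, fun x => ‖(∫ y, qK d j s y • h (x - y)) i‖) (ENNReal.ofReal p) volume := by
        refine eLpNorm_mono_real fun x => ?_
        simp only [Finset.sum_apply]
        rw [EuclideanSpace.norm_eq]
        refine Real.sqrt_le_iff.mpr ⟨by positivity, ?_⟩
        exact Finset.sum_sq_le_sq_sum_of_nonneg fun i _ => norm_nonneg _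
    _ ≤ ∑ i, eLpNorm (fun x => ‖(∫ y, qK d j s y • h (x - y)) i‖) (ENNReal.ofReal p) volume := by
        refine eLpNorm_sum_le (fun i _ => ?_) h1p
        have := hsm.measurable
        exact Measurable.aestronglyMeasurable (by fun_prop)
    _ ≤ ∑ i : Fin m, C ^ (1 / p) * eLpNorm h (ENNReal.ofReal p) volume := by
        refine Finset.sum_le_sum fun i _ => ?_
        rw [eLpNorm_norm]
        exact hi i
    _ = _ := by simp [mul_assoc]

theorem fatou_bound {d m : ℕ} {p : ℝ} {A : Ed d → ℝ → Ed m} {t : ℝ} {M : ℝ≥0∞}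
    (hm : ∀ τ, StronglyMeasurable (fun x => A x τ)) (hc : ∀ x, ContinuousAt (A x) t)
    (hb : ∀ s > 0, eLpNorm (fun x => A x (s + t)) (ENNReal.ofReal p) volume ≤ M) :
    eLpNorm (fun x => A x t) (ENNReal.ofReal p) volume ≤ M := by
  have h := Lp.eLpNorm_lim_le_liminf_eLpNorm (p := ENNReal.ofReal p) (μ := (volume : Measure (Ed d)))
    (f := fun n : ℕ => fun x => A x (1 / ((n : ℝ) + 1) + t)) (fun n => (hm _).aestronglyMeasurable) (fun x => A x t)
    (Eventually.of_forall fun x => ?_)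
  · refine h.trans ?_
    refine liminf_le_of_le (by isBoundedDefault) fun b hb' => ?_
    obtain ⟨n, hn⟩ := hb'.exists
    exact hn.trans (hb _ (by positivity))
  · refine (hc x).tendsto.comp ?_
    have := (tendsto_one_div_add_atTop_nhds_zero_nat (𝕜 := ℝ)).add_const t
    simpa using this

theorem sum_bound {d m : ℕ} {p : ℝ≥0∞} (hp : 1 ≤ p) {T : Fin d → Ed d → Ed m}
    (hT : ∀ j, AEStronglyMeasurable (T j) volume) {C : ℝ≥0∞} {N : Fin d → ℝ≥0∞}
    (h : ∀ j, eLpNorm (T j) p volume ≤ C * N j) (c : ℝ) :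
    eLpNorm ((-c) • ∑ j, T j) p volume ≤ ‖c‖ₑ * C * ∑ j, N j := by
  rw [eLpNorm_const_smul, enorm_neg, mul_assoc]
  gcongr
  refine (eLpNorm_sum_le (fun j _ => hT j) hp).trans ?_
  rw [Finset.mul_sum]
  exact Finset.sum_le_sum fun j _ => h j

set_option maxHeartbeats 800000 in
theorem main_meas {p : ℝ} (hp : 1 < p) {d : ℕ} (hd : 1 ≤ d) (m : ℕ) : ∃ C : ℝ≥0∞, C ≠ ∞ ∧
    ∀ (f : Ed d → Ed m), Measurable f → MemLp f (ENNReal.ofReal p) volume → ∀ t > 0,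
      eLpNorm (fun x => ∫ y, Dk d t y • f (x - y)) (ENNReal.ofReal p) volume ≤
        C * ∑ j, eLpNorm (fun x => ∫ y, Pk d j t y • f (x - y)) (ENNReal.ofReal p) volume ∧
      ∑ j, eLpNorm (fun x => ∫ y, Pk d j t y • f (x - y)) (ENNReal.ofReal p) volume ≤
        C * eLpNorm (fun x => ∫ y, Dk d t y • f (x - y)) (ENNReal.ofReal p) volume := by
  obtain ⟨C, hC, H⟩ := riesz_vec hp hd m
  have hA := AK_pos d
  have h1p : 1 ≤ ENNReal.ofReal p := by simpa using hp.le
  have hpq := Real.HolderConjugate.conjExponent hp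
  set a : ℝ≥0∞ := ‖(AK d)⁻¹‖ₑ with ha
  have hat : a ≠ ∞ := by simp [ha]
  have hdn : (1 : ℝ≥0∞) ≤ d := by exact_mod_cast hd
  refine ⟨d * (a * C), ENNReal.mul_ne_top (by simp) (ENNReal.mul_ne_top hat hC), ?_⟩
  intro f hfm hf t ht
  have hPm : ∀ j, Measurable fun x => ∫ y, Pk d j t y • f (x - y) := fun j => (conv_sm (Pk_meas d j t) hfm).measurable
  have hDm : Measurable fun x => ∫ y, Dk d t y • f (x - y) := (conv_sm (Dk_meas d t) hfm).measurable
  have hPl := fun j => (Pk_Dec j ht).conv_memLp hp hfm hf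
  have hDl := (Dk_Dec ht).conv_memLp hp hfm hf
  constructor
  · refine fatou_bound (A := fun x τ => ∫ y, Dk d τ y • f (x - y)) (fun τ => conv_sm (Dk_meas d τ) hfm)
      (fun x => conv_contAt hp hf x ht (Dk_meas d) (fun τ hτ => Dk_le hτ) (Dk_contAt ht)) fun s hs => ?_
    have e : (fun x => ∫ y, Dk d (s + t) y • f (x - y)) =
        (-(AK d)⁻¹) • ∑ j, fun x => ∫ z, qK d j s z • ∫ y, Pk d j t y • f (x - z - y) := by
      ext1 x
      simp only [Pi.smul_apply, Finset.sum_apply]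
      simp only [← (conv_assoc hd _ hs (Pk_Dec _ ht) hp hfm hf x).2]
      have h2 : ∀ y, Dk d (s + t) y = (-(AK d)⁻¹) * ∑ j, ∫ z, qK d j s z * Pk d j t (y - z) := by
        intro y
        have := kernel_D hd hs ht y
        field_simp
        linarith
      have hi : ∀ j ∈ Finset.univ, Integrable (fun y => (∫ z, qK d j s z * Pk d j t (y - z)) • f (x - y)) volume := by
        intro j _
        exact (conv_assoc hd j hs (Pk_Dec j ht) hp hfm hf x).1
      rw [← integral_finsetSum _ hi, ← integral_smul]
      refine integral_congr_ae (Eventually.of_forall fun y => ?_)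
      simp only
      rw [h2, mul_smul, Finset.sum_smul]
    rw [e]
    have hb1 : ∀ j, eLpNorm (fun x => ∫ z, qK d j s z • ∫ y, Pk d j t y • f (x - z - y)) (ENNReal.ofReal p) volume ≤
        C * eLpNorm (fun x => ∫ y, Pk d j t y • f (x - y)) (ENNReal.ofReal p) volume :=
      fun j => H s hs j (fun x => ∫ y, Pk d j t y • f (x - y)) (hPm j) (hPl j)
    have hb2 : ∀ j, AEStronglyMeasurable (fun x => ∫ z, qK d j s z • ∫ y, Pk d j t y • f (x - z - y)) volume :=
      fun j => (conv_sm (qK_meas d j s) (hPm j)).aestronglyMeasurable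
    refine (sum_bound h1p hb2 hb1 (AK d)⁻¹).trans ?_
    rw [← ha]
    generalize (∑ j, eLpNorm (fun x => ∫ y, Pk d j t y • f (x - y)) (ENNReal.ofReal p) volume) = S
    have h5 : a * C ≤ d * (a * C) := le_mul_of_one_le_left' hdn
    exact mul_le_mul_left h5 S
  · have hj : ∀ j, eLpNorm (fun x => ∫ y, Pk d j t y • f (x - y)) (ENNReal.ofReal p) volume ≤
        a * C * eLpNorm (fun x => ∫ y, Dk d t y • f (x - y)) (ENNReal.ofReal p) volume := by
      intro j
      refine fatou_bound (A := fun x τ => ∫ y, Pk d j τ y • f (x - y)) (fun τ => conv_sm (Pk_meas d j τ) hfm)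
        (fun x => conv_contAt hp hf x ht (Pk_meas d j) (fun τ hτ => Pk_le j hτ) (Pk_contAt j ht)) fun s hs => ?_
      have e : (fun x => ∫ y, Pk d j (s + t) y • f (x - y)) =
          ((AK d)⁻¹) • fun x => ∫ z, qK d j s z • ∫ y, Dk d t y • f (x - z - y) := by
        ext1 x
        simp only [Pi.smul_apply]
        rw [← (conv_assoc hd j hs (Dk_Dec ht) hp hfm hf x).2, ← integral_smul]
        refine integral_congr_ae (Eventually.of_forall fun y => ?_)
        simp only
        rw [← kernel_P hd j hs ht y, smul_smul, inv_mul_cancel_left₀ hA.ne']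
      rw [e, eLpNorm_const_smul, ← ha, mul_assoc]
      gcongr
      exact H s hs j (fun x => ∫ y, Dk d t y • f (x - y)) hDm hDl
    calc _ ≤ ∑ j : Fin d, a * C * eLpNorm (fun x => ∫ y, Dk d t y • f (x - y)) (ENNReal.ofReal p) volume :=
          Finset.sum_le_sum fun j _ => hj j
      _ = _ := by simp [mul_assoc]

theorem sphereVol_pos (d : ℕ) : 0 < sphereVol d := by
  unfold sphereVol
  have h1 : 0 < volume (Metric.ball (0 : EuclideanSpace ℝ (Fin (d+1))) 1) := Metric.measure_ball_pos _ _ one_pos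
  have h2 : volume (Metric.ball (0 : EuclideanSpace ℝ (Fin (d+1))) 1) ≠ ∞ := measure_ball_lt_top.ne
  have := ENNReal.toReal_pos h1.ne' h2
  positivity

theorem poissonInt_eq {d m : ℕ} {f g : Ed d → Ed m} (h : f =ᵐ[volume] g) (x : Ed d) (t : ℝ) :
    poissonInt d m f x t = (2 / sphereVol d) • ∫ y, Kp d t y • g (x - y) := by
  unfold poissonInt
  rw [← integral_smul]
  have h2 : ∀ᵐ y ∂(volume : Measure (Ed d)), f (x - y) = g (x - y) :=
    (Measure.measurePreserving_sub_left volume x).quasiMeasurePreserving.ae h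
  refine integral_congr_ae ?_
  filter_upwards [h2] with y hy
  rw [hy, smul_smul]
  unfold poissonKernelEd Kp
  rw [mul_div_assoc]

theorem eLpNorm_const_smul_fun {d m : ℕ} (c : ℝ) (G : Ed d → Ed m) (p : ℝ≥0∞) :
    eLpNorm (fun x => c • G x) p volume = ‖c‖ₑ * eLpNorm G p volume :=
  eLpNorm_const_smul c G p volume

/-- Comparability of the normal and tangential derivatives of the Poisson integral:
for `1 < p < ∞` and `f ∈ L^p(ℝ^d;ℝ^d)` with Poisson integral `u`, there are constants
`c₁, c₂ > 0` depending only on `d` and `p` such that for every `t > 0`,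
`c₁ ‖∂_t u(·,t)‖_{L^p} ≤ Σ_j ‖∂_{x_j} u(·,t)‖_{L^p} ≤ c₂ ‖∂_t u(·,t)‖_{L^p}`. -/
theorem poisson_integral_derivative_comparison (d : ℕ) (p : ℝ) (hp : 1 < p) :
    ∃ c₁ c₂ : ℝ, 0 < c₁ ∧ 0 < c₂ ∧
      ∀ f : Ed d → Ed d, MemLp f (ENNReal.ofReal p) volume →
        ∀ t : ℝ, 0 < t →
          ENNReal.ofReal c₁ *
              eLpNorm (fun x => deriv (fun τ => poissonInt d d f x τ) t)
                (ENNReal.ofReal p) volume ≤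
            (∑ j : Fin d,
              eLpNorm (fun x => fderiv ℝ (fun z => poissonInt d d f z t) x
                  (EuclideanSpace.single j 1))
                (ENNReal.ofReal p) volume) ∧
          (∑ j : Fin d,
              eLpNorm (fun x => fderiv ℝ (fun z => poissonInt d d f z t) x
                  (EuclideanSpace.single j 1))
                (ENNReal.ofReal p) volume) ≤
            ENNReal.ofReal c₂ *
              eLpNorm (fun x => deriv (fun τ => poissonInt d d f x τ) t)
                (ENNReal.ofReal p) volume := by
  rcases Nat.eq_zero_or_pos d with rfl | hd
  · refine ⟨1, 1, one_pos, one_pos, fun f hf t ht => ?_⟩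
    have hz : (fun x => deriv (fun τ => poissonInt 0 0 f x τ) t) = 0 := Subsingleton.elim _ _
    rw [hz]
    simp
  obtain ⟨C, hC, H⟩ := main_meas hp hd d
  set c : ℝ := C.toReal + 1 with hc
  have hc0 : 0 < c := by positivity
  have hCc : C ≤ ENNReal.ofReal c := by
    rw [← ENNReal.ofReal_toReal hC]
    exact ENNReal.ofReal_le_ofReal (by linarith)
  refine ⟨c⁻¹, c, inv_pos.mpr hc0, hc0, fun f hf t ht => ?_⟩
  have hfm := hf.1.aemeasurable.measurable_mk
  have hfe := hf.1.aemeasurable.ae_eq_mk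
  set g := hf.1.aemeasurable.mk f with hg
  clear_value g
  have hgl : MemLp g (ENNReal.ofReal p) volume := (memLp_congr_ae hfe).mp hf
  set k : ℝ := 2 / sphereVol d with hk
  have e1 : (fun x => deriv (fun τ => poissonInt d d f x τ) t) = fun x => k • ∫ y, Dk d t y • g (x - y) := by
    ext1 x
    have h1 : (fun τ => poissonInt d d f x τ) = fun τ => k • ∫ y, Kp d τ y • g (x - y) :=
      funext fun τ => poissonInt_eq hfe x τ
    rw [h1]
    exact ((conv_hasDerivAt hp hgl x ht).const_smul k).deriv
  have e2 : ∀ j : Fin d, (fun x => fderiv ℝ (fun z => poissonInt d d f z t) x (EuclideanSpace.single j 1)) =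
      fun x => k • ∫ y, Pk d j t y • g (x - y) := by
    intro j
    ext1 x
    have h1 : (fun z => poissonInt d d f z t) = fun z => k • ∫ y, Kp d t y • g (z - y) :=
      funext fun z => poissonInt_eq hfe z t
    obtain ⟨L, hL, hLj⟩ := conv_hasFDerivAt hp hgl x ht
    have hL2 : HasFDerivAt (fun z => k • ∫ y, Kp d t y • g (z - y)) (k • L) x := hL.const_smul k
    rw [h1, hL2.fderiv, smul_apply, hLj j]
  obtain ⟨H1, H2⟩ := H g hfm hgl t ht
  rw [e1]
  simp only [e2]
  rw [eLpNorm_const_smul_fun k (fun x => ∫ y, Dk d t y • g (x - y))]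
  have e3 : ∀ j : Fin d, eLpNorm (fun x => k • ∫ y, Pk d j t y • g (x - y)) (ENNReal.ofReal p) volume =
      ‖k‖ₑ * eLpNorm (fun x => ∫ y, Pk d j t y • g (x - y)) (ENNReal.ofReal p) volume :=
    fun j => eLpNorm_const_smul_fun k (fun x => ∫ y, Pk d j t y • g (x - y)) _
  simp only [e3]
  rw [← Finset.mul_sum]
  generalize (∑ j, eLpNorm (fun x => ∫ y, Pk d j t y • g (x - y)) (ENNReal.ofReal p) volume) = S at H1 H2 ⊢
  generalize eLpNorm (fun x => ∫ y, Dk d t y • g (x - y)) (ENNReal.ofReal p) volume = T at H1 H2 ⊢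
  have hinv : ENNReal.ofReal c⁻¹ * ENNReal.ofReal c = 1 := by
    rw [← ENNReal.ofReal_mul (inv_pos.mpr hc0).le, inv_mul_cancel₀ hc0.ne', ENNReal.ofReal_one]
  constructor
  · calc ENNReal.ofReal c⁻¹ * (‖k‖ₑ * T) ≤ ENNReal.ofReal c⁻¹ * (‖k‖ₑ * (ENNReal.ofReal c * S)) := by
          gcongr
          exact H1.trans (by gcongr)
      _ = (ENNReal.ofReal c⁻¹ * ENNReal.ofReal c) * (‖k‖ₑ * S) := by ring
      _ = ‖k‖ₑ * S := by rw [hinv, one_mul]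
  · calc ‖k‖ₑ * S ≤ ‖k‖ₑ * (ENNReal.ofReal c * T) := by
          gcongr
          exact H2.trans (by gcongr)
      _ = ENNReal.ofReal c * (‖k‖ₑ * T) := by ring
end
end

section
/- For every t > 0 the Poisson-type matrix kernel satisfies ∫_{ℝ^d} ℙ_t(x) dx = I_{d+1}, where the integral is taken entrywise and I_{d+1} is the (d+1)×(d+1) identity matrix; equivalently, for every pair of indices j, k ∈ {1, …, d+1}, ∫_{ℝ^d} 𝔭_t^{jk}(x) dx = δ_{jk}. -/
open MeasureTheory Filter Set
open scoped ENNReal NNReal Topology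

noncomputable section

/-- The vector `(x, t) ∈ ℝ^{d+1}`. -/
def snocVec (d : ℕ) (x : Ed d) (t : ℝ) : Fin (d + 1) → ℝ := Fin.snoc (fun i => x i) t

/-- The entries `𝔭_t^{jk}(x)` of the Poisson-type matrix kernel `ℙ_t`. -/
def pEntry (d : ℕ) (t : ℝ) (j k : Fin (d + 1)) (x : Ed d) : ℝ :=
  (2 * ((d : ℝ) + 1) / sphereVol d) * t * snocVec d x t j *
    snocVec d x t k / (‖x‖ ^ 2 + t ^ 2) ^ (((d : ℝ) + 3) / 2)


lemma aux_gamma_integrable {a r : ℝ} (ha : 0 < a) (hr : 0 < r) :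
    IntegrableOn (fun u : ℝ => u ^ (a - 1) * Real.exp (-(r * u))) (Ioi 0) := by
  by_contra hcon
  have h1 := integral_undef hcon
  rw [Real.integral_rpow_mul_exp_neg_mul_Ioi ha hr] at h1
  have h2 : 0 < (1 / r) ^ a * Real.Gamma a :=
    mul_pos (Real.rpow_pos_of_pos (by positivity) _) (Real.Gamma_pos_of_pos ha)
  exact h2.ne' h1

/-- Subordination: integrals against powers from integrals against Gaussians. -/
lemma aux_subord (d : ℕ) (h : Ed d → ℝ) (hm : Measurable h) (h0 : ∀ x, 0 ≤ h x)
    (C s b t : ℝ) (ht : 0 < t) (hs : 0 < s) (hb : 0 < b)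
    (hi : ∀ u : ℝ, 0 < u → Integrable (fun x => h x * Real.exp (-u * ‖x‖ ^ 2)))
    (hv : ∀ u : ℝ, 0 < u → ∫ x, h x * Real.exp (-u * ‖x‖ ^ 2) = C * u ^ (b - s)) :
    ∫ x, h x / (‖x‖ ^ 2 + t ^ 2) ^ s = C * ((1 / t ^ 2) ^ b * Real.Gamma b) / Real.Gamma s := by
  have hG := Real.Gamma_pos_of_pos hs
  have hC : 0 ≤ C := by
    have := hv 1 one_pos
    rw [Real.one_rpow, mul_one] at this
    rw [← this]
    exact integral_nonneg fun x => mul_nonneg (h0 x) (Real.exp_pos _).le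
  have hA : ∀ x : Ed d, 0 < ‖x‖ ^ 2 + t ^ 2 := fun x => by positivity
  have e1 : ∀ x : Ed d, ENNReal.ofReal (h x * ((1 / (‖x‖ ^ 2 + t ^ 2)) ^ s * Real.Gamma s)) =
      ∫⁻ u in Ioi (0 : ℝ),
        ENNReal.ofReal (h x * (u ^ (s - 1) * Real.exp (-((‖x‖ ^ 2 + t ^ 2) * u)))) := by
    intro x
    rw [← ofReal_integral_eq_lintegral_ofReal]
    · rw [integral_const_mul, Real.integral_rpow_mul_exp_neg_mul_Ioi hs (hA x)]
    · exact (aux_gamma_integrable hs (hA x)).const_mul _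
    · filter_upwards [ae_restrict_mem measurableSet_Ioi] with u hu
      have hu' : (0 : ℝ) < u := hu
      have := h0 x
      simp only [Pi.zero_apply]
      positivity
  have e2 : ∀ u : ℝ, 0 < u → ∫⁻ x : Ed d,
        ENNReal.ofReal (h x * (u ^ (s - 1) * Real.exp (-((‖x‖ ^ 2 + t ^ 2) * u)))) =
      ENNReal.ofReal (C * (u ^ (b - 1) * Real.exp (-(t ^ 2 * u)))) := by
    intro u hu
    have e3 : ∀ x : Ed d, h x * (u ^ (s - 1) * Real.exp (-((‖x‖ ^ 2 + t ^ 2) * u))) =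
        (u ^ (s - 1) * Real.exp (-(t ^ 2 * u))) * (h x * Real.exp (-u * ‖x‖ ^ 2)) := by
      intro x
      have : -((‖x‖ ^ 2 + t ^ 2) * u) = -(t ^ 2 * u) + -u * ‖x‖ ^ 2 := by ring
      rw [this, Real.exp_add]; ring
    simp_rw [e3]
    rw [← ofReal_integral_eq_lintegral_ofReal ((hi u hu).const_mul _)]
    · rw [integral_const_mul, hv u hu]
      congr 1
      have : u ^ (b - 1) = u ^ (s - 1) * u ^ (b - s) := by
        rw [← Real.rpow_add hu]; congr 1; ring
      rw [this]; ring
    · refine Eventually.of_forall fun x => ?_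
      have := h0 x
      simp only [Pi.zero_apply]
      positivity
  have key : ∫⁻ x : Ed d,
      ENNReal.ofReal (h x * ((1 / (‖x‖ ^ 2 + t ^ 2)) ^ s * Real.Gamma s)) =
      ENNReal.ofReal (C * ((1 / t ^ 2) ^ b * Real.Gamma b)) := by
    simp_rw [e1]
    rw [lintegral_lintegral_swap (by
      apply Measurable.aemeasurable
      unfold Function.uncurry
      fun_prop)]
    rw [setLIntegral_congr_fun measurableSet_Ioi (fun u hu => e2 u hu),
      ← ofReal_integral_eq_lintegral_ofReal]
    · rw [integral_const_mul, Real.integral_rpow_mul_exp_neg_mul_Ioi hb (by positivity)]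
    · exact (aux_gamma_integrable hb (by positivity)).const_mul _
    · filter_upwards [ae_restrict_mem measurableSet_Ioi] with u hu
      have hu' : (0 : ℝ) < u := hu
      simp only [Pi.zero_apply]
      positivity
  have hfin : ∫ x : Ed d, h x * ((1 / (‖x‖ ^ 2 + t ^ 2)) ^ s * Real.Gamma s) =
      C * ((1 / t ^ 2) ^ b * Real.Gamma b) := by
    rw [integral_eq_lintegral_of_nonneg_ae, key, ENNReal.toReal_ofReal]
    · have := Real.Gamma_pos_of_pos hb
      positivity
    · refine Eventually.of_forall fun x => ?_
      have := h0 x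
      simp only [Pi.zero_apply]
      positivity
    · apply Measurable.aestronglyMeasurable
      fun_prop
  rw [eq_div_iff hG.ne', ← hfin, ← integral_mul_const]
  refine integral_congr_ae (Eventually.of_forall fun x => ?_)
  simp only
  rw [Real.div_rpow zero_le_one (hA x).le, Real.one_rpow]
  ring

/-- Integral of a product function on Euclidean space. -/
lemma aux_prod (d : ℕ) (g : Fin d → ℝ → ℝ) (hg : ∀ i, Integrable (g i)) :
    Integrable (fun x : Ed d => ∏ i, g i (x i)) ∧
      ∫ x : Ed d, ∏ i, g i (x i) = ∏ i, ∫ y, g i y := by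
  constructor
  · have := Integrable.fintype_prod (f := g) (μ := fun _ => volume) hg
    exact (PiLp.volume_preserving_ofLp (Fin d)).integrable_comp_of_integrable this
  · rw [← integral_fintype_prod_volume_eq_prod]
    exact (PiLp.volume_preserving_ofLp (Fin d)).integral_comp
      (MeasurableEquiv.toLp 2 _).symm.measurableEmbedding (fun y : Fin d → ℝ => ∏ i, g i (y i))

lemma aux_exp_prod (d : ℕ) (u : ℝ) (x : Ed d) :
    Real.exp (-u * ‖x‖ ^ 2) = ∏ i, Real.exp (-u * (x i) ^ 2) := by
  rw [EuclideanSpace.real_norm_sq_eq, Finset.mul_sum, Real.exp_sum]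

lemma aux_sq_gauss {u : ℝ} (hu : 0 < u) :
    Integrable (fun y : ℝ => y ^ 2 * Real.exp (-u * y ^ 2)) ∧
      ∫ y : ℝ, y ^ 2 * Real.exp (-u * y ^ 2) = √(Real.pi / u) * (1 / (2 * u)) := by
  constructor
  · have := integrable_rpow_mul_exp_neg_mul_sq hu (s := 2) (by norm_num)
    simpa using this
  · have h1 := integral_comp_abs (f := fun y : ℝ => y ^ 2 * Real.exp (-u * y ^ 2))
    simp only [sq_abs] at h1
    rw [h1]
    have h2 := integral_rpow_mul_exp_neg_mul_rpow (p := 2) (q := 2) (b := u) (by norm_num)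
      (by norm_num) hu
    simp only [Real.rpow_two] at h2
    rw [h2]
    have h3 : ((2 : ℝ) + 1) / 2 = 1 / 2 + 1 := by norm_num
    have h4 : -((2 : ℝ) + 1) / 2 = -(1 / 2) + -1 := by norm_num
    rw [h3, h4, Real.Gamma_add_one (by norm_num), Real.Gamma_one_half_eq, Real.rpow_add hu,
      Real.rpow_neg hu.le, ← Real.sqrt_eq_rpow, Real.rpow_neg_one, Real.sqrt_div Real.pi_pos.le]
    have := Real.sqrt_pos.2 hu
    field_simp
    try norm_num

lemma aux_sqrt_pow (d : ℕ) {u : ℝ} (hu : 0 < u) :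
    √(Real.pi / u) ^ d = √Real.pi ^ d * u ^ (-((d : ℝ) / 2)) := by
  rw [Real.sqrt_div Real.pi_pos.le, div_pow, Real.rpow_neg hu.le, Real.sqrt_eq_rpow u,
    ← Real.rpow_natCast (u ^ (1 / 2 : ℝ)), ← Real.rpow_mul hu.le, div_eq_mul_inv]
  congr 3; ring

lemma aux_const (d : ℕ) {t : ℝ} (ht : 0 < t) :
    (2 * ((d : ℝ) + 1) / sphereVol d) * t *
      ((√Real.pi ^ d / 2) * (√Real.pi / t) / Real.Gamma (((d : ℝ) + 3) / 2)) = 1 := by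
  unfold sphereVol
  have hG : 0 < Real.Gamma (((d : ℝ) + 3) / 2) := Real.Gamma_pos_of_pos (by positivity)
  have h2 : (((d + 1 : ℕ) : ℝ) / 2 + 1) = ((d : ℝ) + 3) / 2 := by push_cast; ring
  rw [EuclideanSpace.volume_ball, Fintype.card_fin, h2, ENNReal.ofReal_one, one_pow, one_mul,
    ENNReal.toReal_ofReal (by positivity)]
  have := Real.sqrt_pos.2 Real.pi_pos
  field_simp
  rw [pow_succ]

lemma aux_last (d : ℕ) (t : ℝ) (ht : 0 < t) :
    ∫ x : Ed d, t ^ 2 / (‖x‖ ^ 2 + t ^ 2) ^ (((d : ℝ) + 3) / 2) =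
      (√Real.pi ^ d / 2) * (√Real.pi / t) / Real.Gamma (((d : ℝ) + 3) / 2) := by
  rw [aux_subord d (fun _ => t ^ 2) measurable_const (fun _ => by positivity)
    (t ^ 2 * √Real.pi ^ d) _ (3 / 2) t ht (by positivity) (by norm_num)]
  · congr 1
    have h3 : (3 : ℝ) / 2 = 1 / 2 + 1 := by norm_num
    rw [h3, Real.Gamma_add_one (by norm_num), Real.Gamma_one_half_eq,
      Real.rpow_add (by positivity), Real.rpow_one, ← Real.sqrt_eq_rpow,
      Real.sqrt_div zero_le_one, Real.sqrt_one, Real.sqrt_sq ht.le]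
    field_simp
  · intro u hu
    simp_rw [aux_exp_prod]
    exact (aux_prod d (fun _ y => Real.exp (-u * y ^ 2))
      (fun _ => integrable_exp_neg_mul_sq hu)).1.const_mul _
  · intro u hu
    simp_rw [aux_exp_prod]
    rw [integral_const_mul, (aux_prod d (fun _ y => Real.exp (-u * y ^ 2))
      (fun _ => integrable_exp_neg_mul_sq hu)).2]
    simp only [integral_gaussian, Finset.prod_const, Finset.card_univ, Fintype.card_fin]
    rw [aux_sqrt_pow d hu, mul_assoc]
    congr 3; ring

lemma aux_diag (d : ℕ) (t : ℝ) (ht : 0 < t) (i : Fin d) :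
    ∫ x : Ed d, (x i) ^ 2 / (‖x‖ ^ 2 + t ^ 2) ^ (((d : ℝ) + 3) / 2) =
      (√Real.pi ^ d / 2) * (√Real.pi / t) / Real.Gamma (((d : ℝ) + 3) / 2) := by
  have hprod : ∀ (u : ℝ) (x : Ed d), (x i) ^ 2 * Real.exp (-u * ‖x‖ ^ 2) =
      ∏ l, (fun (l : Fin d) (y : ℝ) =>
        (if l = i then y ^ 2 else 1) * Real.exp (-u * y ^ 2)) l (x l) := by
    intro u x
    simp only [Finset.prod_mul_distrib, aux_exp_prod, Finset.prod_ite_eq', Finset.mem_univ, if_true]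
  have hint : ∀ u : ℝ, 0 < u → ∀ l : Fin d, Integrable (fun y : ℝ =>
        (if l = i then y ^ 2 else 1) * Real.exp (-u * y ^ 2)) := by
    intro u hu l
    by_cases hl : l = i
    · simpa only [hl, if_true] using (aux_sq_gauss hu).1
    · simpa only [hl, if_false, one_mul] using integrable_exp_neg_mul_sq hu
  rw [aux_subord d (fun x => (x i) ^ 2) (by fun_prop) (fun _ => by positivity)
    (√Real.pi ^ d / 2) _ (1 / 2) t ht (by positivity) (by norm_num)]
  · congr 1
    rw [Real.Gamma_one_half_eq, ← Real.sqrt_eq_rpow,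
      Real.sqrt_div zero_le_one, Real.sqrt_one, Real.sqrt_sq ht.le]
    field_simp
  · intro u hu
    simp_rw [hprod]
    exact (aux_prod d _ (hint u hu)).1
  · intro u hu
    simp_rw [hprod]
    rw [(aux_prod d _ (hint u hu)).2]
    have : ∀ l : Fin d, ∫ y : ℝ, (if l = i then y ^ 2 else 1) * Real.exp (-u * y ^ 2) =
        √(Real.pi / u) * (if l = i then 1 / (2 * u) else 1) := by
      intro l
      by_cases hl : l = i
      · simpa only [hl, if_true] using (aux_sq_gauss hu).2
      · simpa only [hl, if_false, one_mul, mul_one] using integral_gaussian u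
    simp only [this, Finset.prod_mul_distrib, Finset.prod_const, Finset.card_univ,
      Fintype.card_fin, Finset.prod_ite_eq', Finset.mem_univ, if_true]
    rw [aux_sqrt_pow d hu]
    have : (1 : ℝ) / 2 - ((d : ℝ) + 3) / 2 = -((d : ℝ) / 2) + -1 := by ring
    rw [this, Real.rpow_add hu, Real.rpow_neg_one]
    field_simp

/-- Reflection in the `i`-th coordinate. -/
def reflCoord (d : ℕ) (i : Fin d) : Ed d ≃ₗᵢ[ℝ] Ed d :=
  LinearIsometryEquiv.piLpCongrRight 2 fun l =>
    if l = i then LinearIsometryEquiv.neg ℝ else LinearIsometryEquiv.refl ℝ ℝ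

lemma reflCoord_self (d : ℕ) (i : Fin d) (x : Ed d) : reflCoord d i x i = - x i := by
  simp [reflCoord]

lemma reflCoord_ne (d : ℕ) {i l : Fin d} (hl : l ≠ i) (x : Ed d) : reflCoord d i x l = x l := by
  simp [reflCoord, hl]

lemma aux_off (d : ℕ) (t : ℝ) (i : Fin d) (k : Fin (d + 1)) (hk : i.castSucc ≠ k) :
    ∫ x : Ed d, pEntry d t i.castSucc k x = 0 := by
  have h1 := (reflCoord d i).measurePreserving.integral_comp
    (reflCoord d i).toMeasurableEquiv.measurableEmbedding (pEntry d t i.castSucc k)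
  have h2 : ∀ x, pEntry d t i.castSucc k (reflCoord d i x) = - pEntry d t i.castSucc k x := by
    intro x
    have hk' : snocVec d (reflCoord d i x) t k = snocVec d x t k := by
      induction k using Fin.lastCases with
      | last => simp [snocVec]
      | cast l =>
        have : l ≠ i := fun h => hk (by rw [h])
        simp [snocVec, reflCoord_ne d this]
    have hi' : snocVec d (reflCoord d i x) t i.castSucc = - snocVec d x t i.castSucc := by
      simp [snocVec, reflCoord_self]
    unfold pEntry
    rw [hk', hi', LinearIsometryEquiv.norm_map]
    ring
  simp_rw [h2] at h1
  rw [integral_neg] at h1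
  linarith

/-- For every `t > 0`, `∫_{ℝ^d} ℙ_t(x) dx = I_{d+1}` entrywise: for all indices `j, k`,
`∫_{ℝ^d} 𝔭_t^{jk}(x) dx = δ_{jk}`. -/
theorem pKernel_integral_eq_identity (d : ℕ) (t : ℝ) (ht : 0 < t) (j k : Fin (d + 1)) :
    (∫ x : Ed d, pEntry d t j k x) = if j = k then (1 : ℝ) else 0 := by
  by_cases hjk : j = k
  · subst hjk
    rw [if_pos rfl, ← aux_const d ht]
    have h1 : ∀ x : Ed d, pEntry d t j j x = (2 * ((d : ℝ) + 1) / sphereVol d) * t *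
        ((snocVec d x t j) ^ 2 / (‖x‖ ^ 2 + t ^ 2) ^ (((d : ℝ) + 3) / 2)) := by
      intro x; unfold pEntry; ring
    simp_rw [h1]
    rw [integral_const_mul]
    congr 1
    induction j using Fin.lastCases with
    | last => simpa [snocVec] using aux_last d t ht
    | cast i => simpa [snocVec] using aux_diag d t ht i
  · rw [if_neg hjk]
    induction j using Fin.lastCases with
    | cast i => exact aux_off d t i k hjk
    | last =>
      induction k using Fin.lastCases with
      | last => exact absurd rfl hjk
      | cast i =>
        rw [← aux_off d t i (Fin.last d) (fun h => hjk h.symm)]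
        refine integral_congr_ae (Eventually.of_forall fun x => ?_)
        simp only [pEntry]
        ring
end
end
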